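/- Assume (A1)–(A3) and (A6)–(A7). Then there exists a threshold value q* ∈ [q₁, q₂) such that c_NL*(q) = c₀* for all q ∈ [0, q*] and c_NL*(q) > c₀* for all q ∈ (q*, ∞). Moreover, for q ≥ 0, the minimal nonlocal traveling wave 𝒲_q (i.e. a front with speed c_NL*(q)) satisfies 𝒲_q(ξ) = B e^{−λ₀ξ} + o(e^{−λ₀ξ}) as ξ → +∞ for some constant B > 0 if and only if q = q*. -/

import Mathlib

open Filter Asymptotics MeasureTheory Set

noncomputable section

/-- A continuous, nonnegative, even, compactly supported dispersal kernel of total mass 1. -/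
def IsKernel (J : ℝ → ℝ) : Prop :=
  Continuous J ∧ (∀ x, 0 ≤ J x) ∧ (∀ x, J (-x) = J x) ∧
  HasCompactSupport J ∧ (∫ x, J x) = 1

/-- A nonlocal traveling wave front with speed `c` for the kernel `J` and nonlinearity `g`. -/
def IsNLFront (J : ℝ → ℝ) (g : ℝ → ℝ) (c : ℝ) (W : ℝ → ℝ) : Prop :=
  ContDiff ℝ 1 W ∧
  (∀ ξ, (∫ y, J (ξ - y) * W y) - W ξ + c * deriv W ξ + g (W ξ) = 0) ∧
  Tendsto W atBot (nhds 1) ∧ Tendsto W atTop (nhds 0) ∧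
  (∀ ξ, deriv W ξ < 0)

/-- The linearized minimal speed `c₀* = inf_{λ>0} (∫ J(x)e^{λx}dx + γ₀ - 1)/λ`. -/
noncomputable def c0star (J : ℝ → ℝ) (γ₀ : ℝ) : ℝ :=
  sInf ((fun l : ℝ => ((∫ x, J x * Real.exp (l * x)) + γ₀ - 1) / l) '' Ioi 0)

/-!
Adding a multiple `K` of the unknown to both sides of the front equation and inverting
`K - c d/dx` turns fronts into the fixed points of an order preserving, translation equivariant
map. They exist as soon as there is a supersolution or a sequence of approximate fixed points, so
the parameters `q` for which `c₀*` is an admissible speed form a closed interval; `q*` is its right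
end point.

For the decay rates put `Z(ξ) = e^{λ₀ξ} W(ξ)`. Since `λ₀` is a double root of the characteristic
equation, the equation for `Z` can be integrated twice: a local average `Φ` of `Z`, the potential,
has as its derivative a nonlocal flux of `Z`, and `Φ'' = -r` with `r` of order `e^{λ₀ξ} W²`. As `Z`
is positive, it converges to a positive limit unless the flux has a positive limit.

* For `q ↓ q*` there are no fronts of speed `c₀*` but waves cut off at some `m`. Their flux is
  nonpositive at `m`; as `m → ∞` they converge to a front at `q*`, which therefore decays purely.
* If a front for some `q < q*` decayed purely too, the front at `q*` could be slid towards it until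
  the limits of both `Z` coincide. The potential of the difference is then nonnegative, tends to
  `0`, and is strictly concave because `f(·; q*) - f(·; q)` is quadratically positive at `0`: a
  contradiction.
* For `q > q*` the speed exceeds `c₀*`, and `λ₀` is no longer a characteristic root.
-/

/-! ### Profiles and averaging kernels -/

/-- The class of functions on which the wave map acts: nonincreasing profiles with values in
`[0, 1]`. Continuity is not required, so that the cut-offs below are profiles too. -/
structure IsProfile (U : ℝ → ℝ) : Prop where
  antitone : Antitone U
  mem_Icc : ∀ x, U x ∈ Icc (0 : ℝ) 1

namespace IsProfile

variable {U V : ℝ → ℝ}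

lemma nonneg (hU : IsProfile U) (x : ℝ) : 0 ≤ U x := (hU.mem_Icc x).1

lemma le_one (hU : IsProfile U) (x : ℝ) : U x ≤ 1 := (hU.mem_Icc x).2

lemma norm_le_one (hU : IsProfile U) (x : ℝ) : ‖U x‖ ≤ 1 := by
  rw [Real.norm_of_nonneg (hU.nonneg x)]
  exact hU.le_one x

lemma const {b : ℝ} (hb : b ∈ Icc (0 : ℝ) 1) : IsProfile fun _ => b :=
  ⟨fun _ _ _ => le_rfl, fun _ => hb⟩

lemma one : IsProfile 1 := const ⟨zero_le_one, le_rfl⟩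

lemma translate (hU : IsProfile U) (s : ℝ) : IsProfile fun x => U (x + s) :=
  ⟨fun _ _ hxy => hU.antitone (by linarith), fun _ => hU.mem_Icc _⟩

lemma mul (hU : IsProfile U) (hV : IsProfile V) : IsProfile fun x => U x * V x where
  antitone _ _ hxy := mul_le_mul (hU.antitone hxy) (hV.antitone hxy) (hV.nonneg _) (hU.nonneg _)
  mem_Icc x := ⟨mul_nonneg (hU.nonneg x) (hV.nonneg x),
    mul_le_one₀ (hU.le_one x) (hV.nonneg x) (hV.le_one x)⟩

lemma sup (hU : IsProfile U) (hV : IsProfile V) : IsProfile (U ⊔ V) where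
  antitone := hU.antitone.sup hV.antitone
  mem_Icc x := ⟨le_sup_of_le_left (hU.nonneg x), sup_le (hU.le_one x) (hV.le_one x)⟩

lemma exists_tendsto_atTop (hU : IsProfile U) :
    ∃ l ∈ Icc (0 : ℝ) 1, Tendsto U atTop (nhds l) ∧ ∀ x, l ≤ U x := by
  have hbdd : BddBelow (range U) := ⟨0, forall_mem_range.2 hU.nonneg⟩
  have hlim := tendsto_atTop_ciInf hU.antitone hbdd
  exact ⟨_, isClosed_Icc.mem_of_tendsto hlim (Eventually.of_forall hU.mem_Icc), hlim, ciInf_le hbdd⟩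

lemma exists_tendsto_atBot (hU : IsProfile U) :
    ∃ l ∈ Icc (0 : ℝ) 1, Tendsto U atBot (nhds l) ∧ ∀ x, U x ≤ l := by
  have hbdd : BddAbove (range U) := ⟨1, forall_mem_range.2 hU.le_one⟩
  have hlim := tendsto_atBot_ciSup hU.antitone hbdd
  exact ⟨_, isClosed_Icc.mem_of_tendsto hlim (Eventually.of_forall hU.mem_Icc), hlim, le_ciSup hbdd⟩

lemma of_tendsto {u : ℕ → ℝ → ℝ} (hu : ∀ n, IsProfile (u n))
    (hlim : ∀ x, Tendsto (fun n => u n x) atTop (nhds (U x))) : IsProfile U where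
  antitone x y hxy := le_of_tendsto_of_tendsto' (hlim y) (hlim x) fun n => (hu n).antitone hxy
  mem_Icc x := isClosed_Icc.mem_of_tendsto (hlim x) (Eventually.of_forall fun n => (hu n).mem_Icc x)

end IsProfile

/-- The step of height `δ` ending at `m`, used as a seed for monotone iterations and, with `δ = 1`,
as a cut-off. -/
def step (δ m : ℝ) : ℝ → ℝ := (Iic m).indicator fun _ => δ

lemma step_of_le {δ m x : ℝ} (h : x ≤ m) : step δ m x = δ := indicator_of_mem (mem_Iic.2 h) _

lemma step_of_lt {δ m x : ℝ} (h : m < x) : step δ m x = 0 :=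
  indicator_of_notMem (notMem_Iic.2 h) _

lemma step_add (δ m s : ℝ) : (fun x => step δ m (x + s)) = step δ (m - s) := by
  ext x
  simp only [step, indicator, mem_Iic, le_sub_iff_add_le]

lemma isProfile_step {δ : ℝ} (hδ : δ ∈ Icc (0 : ℝ) 1) (m : ℝ) : IsProfile (step δ m) where
  antitone x y hxy := by
    rcases le_or_gt y m with hy | hy
    · rw [step_of_le hy, step_of_le (hxy.trans hy)]
    · rw [step_of_lt hy]
      exact indicator_nonneg (fun _ _ => hδ.1) x
  mem_Icc x := by
    rcases le_or_gt x m with hx | hx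
    · rwa [step_of_le hx]
    · simp [step_of_lt hx]

lemma isProfile_step_one (m : ℝ) : IsProfile (step 1 m) := isProfile_step ⟨zero_le_one, le_rfl⟩ m

lemma tendsto_step_atBot (δ m : ℝ) : Tendsto (step δ m) atBot (nhds δ) :=
  tendsto_const_nhds.congr' <| (eventually_le_atBot m).mono fun _ hx => (step_of_le hx).symm

/-- The convolution `ρ ∗ u`. -/
def kernelAvg (ρ u : ℝ → ℝ) (x : ℝ) : ℝ := ∫ y, ρ y * u (x - y)

lemma kernelAvg_eq_integral (ρ u : ℝ → ℝ) (x : ℝ) : kernelAvg ρ u x = ∫ y, ρ (x - y) * u y := by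
  rw [kernelAvg, ← integral_sub_left_eq_self _ volume x]
  simp only [sub_sub_cancel]

lemma kernelAvg_translate (ρ u : ℝ → ℝ) (s x : ℝ) :
    kernelAvg ρ (fun z => u (z + s)) x = kernelAvg ρ u (x + s) := by
  simp only [kernelAvg, sub_add_eq_add_sub]

/-- Probability densities on the line. -/
structure IsDensity (ρ : ℝ → ℝ) : Prop where
  nonneg : ∀ y, 0 ≤ ρ y
  integrable : Integrable ρ
  integral_eq_one : ∫ y, ρ y = 1

namespace IsDensity

variable {ρ u v : ℝ → ℝ}

lemma integrable_mul_comp_sub (hρ : IsDensity ρ) (hu : IsProfile u) (x : ℝ) :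
    Integrable fun y => ρ y * u (x - y) := by
  have hmeas : Measurable fun y => u (x - y) := hu.antitone.measurable.comp (by fun_prop)
  exact hρ.integrable.mul_bdd (c := 1) hmeas.aestronglyMeasurable
    (Eventually.of_forall fun y => hu.norm_le_one _)

lemma kernelAvg_const (hρ : IsDensity ρ) (b x : ℝ) : kernelAvg ρ (fun _ => b) x = b := by
  rw [kernelAvg, integral_mul_const, hρ.integral_eq_one, one_mul]

lemma kernelAvg_sub_le (hρ : IsDensity ρ) (hu : IsProfile u) (hv : IsProfile v) {x x' b : ℝ}
    (h : ∀ y, u (x - y) - v (x' - y) ≤ b) : kernelAvg ρ u x - kernelAvg ρ v x' ≤ b := by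
  have hu' := hρ.integrable_mul_comp_sub hu x
  have hv' := hρ.integrable_mul_comp_sub hv x'
  calc kernelAvg ρ u x - kernelAvg ρ v x'
      = ∫ y, (ρ y * u (x - y) - ρ y * v (x' - y)) := (integral_sub hu' hv').symm
    _ ≤ ∫ y, ρ y * b := by
        refine integral_mono (hu'.sub hv') (hρ.integrable.mul_const b) fun y => ?_
        rw [← mul_sub]
        exact mul_le_mul_of_nonneg_left (h y) (hρ.nonneg y)
    _ = b := hρ.kernelAvg_const b 0

lemma kernelAvg_mono (hρ : IsDensity ρ) (hu : IsProfile u) (hv : IsProfile v) (h : u ≤ v) :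
    kernelAvg ρ u ≤ kernelAvg ρ v := fun _ =>
  sub_nonpos.1 <| hρ.kernelAvg_sub_le hu hv fun _ => sub_nonpos.2 (h _)

lemma isProfile_kernelAvg (hρ : IsDensity ρ) (hu : IsProfile u) : IsProfile (kernelAvg ρ u) where
  antitone x y hxy := sub_nonpos.1 <| hρ.kernelAvg_sub_le hu hu fun z =>
    sub_nonpos.2 (hu.antitone (by linarith))
  mem_Icc x := by
    have hlb := hρ.kernelAvg_mono (.const (left_mem_Icc.2 zero_le_one)) hu hu.nonneg x
    have hub := hρ.kernelAvg_mono hu (.const (right_mem_Icc.2 zero_le_one)) hu.le_one x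
    rw [hρ.kernelAvg_const] at hlb hub
    exact ⟨hlb, hub⟩

variable {ι : Type*} {l : Filter ι} [l.IsCountablyGenerated]

lemma tendsto_kernelAvg (hρ : IsDensity ρ) {u : ι → ℝ → ℝ} {v : ℝ → ℝ} {x : ι → ℝ} {x' : ℝ}
    (hu : ∀ i, IsProfile (u i))
    (hlim : ∀ y, ρ y ≠ 0 → Tendsto (fun i => u i (x i - y)) l (nhds (v (x' - y)))) :
    Tendsto (fun i => kernelAvg ρ (u i) (x i)) l (nhds (kernelAvg ρ v x')) := by
  refine tendsto_integral_filter_of_dominated_convergence ρ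
    (.of_forall fun i => (hρ.integrable_mul_comp_sub (hu i) _).aestronglyMeasurable)
    (.of_forall fun i => .of_forall fun y => ?_) hρ.integrable (.of_forall fun y => ?_)
  · rw [norm_mul, Real.norm_of_nonneg (hρ.nonneg y)]
    exact mul_le_of_le_one_right (hρ.nonneg y) ((hu i).norm_le_one _)
  · rcases eq_or_ne (ρ y) 0 with hy | hy
    · simpa only [hy, zero_mul] using tendsto_const_nhds
    · exact (hlim y hy).const_mul _

lemma tendsto_kernelAvg_of_translate {l : Filter ℝ} [l.IsCountablyGenerated] (hρ : IsDensity ρ)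
    (hl : ∀ s, Tendsto (· + s) l l) (hu : IsProfile u) {b : ℝ} (hlim : Tendsto u l (nhds b)) :
    Tendsto (kernelAvg ρ u) l (nhds b) := by
  have h := hρ.tendsto_kernelAvg (u := fun _ => u) (v := fun _ => b) (x := fun x => x) (x' := 0)
    (fun _ => hu) fun y _ => by
      simpa only [sub_eq_add_neg, Function.comp_def] using hlim.comp (hl (-y))
  rwa [hρ.kernelAvg_const] at h

end IsDensity

/-! ### The resolvent `(1 - α ∂)⁻¹` -/

/-- The density whose convolution operator is `(1 - α ∂)⁻¹`: the law of `-α T` for a standard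
exponential variable `T`. -/
def expKernel (α : ℝ) : ℝ → ℝ := (Iio 0).indicator fun y => α⁻¹ * Real.exp (y / α)

section Resolvent

variable {α : ℝ} {h k : ℝ → ℝ}

lemma isDensity_expKernel (hα : 0 < α) : IsDensity (expKernel α) where
  nonneg y := indicator_nonneg (fun _ _ => by positivity) y
  integrable := by
    have h := (integrableOn_exp_mul_Iic (inv_pos.2 hα) 0).mono_set Iio_subset_Iic_self
    simp only [expKernel, div_eq_inv_mul]
    exact (integrable_indicator_iff measurableSet_Iio).2 (h.const_mul _)
  integral_eq_one := by
    simp only [expKernel, div_eq_inv_mul]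
    rw [integral_indicator measurableSet_Iio, integral_const_mul, ← integral_Iic_eq_integral_Iio,
      integral_exp_mul_Iic (inv_pos.2 hα)]
    simp [hα.ne']

lemma resolvent_eq_setIntegral (α : ℝ) (h : ℝ → ℝ) (x : ℝ) :
    kernelAvg (expKernel α) h x = ∫ u in Ioi x, α⁻¹ * Real.exp ((x - u) / α) * h u := by
  rw [kernelAvg_eq_integral, ← integral_indicator measurableSet_Ioi]
  congr 1 with u
  by_cases hu : x < u <;> simp [expKernel, indicator, hu]

lemma integrableOn_resolvent (hα : 0 < α) (hh : IsProfile h) (x : ℝ) :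
    IntegrableOn (fun u => α⁻¹ * Real.exp ((x - u) / α) * h u) (Ioi x) := by
  refine ((integrable_indicator_iff measurableSet_Ioi).1 ?_)
  refine (((isDensity_expKernel hα).integrable_mul_comp_sub hh x).comp_sub_left x).congr ?_
  refine .of_forall fun u => ?_
  by_cases hu : x < u <;> simp [expKernel, indicator, hu]

lemma resolvent_eq_add (hα : 0 < α) (hh : IsProfile h) (x y : ℝ) :
    kernelAvg (expKernel α) h x = (∫ u in x..y, α⁻¹ * Real.exp ((x - u) / α) * h u) +
      Real.exp ((x - y) / α) * kernelAvg (expKernel α) h y := by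
  have hexp : ∀ u, Real.exp ((x - u) / α) = Real.exp ((x - y) / α) * Real.exp ((y - u) / α) :=
    fun u => by rw [← Real.exp_add, ← add_div, sub_add_sub_cancel]
  have hfac : (fun u => α⁻¹ * Real.exp ((x - u) / α) * h u) = fun u =>
      Real.exp ((x - y) / α) * (α⁻¹ * Real.exp ((y - u) / α) * h u) := by
    funext u
    rw [hexp u]
    ring
  have hy : IntegrableOn (fun u => α⁻¹ * Real.exp ((x - u) / α) * h u) (Ioi y) := by
    rw [hfac]
    exact (integrableOn_resolvent hα hh y).const_mul _
  rw [resolvent_eq_setIntegral, resolvent_eq_setIntegral α h y, ← integral_const_mul, ← hfac,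
    intervalIntegral.integral_interval_add_Ioi (integrableOn_resolvent hα hh x) hy]

lemma hasDerivAt_resolvent (hα : 0 < α) (hh : IsProfile h) {x : ℝ} (hcont : ContinuousAt h x) :
    HasDerivAt (kernelAvg (expKernel α) h) ((kernelAvg (expKernel α) h x - h x) / α) x := by
  have hfun : kernelAvg (expKernel α) h = fun z => Real.exp ((z - x) / α) *
      (kernelAvg (expKernel α) h x - ∫ u in x..z, α⁻¹ * Real.exp ((x - u) / α) * h u) := by
    funext z
    rw [resolvent_eq_add hα hh x z, add_sub_cancel_left, ← mul_assoc, ← Real.exp_add, ← add_div]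
    simp
  have hint : HasDerivAt (fun z => ∫ u in x..z, α⁻¹ * Real.exp ((x - u) / α) * h u)
      (α⁻¹ * Real.exp ((x - x) / α) * h x) x := by
    refine intervalIntegral.integral_hasDerivAt_right .refl ?_ (.mul (by fun_prop) hcont)
    exact (Measurable.mul (by fun_prop) hh.antitone.measurable).stronglyMeasurable
      |>.stronglyMeasurableAtFilter
  have hexp : HasDerivAt (fun z => Real.exp ((z - x) / α)) (Real.exp ((x - x) / α) * (1 / α)) x :=
    (((hasDerivAt_id x).sub_const x).div_const α).exp
  rw [hfun]
  refine (hexp.mul (hint.const_sub _)).congr_deriv ?_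
  simp
  ring

lemma lipschitzWith_resolvent (hα : 0 < α) (hh : IsProfile h) :
    LipschitzWith (Real.toNNReal α⁻¹) (kernelAvg (expKernel α) h) := by
  refine LipschitzWith.of_le_add_mul' _ fun x y => ?_
  have hP := (isDensity_expKernel hα).isProfile_kernelAvg hh
  rcases le_total y x with hyx | hxy
  · have : 0 ≤ α⁻¹ * dist x y := by positivity
    linarith [hP.antitone hyx]
  have hbound : ∀ u ∈ uIoc x y, ‖α⁻¹ * Real.exp ((x - u) / α) * h u‖ ≤ α⁻¹ := fun u hu => by
    rw [uIoc_of_le hxy] at hu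
    have hexp : Real.exp ((x - u) / α) ≤ 1 :=
      Real.exp_le_one_iff.2 (div_nonpos_of_nonpos_of_nonneg (by linarith [hu.1]) hα.le)
    rw [norm_mul, Real.norm_of_nonneg (by positivity)]
    exact (mul_le_of_le_one_right (by positivity) (hh.norm_le_one u)).trans
      (mul_le_of_le_one_right (by positivity) hexp)
  have hint := (le_abs_self _).trans (intervalIntegral.norm_integral_le_of_norm_le_const hbound)
  have hexp : Real.exp ((x - y) / α) ≤ 1 :=
    Real.exp_le_one_iff.2 (div_nonpos_of_nonpos_of_nonneg (by linarith) hα.le)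
  rw [resolvent_eq_add hα hh x y, Real.dist_eq, abs_sub_comm x y]
  linarith [mul_le_of_le_one_left (hP.nonneg y) hexp]

lemma resolvent_lt_resolvent (hα : 0 < α) (hh : IsProfile h) (hk : IsProfile k) {x a b : ℝ}
    (hle : ∀ y, x ≤ y → h y ≤ k y) (hxa : x ≤ a) (hab : a < b) (hlt : ∀ y ∈ Ioo a b, h y < k y) :
    kernelAvg (expKernel α) h x < kernelAvg (expKernel α) k x := by
  have hih := integrableOn_resolvent hα hh x
  have hik := integrableOn_resolvent hα hk x
  rw [← sub_pos, resolvent_eq_setIntegral, resolvent_eq_setIntegral, ← integral_sub hik hih]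
  refine (setIntegral_pos_iff_support_of_nonneg_ae ?_ (hik.sub hih)).2 ?_
  · filter_upwards [ae_restrict_mem measurableSet_Ioi] with u hu
    exact sub_nonneg.2 (mul_le_mul_of_nonneg_left (hle u (le_of_lt hu)) (by positivity))
  · refine (Measure.measure_Ioo_pos volume |>.2 hab).trans_le (measure_mono fun y hy => ?_)
    have hpos : 0 < α⁻¹ * Real.exp ((x - y) / α) := by positivity
    exact ⟨(sub_pos.2 (mul_lt_mul_of_pos_left (hlt y hy) hpos)).ne', hxa.trans_lt hy.1⟩

end Resolvent

/-! ### The wave map -/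

/-- `g` is a monostable nonlinearity, and `K` is large enough for `w ↦ (K - 1) w + g w` to be
nondecreasing, which makes the wave map of `g` order preserving. -/
structure IsMonostable (g : ℝ → ℝ) (K : ℝ) : Prop where
  one_lt : 1 < K
  zero : g 0 = 0
  one : g 1 = 0
  pos : ∀ w ∈ Ioo (0 : ℝ) 1, 0 < g w
  continuousOn : ContinuousOn g (Icc 0 1)
  monotoneOn : MonotoneOn (fun w => (K - 1) * w + g w) (Icc 0 1)

/-- The monotone growth operator `K⁻¹ (J ∗ U + (K - 1) U + g(U))`; in terms of it the front
equation reads `U - (c / K) U' = growthOp J g K U`. -/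
def growthOp (J g : ℝ → ℝ) (K : ℝ) (U : ℝ → ℝ) (x : ℝ) : ℝ :=
  (kernelAvg J U x + ((K - 1) * U x + g (U x))) / K

/-- The wave map `U ↦ (1 - (c / K) ∂)⁻¹ (χ · growthOp U)`. For `χ = 1` its nontrivial fixed points
are the fronts of speed `c`; the cut-off `χ` produces waves on a half-line. -/
def waveMap (J g : ℝ → ℝ) (K c : ℝ) (χ U : ℝ → ℝ) : ℝ → ℝ :=
  kernelAvg (expKernel (c / K)) fun z => χ z * growthOp J g K U z

lemma IsKernel.isDensity {J : ℝ → ℝ} (hJ : IsKernel J) : IsDensity J where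
  nonneg := hJ.2.1
  integrable := hJ.1.integrable_of_hasCompactSupport hJ.2.2.2.1
  integral_eq_one := hJ.2.2.2.2

lemma IsKernel.exists_pos {J : ℝ → ℝ} (hJ : IsKernel J) : ∃ y > 0, 0 < J y := by
  by_contra! hcon
  have hzero : ∀ y, y ≠ 0 → J y = 0 := fun y hy => by
    refine le_antisymm ?_ (hJ.2.1 y)
    rcases lt_or_gt_of_ne hy with hneg | hpos
    · simpa only [hJ.2.2.1] using hcon (-y) (neg_pos.2 hneg)
    · exact hcon y hpos
  have hint : ∫ x, J x = 0 :=
    integral_eq_zero_of_ae <| (Measure.ae_ne volume 0).mono hzero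
  exact one_ne_zero (hJ.2.2.2.2.symm.trans hint)

lemma IsMonostable.pos_const {g : ℝ → ℝ} {K : ℝ} (hg : IsMonostable g K) : 0 < K :=
  one_pos.trans hg.one_lt

lemma IsMonostable.eq_zero_or_one {g : ℝ → ℝ} {K : ℝ} (hg : IsMonostable g K) {b : ℝ}
    (hb : b ∈ Icc (0 : ℝ) 1) (h : g b ≤ 0) : b = 0 ∨ b = 1 := by
  by_contra! hne
  exact h.not_gt (hg.pos b ⟨hb.1.lt_of_ne' hne.1, hb.2.lt_of_ne hne.2⟩)

lemma IsMonostable.nonneg {g : ℝ → ℝ} {K : ℝ} (hg : IsMonostable g K) {w : ℝ}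
    (hw : w ∈ Icc (0 : ℝ) 1) : 0 ≤ g w := by
  by_contra! hneg
  rcases hg.eq_zero_or_one hw hneg.le with rfl | rfl
  · exact hneg.ne hg.zero
  · exact hneg.ne hg.one

section GrowthOp

variable {J g g' : ℝ → ℝ} {K : ℝ} {U V : ℝ → ℝ}

lemma growthOp_mono (hJ : IsDensity J) (hg : IsMonostable g K)
    (hle : ∀ w ∈ Icc (0 : ℝ) 1, g w ≤ g' w) (hU : IsProfile U) (hV : IsProfile V) (h : U ≤ V) :
    growthOp J g K U ≤ growthOp J g' K V := fun x => by
  have hmono : (K - 1) * U x + g (U x) ≤ (K - 1) * V x + g (V x) :=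
    hg.monotoneOn (hU.mem_Icc x) (hV.mem_Icc x) (h x)
  have := hle _ (hV.mem_Icc x)
  have := hJ.kernelAvg_mono hU hV h x
  exact div_le_div_of_nonneg_right (by linarith) hg.pos_const.le

lemma isProfile_growthOp (hJ : IsDensity J) (hg : IsMonostable g K) (hU : IsProfile U) :
    IsProfile (growthOp J g K U) where
  antitone x y hxy := by
    have hmono : (K - 1) * U y + g (U y) ≤ (K - 1) * U x + g (U x) :=
      hg.monotoneOn (hU.mem_Icc y) (hU.mem_Icc x) (hU.antitone hxy)
    exact div_le_div_of_nonneg_right (add_le_add ((hJ.isProfile_kernelAvg hU).antitone hxy) hmono)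
      hg.pos_const.le
  mem_Icc x := by
    have hconst : ∀ b, g b = 0 → growthOp J g K (fun _ => b) x = b := fun b hb => by
      have := hg.pos_const.ne'
      rw [growthOp, hJ.kernelAvg_const, hb]
      field
    constructor
    · rw [← hconst 0 hg.zero]
      exact growthOp_mono hJ hg (fun _ _ => le_rfl) (.const (left_mem_Icc.2 zero_le_one)) hU
        hU.nonneg x
    · rw [← hconst 1 hg.one]
      exact growthOp_mono hJ hg (fun _ _ => le_rfl) hU .one hU.le_one x

lemma growthOp_translate (s x : ℝ) :
    growthOp J g K (fun z => U (z + s)) x = growthOp J g K U (x + s) := by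
  rw [growthOp, kernelAvg_translate, growthOp]

lemma tendsto_growthOp (hJ : IsDensity J) (hg : IsMonostable g K) {ι : Type*} {l : Filter ι}
    [l.IsCountablyGenerated] {u : ι → ℝ → ℝ} {x : ι → ℝ} {x' : ℝ} (hu : ∀ i, IsProfile (u i))
    (hU : U x' ∈ Icc (0 : ℝ) 1)
    (hlim : ∀ y, Tendsto (fun i => u i (x i - y)) l (nhds (U (x' - y)))) :
    Tendsto (fun i => growthOp J g K (u i) (x i)) l (nhds (growthOp J g K U x')) := by
  have hpt : Tendsto (fun i => u i (x i)) l (nhds (U x')) := by simpa only [sub_zero] using hlim 0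
  have hgu : Tendsto (fun i => g (u i (x i))) l (nhds (g (U x'))) :=
    (hg.continuousOn _ hU).tendsto.comp <|
      tendsto_nhdsWithin_iff.2 ⟨hpt, .of_forall fun i => (hu i).mem_Icc _⟩
  exact ((hJ.tendsto_kernelAvg hu fun y _ => hlim y).add
    ((hpt.const_mul _).add hgu)).div_const _

lemma tendsto_growthOp_of_translate {l : Filter ℝ} [l.IsCountablyGenerated] (hJ : IsDensity J)
    (hg : IsMonostable g K) (hl : ∀ s, Tendsto (· + s) l l) (hU : IsProfile U) {b : ℝ}
    (hb : b ∈ Icc (0 : ℝ) 1) (hlim : Tendsto U l (nhds b)) :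
    Tendsto (growthOp J g K U) l (nhds (b + g b / K)) := by
  have h := tendsto_growthOp hJ hg (u := fun _ => U) (U := fun _ => b) (x := fun x => x) (x' := 0)
    (fun _ => hU) hb fun y => by
      simpa only [sub_eq_add_neg, Function.comp_def] using hlim.comp (hl (-y))
  have hval : growthOp J g K (fun _ => b) 0 = b + g b / K := by
    have := hg.pos_const.ne'
    rw [growthOp, hJ.kernelAvg_const]
    field
  rwa [hval] at h

lemma continuous_growthOp (hJ : IsDensity J) (hg : IsMonostable g K) (hU : IsProfile U)
    (hcont : Continuous U) : Continuous (growthOp J g K U) :=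
  continuous_iff_continuousAt.2 fun x => tendsto_growthOp hJ hg (u := fun _ => U)
    (x := fun x => x) (fun _ => hU) (hU.mem_Icc x) fun y =>
      (hcont.comp (continuous_sub_right y)).tendsto x

end GrowthOp

section WaveMap

variable {J g g' : ℝ → ℝ} {K c : ℝ} {χ χ' U V : ℝ → ℝ}

lemma IsMonostable.div_pos (hg : IsMonostable g K) (hc : 0 < c) : 0 < c / K :=
  _root_.div_pos hc hg.pos_const

lemma isProfile_mul_growthOp (hJ : IsDensity J) (hg : IsMonostable g K) (hχ : IsProfile χ)
    (hU : IsProfile U) : IsProfile fun z => χ z * growthOp J g K U z :=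
  hχ.mul (isProfile_growthOp hJ hg hU)

lemma isProfile_waveMap (hJ : IsDensity J) (hg : IsMonostable g K) (hc : 0 < c)
    (hχ : IsProfile χ) (hU : IsProfile U) : IsProfile (waveMap J g K c χ U) :=
  (isDensity_expKernel (hg.div_pos hc)).isProfile_kernelAvg (isProfile_mul_growthOp hJ hg hχ hU)

lemma lipschitzWith_waveMap (hJ : IsDensity J) (hg : IsMonostable g K) (hc : 0 < c)
    (hχ : IsProfile χ) (hU : IsProfile U) :
    LipschitzWith (Real.toNNReal (c / K)⁻¹) (waveMap J g K c χ U) :=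
  lipschitzWith_resolvent (hg.div_pos hc) (isProfile_mul_growthOp hJ hg hχ hU)

lemma continuous_waveMap (hJ : IsDensity J) (hg : IsMonostable g K) (hc : 0 < c)
    (hχ : IsProfile χ) (hU : IsProfile U) : Continuous (waveMap J g K c χ U) :=
  (lipschitzWith_waveMap hJ hg hc hχ hU).continuous

lemma mul_growthOp_mono (hJ : IsDensity J) (hg : IsMonostable g K)
    (hle : ∀ w ∈ Icc (0 : ℝ) 1, g w ≤ g' w) (hχ' : IsProfile χ') (hχχ' : χ ≤ χ')
    (hU : IsProfile U) (hV : IsProfile V) (h : U ≤ V) (z : ℝ) :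
    χ z * growthOp J g K U z ≤ χ' z * growthOp J g' K V z :=
  (mul_le_mul_of_nonneg_right (hχχ' z) ((isProfile_growthOp hJ hg hU).nonneg z)).trans
    (mul_le_mul_of_nonneg_left (growthOp_mono hJ hg hle hU hV h z) (hχ'.nonneg z))

lemma waveMap_mono (hJ : IsDensity J) (hg : IsMonostable g K) (hg' : IsMonostable g' K)
    (hc : 0 < c) (hle : ∀ w ∈ Icc (0 : ℝ) 1, g w ≤ g' w) (hχ : IsProfile χ) (hχ' : IsProfile χ')
    (hχχ' : χ ≤ χ') (hU : IsProfile U) (hV : IsProfile V) (h : U ≤ V) :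
    waveMap J g K c χ U ≤ waveMap J g' K c χ' V :=
  (isDensity_expKernel (hg.div_pos hc)).kernelAvg_mono (isProfile_mul_growthOp hJ hg hχ hU)
    (isProfile_mul_growthOp hJ hg' hχ' hV)
    (mul_growthOp_mono hJ hg hle hχ' hχχ' hU hV h)

lemma waveMap_translate (χ U : ℝ → ℝ) (s x : ℝ) :
    waveMap J g K c (fun z => χ (z + s)) (fun z => U (z + s)) x = waveMap J g K c χ U (x + s) := by
  simp only [waveMap, growthOp_translate]
  exact kernelAvg_translate _ (fun z => χ z * growthOp J g K U z) s x

lemma tendsto_waveMap (hJ : IsDensity J) (hg : IsMonostable g K) (hc : 0 < c) {ι : Type*}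
    {l : Filter ι} [l.IsCountablyGenerated] {χs u : ι → ℝ → ℝ} (hχs : ∀ i, IsProfile (χs i))
    (hu : ∀ i, IsProfile (u i)) (hU : IsProfile U)
    (hlimχ : ∀ y, Tendsto (fun i => χs i y) l (nhds (χ y)))
    (hlim : ∀ y, Tendsto (fun i => u i y) l (nhds (U y))) (x : ℝ) :
    Tendsto (fun i => waveMap J g K c (χs i) (u i) x) l (nhds (waveMap J g K c χ U x)) :=
  (isDensity_expKernel (hg.div_pos hc)).tendsto_kernelAvg (x := fun _ => x)
    (fun i => isProfile_mul_growthOp hJ hg (hχs i) (hu i)) fun _ _ =>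
      (hlimχ _).mul (tendsto_growthOp hJ hg hu (hU.mem_Icc _) fun _ => hlim _)

lemma tendsto_waveMap_of_translate {l : Filter ℝ} [l.IsCountablyGenerated] (hJ : IsDensity J)
    (hg : IsMonostable g K) (hc : 0 < c) (hl : ∀ s, Tendsto (· + s) l l) (hχ : IsProfile χ)
    (hU : IsProfile U) (hχ1 : Tendsto χ l (nhds 1)) {b : ℝ} (hb : b ∈ Icc (0 : ℝ) 1)
    (hlim : Tendsto U l (nhds b)) :
    Tendsto (waveMap J g K c χ U) l (nhds (b + g b / K)) := by
  have h := hχ1.mul (tendsto_growthOp_of_translate hJ hg hl hU hb hlim)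
  rw [one_mul] at h
  exact (isDensity_expKernel (hg.div_pos hc)).tendsto_kernelAvg_of_translate hl
    (isProfile_mul_growthOp hJ hg hχ hU) h

lemma abs_waveMap_sub_le (hJ : IsDensity J) (hg : IsMonostable g K) (hg' : IsMonostable g' K)
    (hc : 0 < c) (hχ : IsProfile χ) (hU : IsProfile U) {ε : ℝ}
    (hε : ∀ w ∈ Icc (0 : ℝ) 1, |g w - g' w| ≤ ε) (x : ℝ) :
    |waveMap J g K c χ U x - waveMap J g' K c χ U x| ≤ ε := by
  have hone_sided : ∀ {g g' : ℝ → ℝ}, IsMonostable g K → IsMonostable g' K →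
      (∀ w ∈ Icc (0 : ℝ) 1, g w - g' w ≤ ε) →
      waveMap J g K c χ U x - waveMap J g' K c χ U x ≤ ε := by
    intro g g' hg hg' hle
    have hε0 : 0 ≤ ε := by simpa [hg.zero, hg'.zero] using hle 0 (by simp)
    refine (isDensity_expKernel (hg.div_pos hc)).kernelAvg_sub_le
      (isProfile_mul_growthOp hJ hg hχ hU) (isProfile_mul_growthOp hJ hg' hχ hU) fun y => ?_
    set z := x - y
    calc χ z * growthOp J g K U z - χ z * growthOp J g' K U z
        = χ z * ((g (U z) - g' (U z)) / K) := by simp only [growthOp]; ring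
      _ ≤ χ z * ε := mul_le_mul_of_nonneg_left ((div_le_iff₀ hg.pos_const).2 <|
          (hle _ (hU.mem_Icc z)).trans (le_mul_of_one_le_right hε0 hg.one_lt.le)) (hχ.nonneg z)
      _ ≤ ε := mul_le_of_le_one_left hε0 (hχ.le_one z)
  refine abs_sub_le_iff.2 ⟨hone_sided hg hg' fun w hw => (le_abs_self _).trans (hε w hw),
    hone_sided hg' hg fun w hw => ?_⟩
  exact (le_abs_self _).trans ((abs_sub_comm _ _).trans_le (hε w hw))

lemma hasDerivAt_of_waveMap_eq (hJ : IsDensity J) (hg : IsMonostable g K) (hc : 0 < c)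
    (hχ : IsProfile χ) (hU : IsProfile U) (hfix : waveMap J g K c χ U = U) {x : ℝ}
    (hx : χ =ᶠ[nhds x] 1) : HasDerivAt U ((U x - growthOp J g K U x) / (c / K)) x := by
  have hUc : Continuous U := hfix ▸ continuous_waveMap hJ hg hc hχ hU
  have hχc : ContinuousAt χ x := continuousAt_const.congr hx.symm
  have h := hasDerivAt_resolvent (hg.div_pos hc) (isProfile_mul_growthOp hJ hg hχ hU)
    (hχc.mul (continuous_growthOp hJ hg hU hUc).continuousAt)
  rw [hx.self_of_nhds, Pi.one_apply, one_mul] at h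
  change HasDerivAt (waveMap J g K c χ U) ((waveMap J g K c χ U x - _) / _) x at h
  rwa [hfix] at h

lemma sub_growthOp_div (hK : K ≠ 0) (c x : ℝ) :
    (U x - growthOp J g K U x) / (c / K) = (U x - kernelAvg J U x - g (U x)) / c := by
  rw [growthOp]
  field

end WaveMap

/-! ### Fronts as fixed points -/

section Supersolution

variable {J g : ℝ → ℝ} {K c : ℝ} {χ U : ℝ → ℝ}

lemma limit_eq_zero_or_one {l : Filter ℝ} [l.NeBot] [l.IsCountablyGenerated] (hJ : IsDensity J)
    (hg : IsMonostable g K) (hc : 0 < c) (hl : ∀ s, Tendsto (· + s) l l) (hχ : IsProfile χ)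
    (hχ1 : Tendsto χ l (nhds 1)) (hU : IsProfile U) (hsup : waveMap J g K c χ U ≤ U) {b : ℝ}
    (hb : b ∈ Icc (0 : ℝ) 1) (hlim : Tendsto U l (nhds b)) : b = 0 ∨ b = 1 := by
  have h : b + g b / K ≤ b := le_of_tendsto_of_tendsto'
    (tendsto_waveMap_of_translate hJ hg hc hl hχ hU hχ1 hb hlim) hlim hsup
  exact hg.eq_zero_or_one hb (by simpa [div_le_iff₀ hg.pos_const] using h)

lemma tendsto_atBot_one_of_supersolution (hJ : IsDensity J) (hg : IsMonostable g K) (hc : 0 < c)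
    (hχ : IsProfile χ) (hχ1 : Tendsto χ atBot (nhds 1)) (hU : IsProfile U)
    (hsup : waveMap J g K c χ U ≤ U) {x : ℝ} (hx : 0 < U x) : Tendsto U atBot (nhds 1) := by
  obtain ⟨b, hb, hlim, hle⟩ := hU.exists_tendsto_atBot
  have htrans := fun s : ℝ => tendsto_atBot_add_const_right atBot s tendsto_id
  rcases limit_eq_zero_or_one hJ hg hc htrans hχ hχ1 hU hsup hb hlim with rfl | rfl
  · exact absurd (hle x) hx.not_ge
  · exact hlim

lemma tendsto_atTop_zero_of_supersolution (hJ : IsDensity J) (hg : IsMonostable g K) (hc : 0 < c)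
    (hU : IsProfile U) (hsup : waveMap J g K c 1 U ≤ U) {x : ℝ} (hx : U x < 1) :
    Tendsto U atTop (nhds 0) := by
  obtain ⟨b, hb, hlim, hle⟩ := hU.exists_tendsto_atTop
  have htrans := fun s : ℝ => tendsto_atTop_add_const_right atTop s tendsto_id
  rcases limit_eq_zero_or_one hJ hg hc htrans .one tendsto_const_nhds hU hsup hb hlim with rfl | rfl
  · exact hlim
  · exact absurd (hle x) hx.not_ge

end Supersolution

section Fronts

variable {J g : ℝ → ℝ} {K c : ℝ} {U W : ℝ → ℝ}

lemma waveMap_one (U : ℝ → ℝ) :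
    waveMap J g K c 1 U = kernelAvg (expKernel (c / K)) (growthOp J g K U) := by
  simp only [waveMap, Pi.one_apply, one_mul]

lemma growthOp_eq_zero_of_lt (hJ : IsDensity J) (hg : IsMonostable g K) (hc : 0 < c)
    (hU : IsProfile U) (hfix : waveMap J g K c 1 U = U) {x y : ℝ} (hx : U x = 0) (hxy : x < y) :
    growthOp J g K U y = 0 := by
  have hN := isProfile_growthOp hJ hg hU
  by_contra hne
  have hlt := resolvent_lt_resolvent (hg.div_pos hc) (.const (left_mem_Icc.2 zero_le_one)) hN
    (fun z _ => hN.nonneg z) le_rfl hxy fun z hz =>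
      ((hN.nonneg y).lt_of_ne' hne).trans_le (hN.antitone hz.2.le)
  rw [(isDensity_expKernel (hg.div_pos hc)).kernelAvg_const, ← waveMap_one, hfix, hx] at hlt
  exact hlt.false

lemma eq_zero_of_growthOp_eq_zero (hJ : IsKernel J) (hg : IsMonostable g K) (hU : IsProfile U)
    (hUc : Continuous U) {x y : ℝ} (hx : U x = 0) (hN : growthOp J g K U x = 0) (hy : 0 < J y) :
    U (x - y) = 0 := by
  have havg : kernelAvg J U x = 0 := by
    simpa [growthOp, hx, hg.zero, hg.pos_const.ne'] using hN
  have hcont : Continuous fun z => J z * U (x - z) :=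
    hJ.1.mul (hUc.comp (continuous_const.sub continuous_id))
  rw [kernelAvg, integral_eq_zero_iff_of_nonneg (fun z => mul_nonneg (hJ.2.1 z) (hU.nonneg _))
    (hJ.isDensity.integrable_mul_comp_sub hU x)] at havg
  have hzero := congrFun ((hcont.ae_eq_iff_eq volume continuous_zero).1 havg) y
  exact (mul_eq_zero.1 hzero).resolve_left hy.ne'

lemma pos_of_waveMap_eq (hJ : IsKernel J) (hg : IsMonostable g K) (hc : 0 < c) (hU : IsProfile U)
    (hfix : waveMap J g K c 1 U = U) {x₀ : ℝ} (hx₀ : 0 < U x₀) (x : ℝ) : 0 < U x := by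
  have hUc : Continuous U := hfix ▸ continuous_waveMap hJ.isDensity hg hc .one hU
  obtain ⟨y, hy, hJy⟩ := hJ.exists_pos
  have hstep : ∀ x, U x = 0 → U (x - y / 2) = 0 := fun x hx => by
    have hxy : x < x + y / 2 := by linarith
    have hzero : U (x + y / 2) = 0 := le_antisymm (hx ▸ hU.antitone hxy.le) (hU.nonneg _)
    rw [← eq_zero_of_growthOp_eq_zero hJ hg hU hUc hzero
      (growthOp_eq_zero_of_lt hJ.isDensity hg hc hU hfix hx hxy) hJy]
    congr 1
    ring
  by_contra! hneg
  have hiter : ∀ n : ℕ, U (x - n * (y / 2)) = 0 := fun n => by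
    induction n with
    | zero => simpa using le_antisymm hneg (hU.nonneg x)
    | succ n ih =>
      rw [← hstep _ ih]
      congr 1
      push_cast
      ring
  obtain ⟨n, hn⟩ := exists_nat_ge ((x - x₀) / (y / 2))
  rw [div_le_iff₀ (half_pos hy)] at hn
  exact hx₀.not_ge (hiter n ▸ hU.antitone (by linarith : x - n * (y / 2) ≤ x₀))

lemma lt_growthOp_of_waveMap_eq (hJ : IsDensity J) (hg : IsMonostable g K) (hc : 0 < c)
    (hU : IsProfile U) (hfix : waveMap J g K c 1 U = U) (hlim : Tendsto U atTop (nhds 0)) {x : ℝ}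
    (hx : 0 < U x) : U x < growthOp J g K U x := by
  have hN := isProfile_growthOp hJ hg hU
  have hNx : 0 < growthOp J g K U x := div_pos
    (add_pos_of_nonneg_of_pos ((hJ.isProfile_kernelAvg hU).nonneg x) <|
      add_pos_of_pos_of_nonneg (mul_pos (sub_pos.2 hg.one_lt) hx) (hg.nonneg (hU.mem_Icc x)))
    hg.pos_const
  have hNlim : Tendsto (growthOp J g K U) atTop (nhds 0) := by
    simpa only [hg.zero, zero_div, add_zero] using tendsto_growthOp_of_translate hJ hg
      (fun s => tendsto_atTop_add_const_right atTop s tendsto_id) hU ⟨le_rfl, zero_le_one⟩ hlim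
  obtain ⟨a, hxa, ha⟩ := ((eventually_ge_atTop x).and
    (eventually_forall_ge_atTop.2 (hNlim.eventually_lt_const hNx))).exists
  have hlt := resolvent_lt_resolvent (hg.div_pos hc) hN (.const (hN.mem_Icc x))
    (fun y hxy => hN.antitone hxy) hxa (lt_add_one a) fun y hy => ha y hy.1.le
  rwa [(isDensity_expKernel (hg.div_pos hc)).kernelAvg_const, ← waveMap_one, hfix] at hlt

lemma isNLFront_of_waveMap_eq (hJ : IsKernel J) (hg : IsMonostable g K) (hc : 0 < c)
    (hU : IsProfile U) (hfix : waveMap J g K c 1 U = U) {x₀ : ℝ} (hx₀ : U x₀ ∈ Ioo (0 : ℝ) 1) :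
    IsNLFront J g c U := by
  have hJ' := hJ.isDensity
  have hUc : Continuous U := hfix ▸ continuous_waveMap hJ' hg hc .one hU
  have hderiv : ∀ x, HasDerivAt U ((U x - growthOp J g K U x) / (c / K)) x := fun x =>
    hasDerivAt_of_waveMap_eq hJ' hg hc .one hU hfix .rfl
  have hbot := tendsto_atBot_one_of_supersolution hJ' hg hc .one tendsto_const_nhds hU hfix.le hx₀.1
  have htop := tendsto_atTop_zero_of_supersolution hJ' hg hc hU hfix.le hx₀.2
  refine ⟨contDiff_one_iff_deriv.2 ⟨fun x => (hderiv x).differentiableAt, ?_⟩, fun x => ?_, hbot,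
    htop, fun x => ?_⟩
  · rw [funext fun x => (hderiv x).deriv]
    exact (hUc.sub (continuous_growthOp hJ' hg hU hUc)).div_const _
  · rw [← kernelAvg_eq_integral, (hderiv x).deriv, sub_growthOp_div hg.pos_const.ne']
    field
  · rw [(hderiv x).deriv]
    exact div_neg_of_neg_of_pos (sub_neg.2 <| lt_growthOp_of_waveMap_eq hJ' hg hc hU hfix htop <|
      pos_of_waveMap_eq hJ hg hc hU hfix hx₀.1 x) (hg.div_pos hc)

namespace IsNLFront

lemma strictAnti (hW : IsNLFront J g c W) : StrictAnti W := strictAnti_of_deriv_neg hW.2.2.2.2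

lemma tendsto_atBot (hW : IsNLFront J g c W) : Tendsto W atBot (nhds 1) := hW.2.2.1

lemma tendsto_atTop (hW : IsNLFront J g c W) : Tendsto W atTop (nhds 0) := hW.2.2.2.1

lemma pos (hW : IsNLFront J g c W) (x : ℝ) : 0 < W x :=
  (hW.strictAnti.antitone.le_of_tendsto hW.tendsto_atTop (x + 1)).trans_lt
    (hW.strictAnti (lt_add_one x))

lemma lt_one (hW : IsNLFront J g c W) (x : ℝ) : W x < 1 :=
  (hW.strictAnti (sub_one_lt x)).trans_le
    (hW.strictAnti.antitone.ge_of_tendsto hW.tendsto_atBot (x - 1))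

lemma isProfile (hW : IsNLFront J g c W) : IsProfile W :=
  ⟨hW.strictAnti.antitone, fun x => ⟨(hW.pos x).le, (hW.lt_one x).le⟩⟩

lemma hasDerivAt (hW : IsNLFront J g c W) (hc : c ≠ 0) (x : ℝ) :
    HasDerivAt W ((W x - kernelAvg J W x - g (W x)) / c) x := by
  refine (hW.1.differentiable one_ne_zero x).hasDerivAt.congr_deriv ?_
  rw [eq_div_iff hc, kernelAvg_eq_integral]
  linarith [hW.2.1 x]

lemma waveMap_eq (hJ : IsDensity J) (hg : IsMonostable g K) (hc : 0 < c)
    (hW : IsNLFront J g c W) : waveMap J g K c 1 W = W := by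
  funext x
  have hα := hg.div_pos hc
  have hderiv : ∀ u ∈ Ici x, HasDerivAt (fun u => -(Real.exp ((x - u) / (c / K)) * W u))
      ((c / K)⁻¹ * Real.exp ((x - u) / (c / K)) * growthOp J g K W u) u := fun u _ => by
    have hexp : HasDerivAt (fun u => Real.exp ((x - u) / (c / K)))
        (Real.exp ((x - u) / (c / K)) * (-1 / (c / K))) u :=
      (((hasDerivAt_id u).const_sub x).div_const _).exp
    have hW' := hW.hasDerivAt hc.ne' u
    rw [← sub_growthOp_div hg.pos_const.ne'] at hW'
    exact (hexp.mul hW').neg.congr_deriv (by ring)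
  have hlim : Tendsto (fun u => -(Real.exp ((x - u) / (c / K)) * W u)) atTop (nhds 0) := by
    have hlin : Tendsto (fun u => (x - u) / (c / K)) atTop atBot :=
      (tendsto_atBot_add_const_left _ x tendsto_neg_atTop_atBot).atBot_div_const hα
    simpa using ((Real.tendsto_exp_atBot.comp hlin).mul hW.tendsto_atTop).neg
  rw [waveMap_one, resolvent_eq_setIntegral, integral_Ioi_of_hasDerivAt_of_tendsto' hderiv
    (integrableOn_resolvent hα (isProfile_growthOp hJ hg hW.isProfile) x) hlim]
  simp

end IsNLFront

end Fronts

/-! ### Compactness and monotone iteration -/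

lemma exists_subseq_tendsto_of_lipschitzWith {C : NNReal} {u : ℕ → ℝ → ℝ}
    (hu : ∀ n, IsProfile (u n)) (hL : ∀ n, LipschitzWith C (u n)) :
    ∃ φ : ℕ → ℕ, StrictMono φ ∧ ∃ W, IsProfile W ∧
      ∀ x, Tendsto (fun n => u (φ n) x) atTop (nhds (W x)) := by
  have hcompact : IsCompact (Set.pi univ fun _ : ℚ => Icc (0 : ℝ) 1) :=
    isCompact_univ_pi fun _ => isCompact_Icc
  obtain ⟨w, -, φ, hφ, hlim⟩ := hcompact.isSeqCompact (x := fun n (r : ℚ) => u n r)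
    fun n r _ => (hu n).mem_Icc r
  rw [tendsto_pi_nhds] at hlim
  have hcauchy : ∀ x, ∃ l, Tendsto (fun n => u (φ n) x) atTop (nhds l) := fun x => by
    refine cauchySeq_tendsto_of_complete (Metric.cauchySeq_iff.2 fun ε hε => ?_)
    have hC : (0 : ℝ) < C + 1 := by positivity
    obtain ⟨r, hxr, hr⟩ :=
      exists_rat_btwn (lt_add_of_pos_right x (div_pos hε (mul_pos four_pos hC)))
    have hdist : ∀ n, dist (u n x) (u n r) ≤ ε / 4 := fun n => by
      refine ((hL n).dist_le_mul x r).trans ?_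
      rw [dist_comm, Real.dist_eq, abs_of_pos (sub_pos.2 hxr)]
      calc (C : ℝ) * (r - x) ≤ (C + 1) * (ε / (4 * (C + 1))) := by
            gcongr <;> linarith
        _ = ε / 4 := by field
    obtain ⟨N, hN⟩ := Metric.cauchySeq_iff.1 (hlim r).cauchySeq (ε / 4) (by linarith)
    refine ⟨N, fun m hm n hn => ?_⟩
    have htri := dist_triangle4_right (u (φ m) x) (u (φ n) x) (u (φ m) r) (u (φ n) r)
    have hmn : dist (u (φ m) r) (u (φ n) r) < ε / 4 := hN m hm n hn
    linarith [hdist (φ m), hdist (φ n)]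
  choose W hW using hcauchy
  exact ⟨φ, hφ, W, .of_tendsto (fun n => hu (φ n)) hW, hW⟩

section Compactness

variable {J g : ℝ → ℝ} {K c : ℝ}

lemma exists_subseq_tendsto_fixedPoint (hJ : IsDensity J) (hg : IsMonostable g K) (hc : 0 < c)
    {χs u : ℕ → ℝ → ℝ} {χ : ℝ → ℝ} {ε : ℕ → ℝ} (hχs : ∀ k, IsProfile (χs k))
    (hlimχ : ∀ y, Tendsto (fun k => χs k y) atTop (nhds (χ y))) (hu : ∀ k, IsProfile (u k))
    (hε : Tendsto ε atTop (nhds 0))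
    (happrox : ∀ k x, |u k x - waveMap J g K c (χs k) (u k) x| ≤ ε k) :
    ∃ φ : ℕ → ℕ, StrictMono φ ∧ ∃ W, IsProfile W ∧ waveMap J g K c χ W = W ∧
      ∀ x, Tendsto (fun n => u (φ n) x) atTop (nhds (W x)) := by
  obtain ⟨φ, hφ, W, hW, hlim⟩ := exists_subseq_tendsto_of_lipschitzWith
    (fun k => isProfile_waveMap hJ hg hc (hχs k) (hu k))
    fun k => lipschitzWith_waveMap hJ hg hc (hχs k) (hu k)
  have hlimu : ∀ x, Tendsto (fun n => u (φ n) x) atTop (nhds (W x)) := fun x => by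
    have hdiff : Tendsto (fun n => u (φ n) x - waveMap J g K c (χs (φ n)) (u (φ n)) x) atTop
        (nhds 0) :=
      squeeze_zero_norm (fun n => happrox (φ n) x) (hε.comp hφ.tendsto_atTop)
    simpa using hdiff.add (hlim x)
  refine ⟨φ, hφ, W, hW, funext fun x => tendsto_nhds_unique ?_ (hlim x), hlimu⟩
  exact tendsto_waveMap hJ hg hc (fun n => hχs (φ n)) (fun n => hu (φ n)) hW
    (fun y => (hlimχ y).comp hφ.tendsto_atTop) hlimu x

lemma exists_waveMap_eq_half (hJ : IsDensity J) (hg : IsMonostable g K) (hc : 0 < c) {U : ℝ → ℝ}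
    (hU : IsProfile U) (hbot : Tendsto U atBot (nhds 1)) (htop : Tendsto U atTop (nhds 0)) :
    ∃ x, waveMap J g K c 1 U x = 1 / 2 := by
  have hbot' := tendsto_waveMap_of_translate hJ hg hc
    (fun s => tendsto_atBot_add_const_right atBot s tendsto_id) .one hU tendsto_const_nhds
    ⟨zero_le_one, le_rfl⟩ hbot
  have htop' := tendsto_waveMap_of_translate hJ hg hc
    (fun s => tendsto_atTop_add_const_right atTop s tendsto_id) .one hU tendsto_const_nhds
    ⟨le_rfl, zero_le_one⟩ htop
  simp only [hg.one, hg.zero, zero_div, add_zero] at hbot' htop'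
  obtain ⟨a, ha⟩ := (hbot'.eventually_const_lt (by norm_num : (1 / 2 : ℝ) < 1)).exists
  obtain ⟨b, hb⟩ := (htop'.eventually_lt_const (by norm_num : (0 : ℝ) < 1 / 2)).exists
  exact mem_range_of_exists_le_of_exists_ge (continuous_waveMap hJ hg hc .one hU) ⟨b, hb.le⟩
    ⟨a, ha.le⟩

/-- Translating the approximate solutions so that they are near `1 / 2` at the origin prevents the
limit from being trivial. -/
lemma exists_front_of_approx (hJ : IsKernel J) (hg : IsMonostable g K) (hc : 0 < c)
    {u : ℕ → ℝ → ℝ} {ε : ℕ → ℝ} (hu : ∀ k, IsProfile (u k))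
    (hbot : ∀ k, Tendsto (u k) atBot (nhds 1)) (htop : ∀ k, Tendsto (u k) atTop (nhds 0))
    (hε : Tendsto ε atTop (nhds 0)) (happrox : ∀ k x, |u k x - waveMap J g K c 1 (u k) x| ≤ ε k) :
    ∃ W, IsNLFront J g c W := by
  choose X hX using fun k => exists_waveMap_eq_half hJ.isDensity hg hc (hu k) (hbot k) (htop k)
  have happrox' : ∀ k x,
      |u k (x + X k) - waveMap J g K c 1 (fun z => u k (z + X k)) x| ≤ ε k := fun k x => by
    have htrans := waveMap_translate (J := J) (g := g) (K := K) (c := c) 1 (u k) (X k) x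
    exact htrans ▸ happrox k _
  obtain ⟨φ, hφ, W, hW, hfix, hlim⟩ := exists_subseq_tendsto_fixedPoint hJ.isDensity hg hc
    (fun _ => .one) (fun _ => tendsto_const_nhds) (fun k => (hu k).translate (X k)) hε happrox'
  have hW0 : W 0 = 1 / 2 := by
    refine tendsto_nhds_unique (hlim 0) (tendsto_iff_norm_sub_tendsto_zero.2 ?_)
    refine squeeze_zero (fun n => norm_nonneg _) (fun n => ?_) (hε.comp hφ.tendsto_atTop)
    simpa only [zero_add, hX, Real.norm_eq_abs, Function.comp_apply] using happrox (φ n) (X (φ n))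
  exact ⟨W, isNLFront_of_waveMap_eq hJ hg hc hW hfix (x₀ := 0) (by rw [hW0]; norm_num)⟩

end Compactness

section Iteration

variable {J g : ℝ → ℝ} {K c : ℝ} {χ φ V : ℝ → ℝ}

/-- The monotone iteration of the wave map started from, and at each step kept above, the seed
`φ`. -/
def seededIter (J g : ℝ → ℝ) (K c : ℝ) (χ φ : ℝ → ℝ) : ℕ → ℝ → ℝ
  | 0 => φ
  | n + 1 => waveMap J g K c χ (seededIter J g K c χ φ n) ⊔ φ

/-- The limit of the monotone iteration, which is the least supersolution above the seed. -/
def seededSup (J g : ℝ → ℝ) (K c : ℝ) (χ φ : ℝ → ℝ) (x : ℝ) : ℝ :=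
  ⨆ n, seededIter J g K c χ φ n x

lemma isProfile_seededIter (hJ : IsDensity J) (hg : IsMonostable g K) (hc : 0 < c)
    (hχ : IsProfile χ) (hφ : IsProfile φ) (n : ℕ) : IsProfile (seededIter J g K c χ φ n) := by
  induction n with
  | zero => exact hφ
  | succ n ih => exact (isProfile_waveMap hJ hg hc hχ ih).sup hφ

lemma seededIter_le_succ (hJ : IsDensity J) (hg : IsMonostable g K) (hc : 0 < c)
    (hχ : IsProfile χ) (hφ : IsProfile φ) (n : ℕ) :
    seededIter J g K c χ φ n ≤ seededIter J g K c χ φ (n + 1) := by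
  have hprof := isProfile_seededIter hJ hg hc hχ hφ
  induction n with
  | zero => exact le_sup_right
  | succ n ih =>
    exact sup_le_sup_right (waveMap_mono hJ hg hg hc (fun _ _ => le_rfl) hχ hχ le_rfl (hprof n)
      (hprof (n + 1)) ih) φ

lemma bddAbove_seededIter (hJ : IsDensity J) (hg : IsMonostable g K) (hc : 0 < c)
    (hχ : IsProfile χ) (hφ : IsProfile φ) (x : ℝ) :
    BddAbove (range fun n => seededIter J g K c χ φ n x) :=
  ⟨1, forall_mem_range.2 fun n => (isProfile_seededIter hJ hg hc hχ hφ n).le_one x⟩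

lemma seededIter_le_seededSup (hJ : IsDensity J) (hg : IsMonostable g K) (hc : 0 < c)
    (hχ : IsProfile χ) (hφ : IsProfile φ) (n : ℕ) :
    seededIter J g K c χ φ n ≤ seededSup J g K c χ φ :=
  fun x => le_ciSup (bddAbove_seededIter hJ hg hc hχ hφ x) n

lemma tendsto_seededIter (hJ : IsDensity J) (hg : IsMonostable g K) (hc : 0 < c)
    (hχ : IsProfile χ) (hφ : IsProfile φ) (x : ℝ) :
    Tendsto (fun n => seededIter J g K c χ φ n x) atTop (nhds (seededSup J g K c χ φ x)) :=
  tendsto_atTop_ciSup (monotone_nat_of_le_succ fun n => seededIter_le_succ hJ hg hc hχ hφ n x)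
    (bddAbove_seededIter hJ hg hc hχ hφ x)

lemma isProfile_seededSup (hJ : IsDensity J) (hg : IsMonostable g K) (hc : 0 < c)
    (hχ : IsProfile χ) (hφ : IsProfile φ) : IsProfile (seededSup J g K c χ φ) :=
  .of_tendsto (isProfile_seededIter hJ hg hc hχ hφ) (tendsto_seededIter hJ hg hc hχ hφ)

lemma waveMap_seededSup_sup_eq (hJ : IsDensity J) (hg : IsMonostable g K) (hc : 0 < c)
    (hχ : IsProfile χ) (hφ : IsProfile φ) :
    waveMap J g K c χ (seededSup J g K c χ φ) ⊔ φ = seededSup J g K c χ φ := by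
  funext x
  have hlim := tendsto_seededIter hJ hg hc hχ hφ
  refine tendsto_nhds_unique ?_ ((tendsto_add_atTop_iff_nat 1).2 (hlim x))
  exact (tendsto_waveMap hJ hg hc (fun _ => hχ) (isProfile_seededIter hJ hg hc hχ hφ)
    (isProfile_seededSup hJ hg hc hχ hφ) (fun _ => tendsto_const_nhds) hlim x).max
      tendsto_const_nhds

lemma waveMap_seededSup_le (hJ : IsDensity J) (hg : IsMonostable g K) (hc : 0 < c)
    (hχ : IsProfile χ) (hφ : IsProfile φ) :
    waveMap J g K c χ (seededSup J g K c χ φ) ≤ seededSup J g K c χ φ :=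
  le_sup_left.trans_eq (waveMap_seededSup_sup_eq hJ hg hc hχ hφ)

lemma le_seededSup (hJ : IsDensity J) (hg : IsMonostable g K) (hc : 0 < c)
    (hχ : IsProfile χ) (hφ : IsProfile φ) : φ ≤ seededSup J g K c χ φ :=
  seededIter_le_seededSup hJ hg hc hχ hφ 0

lemma seededSup_le (hJ : IsDensity J) (hg : IsMonostable g K) (hc : 0 < c) (hχ : IsProfile χ)
    (hφ : IsProfile φ) (hV : IsProfile V) (hsup : waveMap J g K c χ V ≤ V) (hφV : φ ≤ V) :
    seededSup J g K c χ φ ≤ V := by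
  have hiter : ∀ n, seededIter J g K c χ φ n ≤ V := fun n => by
    induction n with
    | zero => exact hφV
    | succ n ih =>
      exact sup_le ((waveMap_mono hJ hg hg hc (fun _ _ => le_rfl) hχ hχ le_rfl
        (isProfile_seededIter hJ hg hc hχ hφ n) hV ih).trans hsup) hφV
  exact fun x => ciSup_le fun n => hiter n x

lemma tendsto_seededIter_of_tendsto (hJ : IsDensity J) (hg : IsMonostable g K) (hc : 0 < c)
    {χs : ℕ → ℝ → ℝ} (hχs : ∀ m, IsProfile (χs m)) (hχ : IsProfile χ) (hφ : IsProfile φ)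
    (hlim : ∀ x, Tendsto (fun m => χs m x) atTop (nhds (χ x))) (n : ℕ) (x : ℝ) :
    Tendsto (fun m => seededIter J g K c (χs m) φ n x) atTop
      (nhds (seededIter J g K c χ φ n x)) := by
  induction n generalizing x with
  | zero => exact tendsto_const_nhds
  | succ n ih =>
    exact (tendsto_waveMap hJ hg hc hχs
      (fun m => isProfile_seededIter hJ hg hc (hχs m) hφ n)
      (isProfile_seededIter hJ hg hc hχ hφ n) hlim ih x).max tendsto_const_nhds

end Iteration

section Existence

variable {J g : ℝ → ℝ} {K c : ℝ}

lemma tendsto_seededSup_step_atBot (hJ : IsDensity J) (hg : IsMonostable g K) (hc : 0 < c)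
    {χ : ℝ → ℝ} (hχ : IsProfile χ) (hχ1 : Tendsto χ atBot (nhds 1)) {δ : ℝ}
    (hδ : δ ∈ Ioc (0 : ℝ) 1) : Tendsto (seededSup J g K c χ (step δ 0)) atBot (nhds 1) := by
  have hφ := isProfile_step ⟨hδ.1.le, hδ.2⟩ 0
  refine tendsto_atBot_one_of_supersolution hJ hg hc hχ hχ1 (isProfile_seededSup hJ hg hc hχ hφ)
    (waveMap_seededSup_le hJ hg hc hχ hφ) (x := 0) (hδ.1.trans_le ?_)
  simpa only [step_of_le le_rfl] using le_seededSup hJ hg hc hχ hφ 0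

/-- Small seeds placed below a translate of the supersolution give approximate fronts. -/
lemma exists_front_of_supersolution (hJ : IsKernel J) (hg : IsMonostable g K) (hc : 0 < c)
    {V : ℝ → ℝ} (hV : IsProfile V) (hsup : waveMap J g K c 1 V ≤ V)
    (hlim : Tendsto V atTop (nhds 0)) {x₀ : ℝ} (hx₀ : 0 < V x₀) : ∃ W, IsNLFront J g c W := by
  have hJ' := hJ.isDensity
  set δ : ℕ → ℝ := fun k => V x₀ / (k + 1)
  have hδ : ∀ k, δ k ∈ Ioc 0 (V x₀) := fun k =>
    ⟨by positivity, div_le_self hx₀.le (by linarith [(k.cast_nonneg : (0 : ℝ) ≤ k)])⟩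
  have hδ1 : ∀ k, δ k ∈ Ioc (0 : ℝ) 1 := fun k => ⟨(hδ k).1, (hδ k).2.trans (hV.le_one x₀)⟩
  have hφ : ∀ k, IsProfile (step (δ k) 0) := fun k => isProfile_step ⟨(hδ1 k).1.le, (hδ1 k).2⟩ 0
  have hprof : ∀ k, IsProfile (seededSup J g K c 1 (step (δ k) 0)) := fun k =>
    isProfile_seededSup hJ' hg hc .one (hφ k)
  have hδlim : Tendsto δ atTop (nhds 0) := by
    simpa [δ, div_eq_mul_inv] using
      (tendsto_one_div_add_atTop_nhds_zero_nat (𝕜 := ℝ)).const_mul (V x₀)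
  refine exists_front_of_approx hJ hg hc hprof
    (fun k => tendsto_seededSup_step_atBot hJ' hg hc .one tendsto_const_nhds (hδ1 k)) (fun k => ?_)
    hδlim fun k x => ?_
  · have hle : seededSup J g K c 1 (step (δ k) 0) ≤ fun x => V (x + x₀) := by
      refine seededSup_le hJ' hg hc .one (hφ k) (hV.translate x₀)
        (fun x => (waveMap_translate 1 V x₀ x).trans_le (hsup _)) fun x => ?_
      rcases le_or_gt x 0 with hx | hx
      · rw [step_of_le hx]
        exact (hδ k).2.trans (hV.antitone (by linarith))
      · rw [step_of_lt hx]
        exact hV.nonneg _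
    exact squeeze_zero (hprof k).nonneg hle
      (hlim.comp (tendsto_atTop_add_const_right _ x₀ tendsto_id))
  · have heq := congrFun (waveMap_seededSup_sup_eq hJ' hg hc .one (hφ k)) x
    have hT := (isProfile_waveMap hJ' hg hc .one (hprof k)).nonneg x
    have hstep : step (δ k) 0 x ≤ δ k := indicator_le_self' (fun _ _ => (hδ k).1.le) x
    rw [Pi.sup_apply] at heq
    rw [abs_le]
    rcases max_choice (waveMap J g K c 1 (seededSup J g K c 1 (step (δ k) 0)) x)
      (step (δ k) 0 x) with h | h <;> constructor <;>
      linarith [(hδ k).1, waveMap_seededSup_le hJ' hg hc .one (hφ k) x]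

lemma tendsto_step_one_natCast (x : ℝ) : Tendsto (fun m : ℕ => step 1 m x) atTop (nhds 1) :=
  tendsto_const_nhds.congr' <| (tendsto_natCast_atTop_atTop.eventually_ge_atTop x).mono
    fun _ hm => (step_of_le hm).symm

lemma one_le_seededSup_of_no_front (hJ : IsKernel J) (hg : IsMonostable g K) (hc : 0 < c)
    (hno : ¬∃ W, IsNLFront J g c W) {δ : ℝ} (hδ : δ ∈ Ioc (0 : ℝ) 1) (x : ℝ) :
    1 ≤ seededSup J g K c 1 (step δ 0) x := by
  have hφ := isProfile_step ⟨hδ.1.le, hδ.2⟩ 0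
  have hU := isProfile_seededSup hJ.isDensity hg hc .one hφ
  have hsup := waveMap_seededSup_le hJ.isDensity hg hc .one hφ
  by_contra! hlt
  refine hno (exists_front_of_supersolution hJ hg hc hU hsup
    (tendsto_atTop_zero_of_supersolution hJ.isDensity hg hc hU hsup hlt) (x₀ := 0)
    (hδ.1.trans_le ?_))
  simpa only [step_of_le le_rfl] using le_seededSup hJ.isDensity hg hc .one hφ 0

/-- A wave of speed `c` cut off at `m`: a profile which solves the wave equation on `(-∞, m)`,
vanishes on `[m, ∞)` and tends to `1` at `-∞`. -/
structure IsCutoffWave (J g : ℝ → ℝ) (K c m : ℝ) (U : ℝ → ℝ) : Prop where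
  isProfile : IsProfile U
  waveMap_eq : waveMap J g K c (step 1 m) U = U
  tendsto_atBot : Tendsto U atBot (nhds 1)

/-- When no front exists the seeded iteration overtakes its own seed, hence already does so under
a distant cut-off, and the seed becomes irrelevant. -/
lemma exists_isCutoffWave (hJ : IsKernel J) (hg : IsMonostable g K) (hc : 0 < c)
    (hno : ¬∃ W, IsNLFront J g c W) : ∃ m U, IsCutoffWave J g K c m U := by
  have hJ' := hJ.isDensity
  have hδ : (1 / 2 : ℝ) ∈ Ioc (0 : ℝ) 1 := by norm_num
  have hφ := isProfile_step ⟨hδ.1.le, hδ.2⟩ 0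
  have hone := one_half_lt_one.trans_le (one_le_seededSup_of_no_front hJ hg hc hno hδ 1)
  obtain ⟨n, hn⟩ := ((tendsto_seededIter hJ' hg hc .one hφ 1).eventually_const_lt hone).exists
  obtain ⟨m, hm⟩ := ((tendsto_seededIter_of_tendsto hJ' hg hc (fun m : ℕ => isProfile_step_one m)
    .one hφ tendsto_step_one_natCast n 1).eventually_const_lt hn).exists
  have hχ := isProfile_step_one m
  set U := seededSup J g K c (step 1 m) (step (1 / 2) 0)
  have hU : IsProfile U := isProfile_seededSup hJ' hg hc hχ hφ
  have hU1 : 1 / 2 < U 1 := hm.trans_le (seededIter_le_seededSup hJ' hg hc hχ hφ n 1)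
  have hfix : waveMap J g K c (step 1 m) U = U := funext fun x => by
    have heq := congrFun (waveMap_seededSup_sup_eq hJ' hg hc hχ hφ) x
    rw [Pi.sup_apply] at heq
    rcases le_or_gt x 0 with hx | hx
    · rw [step_of_le hx] at heq
      rcases max_choice (waveMap J g K c (step 1 m) U x) (1 / 2) with h | h
      · exact h.symm.trans heq
      · linarith [hU.antitone (show x ≤ 1 by linarith)]
    · rwa [step_of_lt hx, max_eq_left ((isProfile_waveMap hJ' hg hc hχ hU).nonneg x)] at heq
  exact ⟨m, U, hU, hfix, tendsto_seededSup_step_atBot hJ' hg hc hχ (tendsto_step_atBot 1 m) hδ⟩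

end Existence

/-! ### Comparison and sliding -/

/-- `g` decreases at rate at least `β` on `[1 - η, 1]`: the stability of the state `1`. -/
structure IsStableAtOne (g : ℝ → ℝ) (η β : ℝ) : Prop where
  width_pos : 0 < η
  rate_pos : 0 < β
  sub_le : ∀ x y, 1 - η ≤ y → y ≤ x → x ≤ 1 → g x - g y ≤ -β * (x - y)

section Sliding

variable {J g : ℝ → ℝ} {K c η β : ℝ} {U V : ℝ → ℝ}

lemma growthOp_sub_le (hJ : IsDensity J) (hg : IsMonostable g K) (hst : IsStableAtOne g η β)
    (hU : IsProfile U) (hV : IsProfile V) {D : ℝ} (hD : 0 ≤ D) (hUV : ∀ z, U z - V z ≤ D) {y : ℝ}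
    (hy : U y ≤ V y ∨ 1 - η ≤ V y) :
    growthOp J g K U y - growthOp J g K V y ≤ (1 - min β (K - 1) / K) * D := by
  have hK := hg.pos_const
  have hβ : 0 ≤ K - 1 - min β (K - 1) := sub_nonneg.2 (min_le_right _ _)
  have havg := hJ.kernelAvg_sub_le hU hV (x := y) (x' := y) fun z => hUV (y - z)
  have hlocal : ((K - 1) * U y + g (U y)) - ((K - 1) * V y + g (V y)) ≤
      (K - 1 - min β (K - 1)) * D := by
    rcases le_or_gt (U y) (V y) with hle | hlt
    · have hmono : (K - 1) * U y + g (U y) ≤ (K - 1) * V y + g (V y) :=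
        hg.monotoneOn (hU.mem_Icc y) (hV.mem_Icc y) hle
      linarith [mul_nonneg hβ hD]
    · have hdecay := hst.sub_le _ _ (hy.resolve_left hlt.not_ge) hlt.le (hU.le_one y)
      have hrate := mul_le_mul_of_nonneg_right (min_le_left β (K - 1)) (sub_nonneg.2 hlt.le)
      linarith [mul_le_mul_of_nonneg_left (hUV y) hβ]
  rw [growthOp, growthOp, ← sub_div, div_le_iff₀ hK]
  calc kernelAvg J U y + ((K - 1) * U y + g (U y)) - (kernelAvg J V y + ((K - 1) * V y + g (V y)))
      ≤ (K - min β (K - 1)) * D := by linarith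
    _ = (1 - min β (K - 1) / K) * D * K := by field

/-- Where `V` is close to `1` the wave map contracts the excess of `U` over `V`. -/
lemma le_of_le_on_Ici (hJ : IsDensity J) (hg : IsMonostable g K) (hc : 0 < c)
    (hst : IsStableAtOne g η β) (hU : IsProfile U) (hV : IsProfile V)
    (hsub : U ≤ waveMap J g K c 1 U) (hsup : waveMap J g K c 1 V ≤ V) {x₀ : ℝ}
    (hx₀ : 1 - η ≤ V x₀) (hle : ∀ x, x₀ ≤ x → U x ≤ V x) : U ≤ V := by
  have hK := hg.pos_const
  set θ := 1 - min β (K - 1) / K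
  have hθ0 : 0 ≤ θ := by
    rw [sub_nonneg, div_le_one hK]
    exact (min_le_right _ _).trans (sub_le_self _ zero_le_one)
  have hθ1 : θ < 1 :=
    sub_lt_self _ (_root_.div_pos (lt_min hst.rate_pos (sub_pos.2 hg.one_lt)) hK)
  have hcases : ∀ y, U y ≤ V y ∨ 1 - η ≤ V y := fun y =>
    (le_total x₀ y).imp (hle y) fun hy => hx₀.trans (hV.antitone hy)
  have hexcess : ∀ (n : ℕ) x, U x - V x ≤ θ ^ n := fun n => by
    induction n with
    | zero => exact fun x => by linarith [hU.le_one x, hV.nonneg x, pow_zero θ]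
    | succ n ih =>
      intro x
      have hmap : waveMap J g K c 1 U x - waveMap J g K c 1 V x ≤ θ ^ (n + 1) := by
        rw [waveMap_one, waveMap_one, pow_succ']
        exact (isDensity_expKernel (hg.div_pos hc)).kernelAvg_sub_le (isProfile_growthOp hJ hg hU)
          (isProfile_growthOp hJ hg hV) fun y =>
            growthOp_sub_le hJ hg hst hU hV (pow_nonneg hθ0 n) ih (hcases _)
      linarith [hsub x, hsup x]
  exact fun x => sub_nonpos.1 <| ge_of_tendsto' (tendsto_pow_atTop_nhds_zero_of_lt_one hθ0 hθ1)
    fun n => hexcess n x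

lemma waveMap_translate_le (hsup : waveMap J g K c 1 V ≤ V) (s : ℝ) :
    waveMap J g K c 1 (fun x => V (x + s)) ≤ fun x => V (x + s) := fun x =>
  (waveMap_translate 1 V s x).trans_le (hsup _)

lemma exists_le_translate (hJ : IsDensity J) (hg : IsMonostable g K) (hc : 0 < c)
    (hst : IsStableAtOne g η β) (hU : IsProfile U) (hV : IsProfile V)
    (hsub : U ≤ waveMap J g K c 1 U) (hsup : waveMap J g K c 1 V ≤ V)
    (hVbot : Tendsto V atBot (nhds 1)) (hU1 : U 0 < 1) {s : ℝ}
    (htail : ∀ᶠ x in atTop, U x ≤ V (x + s)) : ∃ s', U ≤ fun x => V (x + s') := by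
  obtain ⟨X, hX⟩ := eventually_atTop.1 htail
  obtain ⟨z, hzη, hzU⟩ := ((hVbot.eventually_const_lt (sub_lt_self 1 hst.width_pos)).and
    (hVbot.eventually_const_lt hU1)).exists
  have hs' : min s (min z (z - X)) ≤ z := (min_le_right _ _).trans (min_le_left _ _)
  have hs'X : min s (min z (z - X)) ≤ z - X := (min_le_right _ _).trans (min_le_right _ _)
  refine ⟨min s (min z (z - X)), le_of_le_on_Ici hJ hg hc hst hU (hV.translate _) hsub
    (waveMap_translate_le hsup _) (x₀ := 0) ?_ fun x hx => ?_⟩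
  · exact hzη.le.trans (hV.antitone (by linarith))
  · rcases le_total X x with hXx | hxX
    · exact (hX x hXx).trans (hV.antitone (by linarith [min_le_left s (min z (z - X))]))
    · exact (hU.antitone hx).trans (hzU.le.trans (hV.antitone (by linarith)))

lemma exists_gt_le_translate (hJ : IsDensity J) (hg : IsMonostable g K) (hc : 0 < c)
    (hst : IsStableAtOne g η β) (hU : IsProfile U) (hV : IsProfile V) (hUc : Continuous U)
    (hVc : Continuous V) (hsub : U ≤ waveMap J g K c 1 U) (hsup : waveMap J g K c 1 V ≤ V)
    (hVbot : Tendsto V atBot (nhds 1)) {s s' : ℝ} (hlt : ∀ x, U x < V (x + s)) (hs : s < s')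
    (htail : ∀ᶠ x in atTop, U x ≤ V (x + s')) : ∃ t > s, U ≤ fun x => V (x + t) := by
  obtain ⟨X, hX⟩ := eventually_atTop.1 htail
  have hVbot' := hVbot.comp (tendsto_atBot_add_const_right _ s tendsto_id)
  obtain ⟨x₀, hx₀⟩ := (hVbot'.eventually_const_lt (sub_lt_self 1 hst.width_pos)).exists
  have hleft : ∀ᶠ t in nhds s, 1 - η < V (x₀ + t) :=
    (hVc.comp (continuous_const_add x₀)).continuousAt.eventually_const_lt hx₀
  have hmiddle : ∀ᶠ t in nhds s, ∀ x ∈ Icc x₀ X, U x < V (x + t) :=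
    isCompact_Icc.eventually_forall_of_forall_eventually fun x _ =>
      (isOpen_lt (hUc.comp continuous_snd) (hVc.comp (continuous_snd.add continuous_fst))).mem_nhds
        (hlt x)
  obtain ⟨t, ⟨htleft, htmiddle⟩, hst', hts'⟩ := (((hleft.and hmiddle).filter_mono
    nhdsWithin_le_nhds).and (Ioo_mem_nhdsGT hs)).exists
  refine ⟨t, hst', le_of_le_on_Ici hJ hg hc hst hU (hV.translate _) hsub
    (waveMap_translate_le hsup _) htleft.le fun x hx => ?_⟩
  rcases le_total X x with hXx | hxX
  · exact (hX x hXx).trans (hV.antitone (by linarith))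
  · exact (htmiddle x ⟨hx, hxX⟩).le

/-- A subsolution cannot stay strictly below every translate of a supersolution that dominates it
with room to spare near `+∞`: slide the supersolution until the two touch. -/
lemma not_forall_lt_translate (hJ : IsDensity J) (hg : IsMonostable g K) (hc : 0 < c)
    (hst : IsStableAtOne g η β) (hU : IsProfile U) (hV : IsProfile V) (hUc : Continuous U)
    (hVc : Continuous V) (hsub : U ≤ waveMap J g K c 1 U) (hsup : waveMap J g K c 1 V ≤ V)
    (hVbot : Tendsto V atBot (nhds 1)) (hVtop : Tendsto V atTop (nhds 0))
    (hU0 : U 0 ∈ Ioo (0 : ℝ) 1) {s₀ : ℝ} (htail₀ : ∀ᶠ x in atTop, U x ≤ V (x + s₀))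
    (htail : ∀ s, (∀ x, U x ≤ V (x + s)) → ∃ s' > s, ∀ᶠ x in atTop, U x ≤ V (x + s')) :
    ¬∀ s, (∀ x, U x ≤ V (x + s)) → ∀ x, U x < V (x + s) := by
  intro hstrict
  set S := {s | ∀ x, U x ≤ V (x + s)}
  have hne : S.Nonempty := exists_le_translate hJ hg hc hst hU hV hsub hsup hVbot hU0.2 htail₀
  have hbdd : BddAbove S := by
    obtain ⟨Y, hY⟩ := eventually_atTop.1 (hVtop.eventually_lt_const hU0.1)
    refine ⟨Y, fun s hs => le_of_not_gt fun hYs => ?_⟩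
    exact (hs 0).not_gt (hY _ (by linarith))
  have hclosed : IsClosed S := by
    simp only [S, ofPred_forall]
    exact isClosed_iInter fun x => isClosed_le continuous_const (hVc.comp (continuous_const_add x))
  have hmem : sSup S ∈ S := hclosed.csSup_mem hne hbdd
  obtain ⟨s', hs', hs'tail⟩ := htail _ hmem
  obtain ⟨t, ht, htS⟩ := exists_gt_le_translate hJ hg hc hst hU hV hUc hVc hsub hsup hVbot
    (hstrict _ hmem) hs' hs'tail
  exact (le_csSup hbdd htS).not_gt ht

end Sliding

/-! ### The second primitive of a nonlocal operator with a double characteristic root -/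

/-- A nontrivial continuous weight `ρ ≥ 0` supported in `[-R, R]`. -/
structure IsWeight (ρ : ℝ → ℝ) (R : ℝ) : Prop where
  continuous : Continuous ρ
  nonneg : ∀ y, 0 ≤ ρ y
  radius_pos : 0 < R
  eq_zero : ∀ y, R ≤ |y| → ρ y = 0
  exists_pos : ∃ y > 0, 0 < ρ y

/-- The primitive of `Z` that vanishes at the origin. -/
def primitive (Z : ℝ → ℝ) (x : ℝ) : ℝ := ∫ t in (0 : ℝ)..x, Z t

/-- The primitive of `ξ ↦ ∫ ρ(y) (Z(ξ - y) - Z ξ + y Z'(ξ)) dy`. -/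
def flux (ρ Z : ℝ → ℝ) (ξ : ℝ) : ℝ :=
  ∫ y, ρ y * (primitive Z (ξ - y) - primitive Z ξ + y * Z ξ)

/-- The second primitive of `ξ ↦ ∫ ρ(y) (Z(ξ - y) - Z ξ + y Z'(ξ)) dy`. Up to the factor
`∫ ρ(y) y² / 2` it is a local average of `Z`. -/
def potential (ρ Z : ℝ → ℝ) (ξ : ℝ) : ℝ :=
  ∫ y, ρ y * (primitive (primitive Z) (ξ - y) - primitive (primitive Z) ξ + y * primitive Z ξ)

section Primitive

variable {Z : ℝ → ℝ}

lemma hasDerivAt_primitive (hZ : Continuous Z) (x : ℝ) : HasDerivAt (primitive Z) (Z x) x :=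
  intervalIntegral.integral_hasDerivAt_right (hZ.intervalIntegrable _ _)
    (hZ.stronglyMeasurableAtFilter _ _) hZ.continuousAt

lemma continuous_primitive (hZ : Continuous Z) : Continuous (primitive Z) :=
  continuous_iff_continuousAt.2 fun x => (hasDerivAt_primitive hZ x).continuousAt

lemma primitive_neg (Z : ℝ → ℝ) : primitive (-Z) = -primitive Z := by
  ext x
  simp [primitive]

lemma half_mul_sq_le_of_le_second_deriv {A A' A'' : ℝ → ℝ} (hA : ∀ x, HasDerivAt A (A' x) x)
    (hA' : ∀ x, HasDerivAt A' (A'' x) x) {b ξ y : ℝ}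
    (hb : ∀ s ∈ Icc (0 : ℝ) 1, b ≤ A'' (ξ - s * y)) :
    b * y ^ 2 / 2 ≤ A (ξ - y) - A ξ + y * A' ξ := by
  have hline : ∀ s, HasDerivAt (fun s => ξ - s * y) (-y) s := fun s => by
    simpa using ((hasDerivAt_id s).mul_const y).const_sub ξ
  have hφ' : ∀ s, HasDerivAt (fun s => y * A' ξ - y * A' (ξ - s * y) - b * y ^ 2 * s)
      (y ^ 2 * (A'' (ξ - s * y) - b)) s := fun s => by
    refine ((((hA' _).comp s (hline s)).const_mul y).const_sub (y * A' ξ) |>.sub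
      ((hasDerivAt_id s).const_mul (b * y ^ 2))).congr_deriv ?_
    ring
  have hφ : ∀ s, HasDerivAt (fun s => A (ξ - s * y) + s * (y * A' ξ) - b * y ^ 2 / 2 * s ^ 2)
      (y * A' ξ - y * A' (ξ - s * y) - b * y ^ 2 * s) s := fun s => by
    refine (((hA _).comp s (hline s)).add ((hasDerivAt_id s).mul_const (y * A' ξ)) |>.sub
      ((hasDerivAt_pow 2 s).const_mul (b * y ^ 2 / 2))).congr_deriv ?_
    push_cast
    ring
  have hφ'mono := monotoneOn_of_hasDerivWithinAt_nonneg (convex_Icc (0 : ℝ) 1)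
    (fun s _ => (hφ' s).continuousAt.continuousWithinAt) (fun s _ => (hφ' s).hasDerivWithinAt)
    fun s hs => mul_nonneg (sq_nonneg y) (sub_nonneg.2 (hb s (interior_subset hs)))
  have hφmono := monotoneOn_of_hasDerivWithinAt_nonneg (convex_Icc (0 : ℝ) 1)
    (fun s _ => (hφ s).continuousAt.continuousWithinAt) (fun s _ => (hφ s).hasDerivWithinAt)
    fun s hs => by
      simpa using hφ'mono (left_mem_Icc.2 zero_le_one) (interior_subset hs) (interior_subset hs).1
  have hends := hφmono (left_mem_Icc.2 zero_le_one) (right_mem_Icc.2 zero_le_one) zero_le_one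
  simp only [zero_mul, sub_zero, add_zero, one_mul, one_pow, mul_one, ne_eq, OfNat.ofNat_ne_zero,
    not_false_eq_true, zero_pow, mul_zero] at hends
  linarith

end Primitive

namespace IsWeight

variable {ρ Z : ℝ → ℝ} {R : ℝ}

lemma hasCompactSupport (hρ : IsWeight ρ R) : HasCompactSupport ρ := by
  refine .intro (isCompact_Icc (a := -R) (b := R)) fun y hy => hρ.eq_zero y ?_
  by_contra! hlt
  exact hy (abs_le.1 hlt.le)

lemma integrable_mul (hρ : IsWeight ρ R) {F : ℝ → ℝ} (hF : Continuous F) :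
    Integrable fun y => ρ y * F y :=
  (hρ.continuous.mul hF).integrable_of_hasCompactSupport hρ.hasCompactSupport.mul_right

lemma integral_mul_mono (hρ : IsWeight ρ R) {F G : ℝ → ℝ} (hF : Continuous F) (hG : Continuous G)
    (h : ∀ y, |y| ≤ R → F y ≤ G y) : ∫ y, ρ y * F y ≤ ∫ y, ρ y * G y := by
  refine integral_mono (hρ.integrable_mul hF) (hρ.integrable_mul hG) fun y => ?_
  rcases le_total |y| R with hy | hy
  · exact mul_le_mul_of_nonneg_left (h y hy) (hρ.nonneg y)
  · simp only [hρ.eq_zero y hy, zero_mul, le_refl]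

lemma integral_mul_pos (hρ : IsWeight ρ R) {F : ℝ → ℝ} (hF : Continuous F) (hF0 : ∀ y, 0 ≤ F y)
    (hFpos : ∀ y, 0 < y → 0 < F y) : 0 < ∫ y, ρ y * F y := by
  obtain ⟨y, hy, hρy⟩ := hρ.exists_pos
  exact integral_pos_of_integrable_nonneg_nonzero (x := y) (hρ.continuous.mul hF)
    (hρ.integrable_mul hF) (fun y => mul_nonneg (hρ.nonneg y) (hF0 y))
    (mul_pos hρy (hFpos y hy)).ne'

lemma hasDerivAt_integral (hρ : IsWeight ρ R) {G G' : ℝ → ℝ → ℝ}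
    (hG : ∀ x y, HasDerivAt (G · y) (G' x y) x) (hcont : ∀ x, Continuous (G x))
    (hcont' : Continuous fun p : ℝ × ℝ => G' p.1 p.2) (x₀ : ℝ) :
    HasDerivAt (fun x => ∫ y, ρ y * G x y) (∫ y, ρ y * G' x₀ y) x₀ := by
  obtain ⟨C, hC⟩ := ((isCompact_closedBall x₀ 1).prod
    (isCompact_Icc (a := -R) (b := R))).exists_bound_of_continuousOn hcont'.continuousOn
  refine (hasDerivAt_integral_of_dominated_loc_of_deriv_le (μ := volume)
    (F := fun x y => ρ y * G x y) (F' := fun x y => ρ y * G' x y) (bound := fun y => ρ y * C)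
    (Metric.ball_mem_nhds x₀ one_pos)
    (.of_forall fun x => (hρ.continuous.mul (hcont x)).aestronglyMeasurable)
    (hρ.integrable_mul (hcont x₀))
    (hρ.continuous.mul (hcont'.comp (.prodMk_right x₀))).aestronglyMeasurable
    (.of_forall fun y x hx => ?_) (hρ.integrable_mul continuous_const)
    (.of_forall fun y x _ => (hG x y).const_mul _)).2
  rcases le_total |y| R with hy | hy
  · rw [norm_mul, Real.norm_of_nonneg (hρ.nonneg y)]
    exact mul_le_mul_of_nonneg_left
      (hC (x, y) ⟨Metric.ball_subset_closedBall hx, abs_le.1 hy⟩) (hρ.nonneg y)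
  · simp only [hρ.eq_zero y hy, zero_mul, norm_zero, le_refl]

lemma hasDerivAt_potential (hρ : IsWeight ρ R) (hZ : Continuous Z) (x : ℝ) :
    HasDerivAt (potential ρ Z) (flux ρ Z x) x := by
  have hc₁ := continuous_primitive hZ
  have hc₂ := continuous_primitive hc₁
  refine hρ.hasDerivAt_integral
    (G := fun x y =>
      primitive (primitive Z) (x - y) - primitive (primitive Z) x + y * primitive Z x)
    (G' := fun x y => primitive Z (x - y) - primitive Z x + y * Z x)
    (fun x y => ?_) (fun x => by fun_prop) (by fun_prop) x
  exact ((HasDerivAt.comp_sub_const x y (hasDerivAt_primitive hc₁ (x - y))).sub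
    (hasDerivAt_primitive hc₁ x)).add ((hasDerivAt_primitive hZ x).const_mul y)

lemma flux_eq (hρ : IsWeight ρ R) (hZ : Continuous Z) (x : ℝ) : flux ρ Z x =
    kernelAvg ρ (primitive Z) x - (∫ y, ρ y) * primitive Z x + (∫ y, ρ y * y) * Z x := by
  have hc := continuous_primitive hZ
  have hint₁ : Integrable fun y => ρ y * primitive Z (x - y) := hρ.integrable_mul (by fun_prop)
  have hint₂ : Integrable fun y => ρ y * primitive Z x := hρ.integrable_mul (by fun_prop)
  have hint₃ : Integrable fun y => ρ y * y * Z x := (hρ.integrable_mul continuous_id).mul_const _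
  have hint₁₂ : Integrable fun y => ρ y * primitive Z (x - y) - ρ y * primitive Z x :=
    hint₁.sub hint₂
  simp only [flux, kernelAvg, mul_add, mul_sub, ← mul_assoc]
  rw [integral_add hint₁₂ hint₃, integral_sub hint₁ hint₂, integral_mul_const,
    integral_mul_const]

lemma hasDerivAt_kernelAvg_primitive (hρ : IsWeight ρ R) (hZ : Continuous Z) (x : ℝ) :
    HasDerivAt (kernelAvg ρ (primitive Z)) (kernelAvg ρ Z x) x := by
  have hc := continuous_primitive hZ
  exact hρ.hasDerivAt_integral
    (fun x y => HasDerivAt.comp_sub_const x y (hasDerivAt_primitive hZ _))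
    (fun x => by fun_prop) (by fun_prop) x

lemma continuous_flux (hρ : IsWeight ρ R) (hZ : Continuous Z) : Continuous (flux ρ Z) := by
  have hc := continuous_primitive hZ
  have havg : Continuous (kernelAvg ρ (primitive Z)) :=
    continuous_iff_continuousAt.2 fun x => (hρ.hasDerivAt_kernelAvg_primitive hZ x).continuousAt
  rw [funext (hρ.flux_eq hZ)]
  fun_prop

/-- The first primitive of an equation `c Z' = (∫ ρ) Z - ρ * Z - r` whose characteristic function
has a double root at the origin, that is, with `c = ∫ ρ(y) y dy`. -/
lemma hasDerivAt_flux (hρ : IsWeight ρ R) (hZ : Continuous Z) {c r x : ℝ} (hc : c ≠ 0)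
    (hmoment : ∫ y, ρ y * y = c)
    (hd : HasDerivAt Z (((∫ y, ρ y) * Z x - kernelAvg ρ Z x - r) / c) x) :
    HasDerivAt (flux ρ Z) (-r) x := by
  rw [funext (hρ.flux_eq hZ), hmoment]
  refine (((hρ.hasDerivAt_kernelAvg_primitive hZ x).sub
    ((hasDerivAt_primitive hZ x).const_mul _)).add (hd.const_mul _)).congr_deriv ?_
  field_simp
  ring

lemma le_potential (hρ : IsWeight ρ R) (hZ : Continuous Z) {b ξ : ℝ}
    (hb : ∀ u ∈ Icc (ξ - R) (ξ + R), b ≤ Z u) :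
    b * ((∫ y, ρ y * y ^ 2) / 2) ≤ potential ρ Z ξ := by
  have hc₁ := continuous_primitive hZ
  have hc₂ := continuous_primitive hc₁
  calc b * ((∫ y, ρ y * y ^ 2) / 2) = ∫ y, ρ y * (b * y ^ 2 / 2) := by
        rw [mul_div_assoc', ← integral_const_mul, ← integral_div]
        congr 1 with y
        ring
    _ ≤ potential ρ Z ξ := by
        refine hρ.integral_mul_mono (by fun_prop) (by fun_prop) fun y hy =>
          half_mul_sq_le_of_le_second_deriv (hasDerivAt_primitive hc₁) (hasDerivAt_primitive hZ)
            fun s hs => hb _ ?_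
        have hsy : |s * y| ≤ R := by
          rw [abs_mul, abs_of_nonneg hs.1]
          exact (mul_le_of_le_one_left (abs_nonneg y) hs.2).trans hy
        constructor <;> linarith [abs_le.1 hsy]

lemma potential_neg (Z : ℝ → ℝ) (x : ℝ) : potential ρ (-Z) x = -potential ρ Z x := by
  simp only [potential, primitive_neg, Pi.neg_apply, ← integral_neg]
  congr 1 with y
  ring

lemma potential_le (hρ : IsWeight ρ R) (hZ : Continuous Z) {b ξ : ℝ}
    (hb : ∀ u ∈ Icc (ξ - R) (ξ + R), Z u ≤ b) :
    potential ρ Z ξ ≤ b * ((∫ y, ρ y * y ^ 2) / 2) := by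
  have h := hρ.le_potential hZ.neg (b := -b) (ξ := ξ) fun u hu => neg_le_neg (hb u hu)
  rw [potential_neg] at h
  linarith

/-- The one-sided analogue of `le_potential`, suited to functions that may drop abruptly. -/
lemma le_potential_of_nonneg (hρ : IsWeight ρ R) (hZ : Continuous Z) (hZ0 : ∀ u, 0 ≤ Z u)
    {b ξ : ℝ} (hb : ∀ u ∈ Icc (ξ - R) ξ, b ≤ Z u) :
    b * ((∫ y, ρ y * max y 0 ^ 2) / 2) ≤ potential ρ Z ξ := by
  have hc₁ := continuous_primitive hZ
  have hc₂ := continuous_primitive hc₁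
  have htaylor : ∀ {b y : ℝ}, (∀ s ∈ Icc (0 : ℝ) 1, b ≤ Z (ξ - s * y)) → b * y ^ 2 / 2 ≤
      primitive (primitive Z) (ξ - y) - primitive (primitive Z) ξ + y * primitive Z ξ :=
    half_mul_sq_le_of_le_second_deriv (hasDerivAt_primitive hc₁) (hasDerivAt_primitive hZ)
  calc b * ((∫ y, ρ y * max y 0 ^ 2) / 2) = ∫ y, ρ y * (b * max y 0 ^ 2 / 2) := by
        rw [mul_div_assoc', ← integral_const_mul, ← integral_div]
        congr 1 with y
        ring
    _ ≤ potential ρ Z ξ := by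
        refine hρ.integral_mul_mono (by fun_prop) (by fun_prop) fun y hy => ?_
        rcases le_total y 0 with hy0 | hy0
        · simpa [max_eq_right hy0] using htaylor (b := 0) (y := y) fun s _ => hZ0 _
        · rw [max_eq_left hy0]
          refine htaylor fun s hs => hb _ ⟨?_, ?_⟩
          · linarith [mul_le_of_le_one_left hy0 hs.2, (abs_le.1 hy).2]
          · linarith [mul_nonneg hs.1 hy0]

end IsWeight

/-! ### Second order differential inequalities on a half-line -/

section SecondOrder

variable {F f Φ I r : ℝ → ℝ} {k C a b : ℝ}

lemma le_mul_exp_of_deriv_le {δ : ℝ} (hF : ContinuousOn F (Icc a b))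
    (hf : ∀ x ∈ Ico a b, HasDerivAt F (f x) x) (hle : ∀ x ∈ Ico a b, f x ≤ k * F x)
    (ha : F a ≤ δ) : ∀ x ∈ Icc a b, F x ≤ δ * Real.exp (k * (x - a)) := by
  simpa only [gronwallBound_ε0] using le_gronwallBound_of_liminf_deriv_right_le (ε := 0) hF
    (fun x hx _ hr => (hf x hx).hasDerivWithinAt.liminf_right_slope_le hr) ha
    (fun x hx => (hle x hx).trans_eq (add_zero _).symm)

/-- A solution of `Φ'' = -r` with `|r| ≤ ε² Φ` grows at most like `exp (ε x)`: the combination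
`Φ' + ε Φ` satisfies a first order inequality, and then so does `Φ`. -/
lemma le_mul_exp_of_abs_second_deriv_le {ε P D : ℝ} (hε : 0 < ε)
    (hΦ : ∀ x, HasDerivAt Φ (I x) x) (hIc : Continuous I)
    (hI : ∀ x ∈ Ico a b, HasDerivAt I (-r x) x) (hr : ∀ x ∈ Ico a b, |r x| ≤ ε ^ 2 * Φ x)
    (hP : I a + ε * Φ a ≤ P) (hP0 : 0 ≤ P) (hD : Φ a ≤ D) (hD0 : 0 ≤ D) :
    ∀ x ∈ Icc a b, Φ x ≤ (D + P / (2 * ε)) * Real.exp (ε * (x - a)) := by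
  have hΦc : Continuous Φ := continuous_iff_continuousAt.2 fun x => (hΦ x).continuousAt
  have hfirst : ∀ x ∈ Icc a b, I x + ε * Φ x ≤ P * Real.exp (ε * (x - a)) :=
    le_mul_exp_of_deriv_le (by fun_prop) (fun y hy => (hI y hy).add ((hΦ y).const_mul ε))
      (fun y hy => by linarith [neg_le_abs (r y), hr y hy]) hP
  set G : ℝ → ℝ := fun x => P / (2 * ε) * Real.exp (ε * (x - a)) with hG
  have hεG : ∀ x, ε * G x = P / 2 * Real.exp (ε * (x - a)) := fun x => by
    rw [hG]
    field
  have hG' : ∀ x, HasDerivAt G (ε * G x) x := fun x => by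
    refine ((((hasDerivAt_id x).sub_const a).const_mul ε).exp.const_mul _).congr_deriv ?_
    simp only [hG, id]
    ring
  have hGa : 0 ≤ G a := by positivity
  intro x hx
  have hsecond : Φ x - G x ≤ D * Real.exp (-ε * (x - a)) :=
    le_mul_exp_of_deriv_le (F := fun x => Φ x - G x) (by fun_prop)
      (fun y _ => (hΦ y).sub (hG' y))
      (fun y hy => by linarith [hfirst y (Ico_subset_Icc_self hy), hεG y])
      (by linarith) x hx
  have hdecay : D * Real.exp (-ε * (x - a)) ≤ D * Real.exp (ε * (x - a)) :=
    mul_le_mul_of_nonneg_left (Real.exp_le_exp.2 (by nlinarith [hx.1])) hD0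
  linarith

lemma tendsto_exp_neg_mul_atTop (hk : 0 < k) (C : ℝ) :
    Tendsto (fun x => C * Real.exp (-(k * x))) atTop (nhds 0) := by
  simpa using (Real.tendsto_exp_neg_atTop_nhds_zero.comp
    (tendsto_id.const_mul_atTop hk)).const_mul C

lemma abs_sub_le_of_abs_deriv_le_exp (hk : 0 < k) (hC : 0 ≤ C) (hab : a ≤ b)
    (hF : ContinuousOn F (Icc a b)) (hf : ∀ x ∈ Ico a b, HasDerivAt F (f x) x)
    (hle : ∀ x ∈ Ico a b, |f x| ≤ C * Real.exp (-(k * x))) :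
    |F b - F a| ≤ C / k * Real.exp (-(k * a)) := by
  have hexp : ∀ x, HasDerivAt (fun x => C / k * (Real.exp (-(k * a)) - Real.exp (-(k * x))))
      (C * Real.exp (-(k * x))) x := fun x => by
    refine ((((hasDerivAt_id x).const_mul k).fun_neg.exp.const_sub _).const_mul _).congr_deriv ?_
    simp only [id]
    field
  have h := image_norm_le_of_norm_deriv_right_le_deriv_boundary (f := fun x => F x - F a)
    (hF.sub continuousOn_const) (fun x hx => ((hf x hx).sub_const _).hasDerivWithinAt)
    (by simp) hexp hle (right_mem_Icc.2 hab)
  exact h.trans (mul_le_mul_of_nonneg_left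
    (sub_le_self _ (Real.exp_pos _).le) (div_nonneg hC hk.le))

lemma exists_tendsto_of_abs_deriv_le_exp (hk : 0 < k) (hC : 0 ≤ C) (hFc : Continuous F)
    (hf : ∀ x ≥ a, HasDerivAt F (f x) x) (hle : ∀ x ≥ a, |f x| ≤ C * Real.exp (-(k * x))) :
    ∃ L, Tendsto F atTop (nhds L) ∧ ∀ x ≥ a, |F x - L| ≤ C / k * Real.exp (-(k * x)) := by
  have hdist : ∀ x ≥ a, ∀ y ≥ x, dist (F y) (F x) ≤ C / k * Real.exp (-(k * x)) :=
    fun x hx y hxy => abs_sub_le_of_abs_deriv_le_exp hk hC hxy hFc.continuousOn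
      (fun t ht => hf t (hx.trans ht.1)) fun t ht => hle t (hx.trans ht.1)
  have hcauchy : CauchySeq F := Metric.cauchySeq_iff'.2 fun ε hε => by
    obtain ⟨N, hN, haN⟩ := (((tendsto_exp_neg_mul_atTop hk (C / k)).eventually
      (gt_mem_nhds hε)).and (eventually_ge_atTop a)).exists
    exact ⟨N, fun y hy => (hdist N haN y hy).trans_lt hN⟩
  obtain ⟨L, hL⟩ := cauchySeq_tendsto_of_complete hcauchy
  refine ⟨L, hL, fun x hx => ?_⟩
  rw [abs_sub_comm]
  exact le_of_tendsto (hL.sub_const (F x)).abs ((eventually_ge_atTop x).mono (hdist x hx))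

lemma nonneg_of_forall_deriv_le (hΦ : ∀ x, HasDerivAt Φ (I x) x) (hΦ0 : ∀ x, 0 ≤ Φ x)
    (hI : ∀ᶠ x in atTop, I x ≤ b) : 0 ≤ b := by
  by_contra! hb
  obtain ⟨X, hX⟩ := eventually_atTop.1 hI
  have hline : ∀ x ≥ X, Φ x ≤ Φ X + b * (x - X) := fun x hx => by
    refine image_le_of_deriv_right_le_deriv_boundary (a := X) (b := x)
      (B := fun x => Φ X + b * (x - X)) (B' := fun _ => b)
      (fun y _ => (hΦ y).continuousAt.continuousWithinAt) (fun y _ => (hΦ y).hasDerivWithinAt)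
      (by simp) (by fun_prop) (fun y _ => ?_) (fun y hy => hX y hy.1) (right_mem_Icc.2 hx)
    simpa using ((((hasDerivAt_id y).sub_const X).const_mul b).const_add (Φ X)).hasDerivWithinAt
  have hΦX : 0 ≤ (Φ X + 1) / -b := div_nonneg (by linarith [hΦ0 X]) (by linarith)
  have h := hline (X + (Φ X + 1) / -b) (by linarith)
  have hval : b * (X + (Φ X + 1) / -b - X) = -(Φ X + 1) := by
    have := hb.ne
    field
  linarith [hΦ0 (X + (Φ X + 1) / -b)]

/-- Integrating `Φ'' = -r` twice from infinity bounds `sup |Φ|` over a far half-line by one half of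
itself. -/
lemma exists_eq_zero_of_tendsto_zero (hk : 0 < k) (hC : 0 ≤ C) (hΦ : ∀ x, HasDerivAt Φ (I x) x)
    (hI : ∀ x, HasDerivAt I (-r x) x) (hr : ∀ x ≥ a, |r x| ≤ C * Real.exp (-(k * x)) * |Φ x|)
    (hΦ0 : Tendsto Φ atTop (nhds 0)) (hI0 : Tendsto I atTop (nhds 0)) : ∃ x, Φ x = 0 := by
  obtain ⟨X, hX⟩ := eventually_atTop.1 ((eventually_ge_atTop a).and
    ((hΦ0.eventually (Metric.ball_mem_nhds 0 one_pos)).and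
      ((tendsto_exp_neg_mul_atTop hk (C / k / k)).eventually (gt_mem_nhds one_half_pos))))
  have hbdd : BddAbove (range fun x : Ici X => |Φ x|) := by
    refine ⟨1, forall_mem_range.2 fun x => ?_⟩
    have hx := (hX x x.2).2.1
    rw [dist_zero_right] at hx
    exact hx.le
  set D := ⨆ x : Ici X, |Φ x|
  have hΦD : ∀ x ≥ X, |Φ x| ≤ D := fun x hx => le_ciSup hbdd ⟨x, hx⟩
  have hD : 0 ≤ D := (abs_nonneg _).trans (hΦD X le_rfl)
  have hIc : Continuous I := continuous_iff_continuousAt.2 fun x => (hI x).continuousAt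
  have hΦc : Continuous Φ := continuous_iff_continuousAt.2 fun x => (hΦ x).continuousAt
  obtain ⟨l, hl, hIl⟩ := exists_tendsto_of_abs_deriv_le_exp (a := X) (C := C * D) hk
    (by positivity) hIc (fun x _ => hI x) fun x hx => by
      rw [abs_neg, mul_right_comm]
      exact (hr x (hX x hx).1).trans (mul_le_mul_of_nonneg_left (hΦD x hx) (by positivity))
  rw [tendsto_nhds_unique hl hI0] at hIl
  obtain ⟨l', hl', hΦl⟩ := exists_tendsto_of_abs_deriv_le_exp (a := X) (C := C * D / k) hk
    (by positivity) hΦc (fun x _ => hΦ x) fun x hx => by simpa using hIl x hx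
  rw [tendsto_nhds_unique hl' hΦ0] at hΦl
  have hhalf : ∀ x ≥ X, |Φ x| ≤ D / 2 := fun x hx => by
    have h := hΦl x hx
    rw [sub_zero] at h
    refine h.trans ?_
    calc C * D / k / k * Real.exp (-(k * x)) = D * (C / k / k * Real.exp (-(k * x))) := by ring
      _ ≤ D * (1 / 2) := mul_le_mul_of_nonneg_left (hX x hx).2.2.le hD
      _ = D / 2 := by ring
  have hDle : D ≤ D / 2 := ciSup_le fun x => hhalf x x.2
  exact ⟨X, abs_nonpos_iff.1 ((hΦD X le_rfl).trans (by linarith))⟩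

/-- The variation of `I = Φ'` is controlled through `|r| ≤ C Φ² exp (-4 ε x)` once the growth rate
of `Φ` is known to be at most `ε`. -/
lemma abs_deriv_sub_le {ε P D : ℝ} (hε : 0 < ε) (hC : 0 ≤ C) (hΦ : ∀ x, HasDerivAt Φ (I x) x)
    (hIc : Continuous I) (hI : ∀ x ∈ Ico a b, HasDerivAt I (-r x) x) (hΦ0 : ∀ x, 0 ≤ Φ x)
    (hr : ∀ x ∈ Ico a b, |r x| ≤ ε ^ 2 * Φ x)
    (hr' : ∀ x ∈ Ico a b, |r x| ≤ C * Φ x ^ 2 * Real.exp (-(4 * ε * x)))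
    (hP : I a + ε * Φ a ≤ P) (hP0 : 0 ≤ P) (hD : Φ a ≤ D) {ξ : ℝ} (haξ : a ≤ ξ) (hξb : ξ ≤ b) :
    |I b - I ξ| ≤ C * (D + P / (2 * ε)) ^ 2 * Real.exp (-(2 * ε * a)) / (2 * ε) *
      Real.exp (-(2 * ε * ξ)) := by
  have hgrowth := le_mul_exp_of_abs_second_deriv_le hε hΦ hIc hI hr hP hP0 hD ((hΦ0 a).trans hD)
  refine abs_sub_le_of_abs_deriv_le_exp (by positivity) (by positivity) hξb hIc.continuousOn
    (fun x hx => hI x ⟨haξ.trans hx.1, hx.2⟩) fun x hx => ?_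
  have hx' : x ∈ Ico a b := ⟨haξ.trans hx.1, hx.2⟩
  rw [abs_neg]
  calc |r x| ≤ C * Φ x ^ 2 * Real.exp (-(4 * ε * x)) := hr' x hx'
    _ ≤ C * ((D + P / (2 * ε)) * Real.exp (ε * (x - a))) ^ 2 * Real.exp (-(4 * ε * x)) := by
        have := hΦ0 x
        have := hgrowth x (Ico_subset_Icc_self hx')
        gcongr
    _ = C * (D + P / (2 * ε)) ^ 2 * Real.exp (-(2 * ε * a)) * Real.exp (-(2 * ε * x)) := by
        have hexp : Real.exp (ε * (x - a)) ^ 2 * Real.exp (-(4 * ε * x)) =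
            Real.exp (-(2 * ε * a)) * Real.exp (-(2 * ε * x)) := by
          rw [← Real.exp_nat_mul, ← Real.exp_add, ← Real.exp_add]
          congr 1
          push_cast
          ring
        linear_combination C * (D + P / (2 * ε)) ^ 2 * hexp

lemma exists_pos_tendsto_of_abs_deriv_le_exp {k' C' : ℝ} (hk : 0 < k) (hk' : 0 < k')
    (hC : 0 ≤ C) (hC' : 0 ≤ C') (hΦ : ∀ x, HasDerivAt Φ (I x) x)
    (hI : ∀ x, HasDerivAt I (-r x) x) (hΦ0 : ∀ x, 0 < Φ x)
    (hr : ∀ x ≥ a, |r x| ≤ C * Φ x ^ 2 * Real.exp (-(k * x)))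
    (hIle : ∀ x ≥ a, |I x| ≤ C' * Real.exp (-(k' * x))) : ∃ L > 0, Tendsto Φ atTop (nhds L) := by
  have hΦc : Continuous Φ := continuous_iff_continuousAt.2 fun x => (hΦ x).continuousAt
  obtain ⟨L, hL, -⟩ := exists_tendsto_of_abs_deriv_le_exp hk' hC' hΦc (fun x _ => hΦ x) hIle
  refine ⟨L, (ge_of_tendsto' hL fun x => (hΦ0 x).le).lt_of_ne' ?_, hL⟩
  rintro rfl
  obtain ⟨X, hX⟩ := eventually_atTop.1
    ((eventually_ge_atTop a).and (hL.eventually (gt_mem_nhds one_pos)))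
  have hI0 : Tendsto I atTop (nhds 0) := squeeze_zero_norm'
    ((eventually_ge_atTop a).mono hIle) (tendsto_exp_neg_mul_atTop hk' C')
  have hrlin : ∀ x ≥ X, |r x| ≤ C * Real.exp (-(k * x)) * |Φ x| := fun x hx => by
    obtain ⟨hax, hx1⟩ := hX x hx
    have h0 := hΦ0 x
    calc |r x| ≤ C * Real.exp (-(k * x)) * (Φ x * Φ x) := (hr x hax).trans_eq (by ring)
      _ ≤ C * Real.exp (-(k * x)) * |Φ x| := by
        rw [abs_of_pos h0]
        gcongr
        exact mul_le_of_le_one_left h0.le hx1.le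
  obtain ⟨x, hx⟩ := exists_eq_zero_of_tendsto_zero hk hC hΦ hI hrlin hL hI0
  exact (hΦ0 x).ne' hx

end SecondOrder

/-! ### Solutions of the weighted equation near infinity -/

namespace IsWeight

variable {ρ Z : ℝ → ℝ} {R : ℝ}

lemma integral_pos (hρ : IsWeight ρ R) : 0 < ∫ y, ρ y := by
  simpa using hρ.integral_mul_pos (F := 1) continuous_const (fun _ => zero_le_one)
    fun _ _ => one_pos

lemma integral_mul_sq_pos (hρ : IsWeight ρ R) : 0 < (∫ y, ρ y * y ^ 2) / 2 :=
  half_pos (hρ.integral_mul_pos (by fun_prop) (fun y => sq_nonneg y) fun y hy => pow_pos hy 2)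

lemma kernelAvg_le (hρ : IsWeight ρ R) (hZ : Continuous Z) {b ξ : ℝ}
    (hb : ∀ u ∈ Icc (ξ - R) (ξ + R), Z u ≤ b) : kernelAvg ρ Z ξ ≤ b * ∫ y, ρ y := by
  rw [← integral_const_mul]
  simp only [mul_comm b]
  refine hρ.integral_mul_mono (by fun_prop) continuous_const fun y hy => hb _ ?_
  constructor <;> linarith [abs_le.1 hy]

lemma kernelAvg_neg (Z : ℝ → ℝ) (x : ℝ) : kernelAvg ρ (-Z) x = -kernelAvg ρ Z x := by
  simp only [kernelAvg, Pi.neg_apply, mul_neg, integral_neg]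

lemma le_kernelAvg (hρ : IsWeight ρ R) (hZ : Continuous Z) {b ξ : ℝ}
    (hb : ∀ u ∈ Icc (ξ - R) (ξ + R), b ≤ Z u) : b * ∫ y, ρ y ≤ kernelAvg ρ Z ξ := by
  have h := hρ.kernelAvg_le hZ.neg (b := -b) (ξ := ξ) fun u hu => neg_le_neg (hb u hu)
  rw [kernelAvg_neg] at h
  linarith

lemma flux_le (hρ : IsWeight ρ R) (hZ : Continuous Z) (hZ0 : ∀ u, 0 ≤ Z u) {b ξ : ℝ}
    (hb : ∀ u ∈ Icc ξ (ξ + R), Z u ≤ b) : flux ρ Z ξ ≤ b * ∫ y, ρ y * |y| := by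
  have hc := continuous_primitive hZ
  have hmono : Monotone (primitive Z) :=
    monotone_of_hasDerivAt_nonneg (hasDerivAt_primitive hZ) hZ0
  have hb0 : Z ξ ≤ b := hb ξ ⟨le_rfl, le_add_of_nonneg_right hρ.radius_pos.le⟩
  rw [← integral_const_mul]
  simp only [mul_left_comm b]
  refine hρ.integral_mul_mono (by fun_prop) (by fun_prop) fun y hy => ?_
  rcases le_total 0 y with hy0 | hy0
  · rw [abs_of_nonneg hy0]
    linarith [hmono (sub_le_self ξ hy0), mul_le_mul_of_nonneg_left hb0 hy0]
  · rw [abs_of_nonpos hy0]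
    rw [abs_of_nonpos hy0] at hy
    have hslope : primitive Z (ξ - y) - primitive Z ξ ≤ b * (ξ - y - ξ) :=
      (convex_Icc ξ (ξ + R)).image_sub_le_mul_sub_of_deriv_le hc.continuousOn
        (fun x _ => (hasDerivAt_primitive hZ x).differentiableAt.differentiableWithinAt)
        (fun x hx => (hasDerivAt_primitive hZ x).deriv.trans_le (hb x (interior_subset hx)))
        ξ ⟨le_rfl, by linarith [hρ.radius_pos]⟩ (ξ - y) ⟨by linarith, by linarith⟩ (by linarith)
    linarith [mul_nonpos_of_nonpos_of_nonneg hy0 (hZ0 ξ)]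

end IsWeight

lemma tendsto_of_local_bounds {Z P : ℝ → ℝ} {R σ B : ℝ} (hσ : 0 ≤ σ)
    (hZ : Tendsto Z atTop (nhds B))
    (hle : ∀ b x, (∀ u ∈ Icc (x - R) (x + R), Z u ≤ b) → P x ≤ b * σ)
    (hge : ∀ b x, (∀ u ∈ Icc (x - R) (x + R), b ≤ Z u) → b * σ ≤ P x) :
    Tendsto P atTop (nhds (B * σ)) := by
  refine Metric.tendsto_atTop.2 fun ε hε => ?_
  obtain ⟨X, hX⟩ := Metric.tendsto_atTop.1 hZ (ε / (σ + 1)) (by positivity)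
  refine ⟨X + R, fun x hx => ?_⟩
  have hwin : ∀ u ∈ Icc (x - R) (x + R), |Z u - B| < ε / (σ + 1) :=
    fun u hu => hX u (by linarith [hu.1])
  have hup := hle (B + ε / (σ + 1)) x fun u hu => by linarith [(abs_lt.1 (hwin u hu)).2]
  have hdown := hge (B - ε / (σ + 1)) x fun u hu => by linarith [(abs_lt.1 (hwin u hu)).1]
  have hsmall : ε / (σ + 1) * σ < ε := by
    rw [div_mul_eq_mul_div, div_lt_iff₀ (by positivity)]
    linarith
  rw [Real.dist_eq, abs_lt]
  constructor <;> linarith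

namespace IsWeight

variable {ρ Z r : ℝ → ℝ} {R c : ℝ}

lemma tendsto_potential (hρ : IsWeight ρ R) (hZ : Continuous Z) {B : ℝ}
    (h : Tendsto Z atTop (nhds B)) :
    Tendsto (potential ρ Z) atTop (nhds (B * ((∫ y, ρ y * y ^ 2) / 2))) :=
  tendsto_of_local_bounds hρ.integral_mul_sq_pos.le h (fun _ _ => hρ.potential_le hZ)
    fun _ _ => hρ.le_potential hZ

lemma tendsto_kernelAvg (hρ : IsWeight ρ R) (hZ : Continuous Z) {B : ℝ}
    (h : Tendsto Z atTop (nhds B)) : Tendsto (kernelAvg ρ Z) atTop (nhds (B * ∫ y, ρ y)) :=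
  tendsto_of_local_bounds hρ.integral_pos.le h (fun _ _ => hρ.kernelAvg_le hZ)
    fun _ _ => hρ.le_kernelAvg hZ

/-- A solution that is close to an upper bound at `ξ` stays close to it on bounded intervals to
the right of `ξ`. -/
lemma sub_mul_exp_le (hρ : IsWeight ρ R) (hZ : Continuous Z) (hc : 0 < c) {b e δ ξ : ℝ}
    (hb : ∀ x ≥ ξ - R, Z x ≤ b) (hr : ∀ x ≥ ξ, r x ≤ e * ∫ y, ρ y)
    (hd : ∀ x ≥ ξ, HasDerivAt Z (((∫ y, ρ y) * Z x - kernelAvg ρ Z x - r x) / c) x)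
    (hξ : b + e - Z ξ ≤ δ) {x : ℝ} (hx : ξ ≤ x) :
    b + e - δ * Real.exp ((∫ y, ρ y) / c * (x - ξ)) ≤ Z x := by
  have h := le_mul_exp_of_deriv_le (F := fun x => b + e - Z x) (k := (∫ y, ρ y) / c) (by fun_prop)
    (fun y hy => (hd y hy.1).const_sub (b + e)) (fun y hy => ?_) hξ x (right_mem_Icc.2 hx)
  · linarith
  · have havg := hρ.kernelAvg_le hZ (b := b) (ξ := y) fun u hu => hb u (by linarith [hu.1, hy.1])
    rw [← neg_div, div_mul_eq_mul_div]
    gcongr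
    linarith [hr y hy.1]

lemma limsup_mul_le (hρ : IsWeight ρ R) (hZ : Continuous Z) (hc : 0 < c)
    (hr : Tendsto r atTop (nhds 0))
    (hd : ∀ᶠ x in atTop, HasDerivAt Z (((∫ y, ρ y) * Z x - kernelAvg ρ Z x - r x) / c) x)
    (hle : IsBoundedUnder (· ≤ ·) atTop Z) (hge : IsBoundedUnder (· ≥ ·) atTop Z) {L : ℝ}
    (hL : Tendsto (potential ρ Z) atTop (nhds L)) :
    limsup Z atTop * ((∫ y, ρ y * y ^ 2) / 2) ≤ L := by
  set M := limsup Z atTop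
  set σ := (∫ y, ρ y * y ^ 2) / 2
  set E := Real.exp ((∫ y, ρ y) / c * (2 * R))
  have hR := hρ.radius_pos
  have ha := hρ.integral_pos
  have hnear : ∀ e > 0, (M + e + e - 3 * e * E) * σ ≤ L := fun e he => by
    obtain ⟨X, hX⟩ := eventually_atTop.1 (hd.and
      ((eventually_lt_of_limsup_lt (lt_add_of_pos_right M he) hle).and
        (hr.eventually (gt_mem_nhds (mul_pos he ha)))))
    refine ge_of_tendsto_of_frequently
      (hL.comp (tendsto_atTop_add_const_right _ R tendsto_id)) ?_
    refine ((frequently_lt_of_lt_limsup hge.isCoboundedUnder_le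
      (sub_lt_self M he)).and_eventually (eventually_ge_atTop (X + R))).mono ?_
    rintro ξ ⟨hMξ, hξ⟩
    refine hρ.le_potential hZ fun u hu => ?_
    simp only [id, add_sub_cancel_right] at hu
    refine le_trans ?_ (hρ.sub_mul_exp_le hZ hc (fun x hx => (hX x (by linarith)).2.1.le)
      (fun x hx => (hX x (by linarith)).2.2.le) (fun x hx => (hX x (by linarith)).1)
      (show M + e + e - Z ξ ≤ 3 * e by linarith) hu.1)
    have hE : Real.exp ((∫ y, ρ y) / c * (u - ξ)) ≤ E := by
      refine Real.exp_le_exp.2 (mul_le_mul_of_nonneg_left ?_ (div_pos ha hc).le)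
      linarith [hu.2]
    gcongr
  have hcont : ContinuousWithinAt (fun e => (M + e + e - 3 * e * E) * σ) (Ioi 0) 0 := by fun_prop
  simpa using le_of_tendsto hcont (eventually_mem_nhdsWithin.mono hnear)

lemma tendsto_of_tendsto_potential (hρ : IsWeight ρ R) (hZ : Continuous Z) (hc : 0 < c)
    (hr : Tendsto r atTop (nhds 0))
    (hd : ∀ᶠ x in atTop, HasDerivAt Z (((∫ y, ρ y) * Z x - kernelAvg ρ Z x - r x) / c) x)
    (hle : IsBoundedUnder (· ≤ ·) atTop Z) (hge : IsBoundedUnder (· ≥ ·) atTop Z) {L : ℝ}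
    (hL : Tendsto (potential ρ Z) atTop (nhds L)) :
    Tendsto Z atTop (nhds (L / ((∫ y, ρ y * y ^ 2) / 2))) := by
  have hσ := hρ.integral_mul_sq_pos
  have hdneg : ∀ᶠ x in atTop, HasDerivAt (-Z)
      (((∫ y, ρ y) * (-Z) x - kernelAvg ρ (-Z) x - (-r) x) / c) x := hd.mono fun x hx => by
    refine hx.neg.congr_deriv ?_
    simp only [kernelAvg_neg, Pi.neg_apply]
    ring
  have hLneg : Tendsto (potential ρ (-Z)) atTop (nhds (-L)) :=
    hL.neg.congr fun x => (potential_neg Z x).symm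
  have hle' : IsBoundedUnder (· ≤ ·) atTop (-Z) := isBoundedUnder_le_neg.2 hge
  have hge' : IsBoundedUnder (· ≥ ·) atTop (-Z) := isBoundedUnder_ge_neg.2 hle
  have hup := hρ.limsup_mul_le hZ hc hr hd hle hge hL
  have hdown := hρ.limsup_mul_le hZ.neg hc (neg_zero (G := ℝ) ▸ hr.neg) hdneg hle' hge' hLneg
  refine tendsto_order.2 ⟨fun b hb => ?_, fun b hb => ?_⟩
  · refine (eventually_lt_of_limsup_lt (b := -b) ?_ hle').mono fun x hx => neg_lt_neg_iff.1 hx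
    rw [← le_div_iff₀ hσ, neg_div] at hdown
    linarith
  · exact eventually_lt_of_limsup_lt (((le_div_iff₀ hσ).2 hup).trans_lt hb) hle

/-- A positive source makes the nonnegative potential of `Z` strictly concave near infinity, hence
increasing, so that it cannot tend to zero. -/
lemma not_tendsto_zero (hρ : IsWeight ρ R) (hZ : Continuous Z) (hc : c ≠ 0)
    (hmoment : ∫ y, ρ y * y = c) (hZ0 : ∀ x, 0 ≤ Z x)
    (hd : ∀ᶠ x in atTop, HasDerivAt Z (((∫ y, ρ y) * Z x - kernelAvg ρ Z x - r x) / c) x)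
    (hr : ∀ᶠ x in atTop, 0 < r x) : ¬Tendsto Z atTop (nhds 0) := by
  intro hlim
  obtain ⟨X, hX⟩ := eventually_atTop.1 (hd.and hr)
  have hpot0 : ∀ x, 0 ≤ potential ρ Z x := fun x => by
    simpa using hρ.le_potential hZ (b := 0) (ξ := x) fun u _ => hZ0 u
  have hflux : ∀ x ≥ X, HasDerivAt (flux ρ Z) (-r x) x :=
    fun x hx => hρ.hasDerivAt_flux hZ hc hmoment (hX x hx).1
  have hanti : StrictAntiOn (flux ρ Z) (Ici X) :=
    strictAntiOn_of_hasDerivWithinAt_neg (convex_Ici X) (hρ.continuous_flux hZ).continuousOn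
      (fun x hx => (hflux x (interior_subset hx)).hasDerivWithinAt)
      fun x hx => neg_neg_of_pos (hX x (interior_subset hx)).2
  have hfluxpos : ∀ x ≥ X, 0 < flux ρ Z x := fun x hx => by
    have hx1 : X ≤ x + 1 := by linarith
    refine (nonneg_of_forall_deriv_le (hρ.hasDerivAt_potential hZ) hpot0
      ((eventually_ge_atTop (x + 1)).mono fun y hy => ?_)).trans_lt
      (hanti hx hx1 (lt_add_one x))
    exact hanti.antitoneOn hx1 (hx1.trans hy) hy
  have hpot : StrictMonoOn (potential ρ Z) (Ici X) :=
    strictMonoOn_of_hasDerivWithinAt_pos (convex_Ici X)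
      (fun x _ => (hρ.hasDerivAt_potential hZ x).continuousAt.continuousWithinAt)
      (fun x _ => (hρ.hasDerivAt_potential hZ x).hasDerivWithinAt)
      fun x hx => hfluxpos x (interior_subset hx)
  have hX1 : X ≤ X + 1 := by linarith
  have hle : potential ρ Z (X + 1) ≤ 0 := by
    refine ge_of_tendsto (by simpa using hρ.tendsto_potential hZ hlim)
      ((eventually_ge_atTop (X + 1)).mono fun y hy => ?_)
    exact hpot.monotoneOn hX1 (hX1.trans hy) hy
  exact (hle.trans (hpot0 X)).not_gt (hpot self_mem_Ici hX1 (lt_add_one X))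

end IsWeight

/-! ### Exponentially weighted profiles at a double root -/

/-- The exponentially tilted kernel: it governs `ξ ↦ exp (lam * ξ) * U ξ` when `J` governs `U`. -/
def tilt (J : ℝ → ℝ) (lam y : ℝ) : ℝ := J y * Real.exp (lam * y)

/-- The exponentially weighted profile. It tends to `B` at `+∞` exactly when
`U ξ = B exp (-lam ξ) + o(exp (-lam ξ))`. -/
def amplitude (lam : ℝ) (U : ℝ → ℝ) (x : ℝ) : ℝ := Real.exp (lam * x) * U x

/-- The part of the reaction term beyond its linearization at `0`, in the weighted frame. -/
def remainder (lam γ : ℝ) (g U : ℝ → ℝ) (x : ℝ) : ℝ := Real.exp (lam * x) * (g (U x) - γ * U x)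

/-- The characteristic equation `∫ J(y) exp(lam y) dy - 1 + γ = c lam` has a double root at
`lam > 0`, and the tilted kernel is a weight supported in `[-R, R]`. -/
structure IsDoubleRoot (J : ℝ → ℝ) (lam c γ R : ℝ) : Prop where
  isWeight : IsWeight (tilt J lam) R
  root_pos : 0 < lam
  speed_pos : 0 < c
  integral_mul : ∫ y, tilt J lam y * y = c
  integral : ∫ y, tilt J lam y = c * lam + 1 - γ

/-- The constant of the Harnack type bound of the amplitude of a profile by its potential. -/
def harnackConst (J : ℝ → ℝ) (lam R : ℝ) : ℝ :=
  Real.exp (-(lam * R)) * ((∫ y, tilt J lam y * max y 0 ^ 2) / 2)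

section Amplitude

variable {J g U : ℝ → ℝ} {lam c γ C x : ℝ}

lemma continuous_amplitude (hU : Continuous U) : Continuous (amplitude lam U) := by
  unfold amplitude
  fun_prop

lemma amplitude_le_exp (hU : IsProfile U) (x : ℝ) : amplitude lam U x ≤ Real.exp (lam * x) :=
  mul_le_of_le_one_right (Real.exp_pos _).le (hU.le_one x)

lemma IsProfile.amplitude_nonneg (hU : IsProfile U) (x : ℝ) : 0 ≤ amplitude lam U x :=
  mul_nonneg (Real.exp_pos _).le (hU.nonneg x)

lemma eq_exp_neg_mul_amplitude (lam : ℝ) (U : ℝ → ℝ) (x : ℝ) :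
    U x = Real.exp (-(lam * x)) * amplitude lam U x := by
  rw [amplitude, ← mul_assoc, ← Real.exp_add, neg_add_cancel, Real.exp_zero, one_mul]

lemma tendsto_amplitude_translate {B : ℝ} (h : Tendsto (amplitude lam U) atTop (nhds B)) (s : ℝ) :
    Tendsto (amplitude lam fun x => U (x + s)) atTop (nhds (Real.exp (-(lam * s)) * B)) := by
  refine ((h.comp (tendsto_atTop_add_const_right _ s tendsto_id)).const_mul _).congr fun x => ?_
  simp only [amplitude, Function.comp_apply, id]
  rw [← mul_assoc, ← Real.exp_add]
  ring_nf

lemma eventually_le_of_amplitude_lt {V : ℝ → ℝ} {B B' : ℝ}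
    (hU : Tendsto (amplitude lam U) atTop (nhds B))
    (hV : Tendsto (amplitude lam V) atTop (nhds B')) (h : B < B') : ∀ᶠ x in atTop, U x ≤ V x :=
  (hU.eventually_lt hV h).mono fun _ hx => (lt_of_mul_lt_mul_left hx (Real.exp_pos _).le).le

lemma isLittleO_exp_iff_tendsto_amplitude {B : ℝ} :
    ((fun x => U x - B * Real.exp (-(lam * x))) =o[atTop] fun x => Real.exp (-(lam * x))) ↔
      Tendsto (amplitude lam U) atTop (nhds B) := by
  rw [isLittleO_iff_tendsto fun x h => absurd h (Real.exp_pos _).ne',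
    ← tendsto_sub_nhds_zero_iff (u := amplitude lam U)]
  refine tendsto_congr fun x => ?_
  have := (Real.exp_pos (-(lam * x))).ne'
  rw [eq_exp_neg_mul_amplitude lam U x]
  field

lemma kernelAvg_tilt_amplitude (J U : ℝ → ℝ) (lam x : ℝ) :
    kernelAvg (tilt J lam) (amplitude lam U) x = Real.exp (lam * x) * kernelAvg J U x := by
  simp only [kernelAvg, tilt, amplitude]
  rw [← integral_const_mul]
  congr 1 with y
  have hexp : Real.exp (lam * x) = Real.exp (lam * y) * Real.exp (lam * (x - y)) := by
    rw [← Real.exp_add]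
    ring_nf
  rw [hexp]
  ring

lemma hasDerivAt_amplitude (hc : c ≠ 0)
    (h : HasDerivAt U ((U x - kernelAvg J U x - g (U x)) / c) x) :
    HasDerivAt (amplitude lam U) (((c * lam + 1 - γ) * amplitude lam U x -
      kernelAvg (tilt J lam) (amplitude lam U) x - remainder lam γ g U x) / c) x := by
  refine ((((hasDerivAt_id x).const_mul lam).exp).mul h).congr_deriv ?_
  rw [kernelAvg_tilt_amplitude, amplitude, remainder, id]
  field

lemma abs_remainder_le (hU : IsProfile U) (hg : ∀ w ∈ Icc (0 : ℝ) 1, |g w - γ * w| ≤ C * w ^ 2)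
    (x : ℝ) : |remainder lam γ g U x| ≤ C * U x * amplitude lam U x := by
  rw [remainder, abs_mul, abs_of_pos (Real.exp_pos _)]
  calc Real.exp (lam * x) * |g (U x) - γ * U x| ≤ Real.exp (lam * x) * (C * U x ^ 2) := by
        gcongr
        exact hg _ ⟨hU.nonneg x, hU.le_one x⟩
    _ = C * U x * amplitude lam U x := by
        rw [amplitude]
        ring

end Amplitude

namespace IsDoubleRoot

variable {J g U : ℝ → ℝ} {lam c γ R C x : ℝ}

lemma hasDerivAt_amplitude (H : IsDoubleRoot J lam c γ R)
    (h : HasDerivAt U ((U x - kernelAvg J U x - g (U x)) / c) x) :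
    HasDerivAt (amplitude lam U) (((∫ y, tilt J lam y) * amplitude lam U x -
      kernelAvg (tilt J lam) (amplitude lam U) x - remainder lam γ g U x) / c) x := by
  rw [H.integral]
  exact _root_.hasDerivAt_amplitude H.speed_pos.ne' h

lemma hasDerivAt_flux (H : IsDoubleRoot J lam c γ R) (hU : Continuous U)
    (h : HasDerivAt U ((U x - kernelAvg J U x - g (U x)) / c) x) :
    HasDerivAt (flux (tilt J lam) (amplitude lam U)) (-remainder lam γ g U x) x :=
  H.isWeight.hasDerivAt_flux (continuous_amplitude hU) H.speed_pos.ne' H.integral_mul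
    (H.hasDerivAt_amplitude h)

lemma harnackConst_pos (H : IsDoubleRoot J lam c γ R) : 0 < harnackConst J lam R :=
  mul_pos (Real.exp_pos _) (half_pos (H.isWeight.integral_mul_pos (by fun_prop)
    (fun y => sq_nonneg _) fun y hy => pow_pos (hy.trans_le (le_max_left y 0)) 2))

lemma harnackConst_mul_amplitude_le (H : IsDoubleRoot J lam c γ R) (hU : IsProfile U)
    (hUc : Continuous U) (x : ℝ) :
    harnackConst J lam R * amplitude lam U x ≤ potential (tilt J lam) (amplitude lam U) x := by
  rw [harnackConst, mul_right_comm]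
  refine H.isWeight.le_potential_of_nonneg (continuous_amplitude hUc) hU.amplitude_nonneg
    fun u hu => ?_
  rw [amplitude, ← mul_assoc, ← Real.exp_add]
  refine mul_le_mul (Real.exp_le_exp.2 ?_) (hU.1 hu.2) (hU.nonneg x) (Real.exp_pos _).le
  linarith [mul_le_mul_of_nonneg_left hu.1 H.root_pos.le]

lemma potential_nonneg (H : IsDoubleRoot J lam c γ R) (hU : IsProfile U) (hUc : Continuous U)
    (x : ℝ) : 0 ≤ potential (tilt J lam) (amplitude lam U) x :=
  (mul_nonneg H.harnackConst_pos.le (hU.amplitude_nonneg x)).trans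
    (H.harnackConst_mul_amplitude_le hU hUc x)

lemma abs_remainder_le_mul_potential (H : IsDoubleRoot J lam c γ R) (hC : 0 < C)
    (hU : IsProfile U) (hUc : Continuous U)
    (hg : ∀ w ∈ Icc (0 : ℝ) 1, |g w - γ * w| ≤ C * w ^ 2) {ε : ℝ} (hε : 0 ≤ ε)
    (hUx : U x ≤ ε * harnackConst J lam R / C) :
    |remainder lam γ g U x| ≤ ε * potential (tilt J lam) (amplitude lam U) x := by
  calc |remainder lam γ g U x| ≤ C * U x * amplitude lam U x := abs_remainder_le hU hg x
    _ ≤ ε * harnackConst J lam R * amplitude lam U x := by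
        exact mul_le_mul_of_nonneg_right ((le_div_iff₀' hC).1 hUx) (hU.amplitude_nonneg x)
    _ = ε * (harnackConst J lam R * amplitude lam U x) := mul_assoc _ _ _
    _ ≤ ε * potential (tilt J lam) (amplitude lam U) x := by
        gcongr
        exact H.harnackConst_mul_amplitude_le hU hUc x

lemma abs_remainder_le_mul_sq (H : IsDoubleRoot J lam c γ R) (hC : 0 ≤ C) (hU : IsProfile U)
    (hUc : Continuous U) (hg : ∀ w ∈ Icc (0 : ℝ) 1, |g w - γ * w| ≤ C * w ^ 2) (x : ℝ) :
    |remainder lam γ g U x| ≤ C / harnackConst J lam R ^ 2 *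
      potential (tilt J lam) (amplitude lam U) x ^ 2 * Real.exp (-(lam * x)) := by
  have hκ := H.harnackConst_pos
  have hZ : amplitude lam U x ≤
      potential (tilt J lam) (amplitude lam U) x / harnackConst J lam R :=
    (le_div_iff₀' hκ).2 (H.harnackConst_mul_amplitude_le hU hUc x)
  calc |remainder lam γ g U x| ≤ C * U x * amplitude lam U x := abs_remainder_le hU hg x
    _ = C * amplitude lam U x ^ 2 * Real.exp (-(lam * x)) := by
        rw [eq_exp_neg_mul_amplitude lam U x]
        ring
    _ ≤ C * (potential (tilt J lam) (amplitude lam U) x / harnackConst J lam R) ^ 2 *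
          Real.exp (-(lam * x)) := by
        have := hU.amplitude_nonneg (lam := lam) x
        gcongr
    _ = _ := by
        rw [div_pow]
        ring

/-- The variation of the flux of a profile beyond `x₀` is controlled uniformly in the profile once
the profile is small beyond `x₀`: monotonicity bounds the data at `x₀`, and smallness makes the
growth rate of the potential less than half of `lam`. -/
lemma exists_abs_flux_sub_le (H : IsDoubleRoot J lam c γ R) (hC : 0 < C) :
    ∃ η > 0, ∀ x₀ : ℝ, ∃ C' ≥ 0, ∀ (g U : ℝ → ℝ) (m : ℝ), IsProfile U → Continuous U →
      (∀ w ∈ Icc (0 : ℝ) 1, |g w - γ * w| ≤ C * w ^ 2) →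
      (∀ x ∈ Ico x₀ m, HasDerivAt U ((U x - kernelAvg J U x - g (U x)) / c) x) →
      (∀ x ≥ x₀, U x ≤ η) → ∀ ξ ∈ Icc x₀ m,
        |flux (tilt J lam) (amplitude lam U) m - flux (tilt J lam) (amplitude lam U) ξ| ≤
          C' * Real.exp (-(lam / 2 * ξ)) := by
  have hκ := H.harnackConst_pos
  have hlam := H.root_pos
  have hσ := H.isWeight.integral_mul_sq_pos
  have hmom : 0 ≤ ∫ y, tilt J lam y * |y| :=
    integral_nonneg fun y => mul_nonneg (H.isWeight.nonneg y) (abs_nonneg y)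
  refine ⟨(lam / 4) ^ 2 * harnackConst J lam R / C, by positivity, fun x₀ => ?_⟩
  set E := Real.exp (lam * (x₀ + R))
  set D := E * ((∫ y, tilt J lam y * y ^ 2) / 2)
  set P := E * (∫ y, tilt J lam y * |y|) + lam / 4 * D
  refine ⟨C / harnackConst J lam R ^ 2 * (D + P / (2 * (lam / 4))) ^ 2 *
    Real.exp (-(2 * (lam / 4) * x₀)) / (2 * (lam / 4)), by positivity,
    fun g U m hU hUc hg hode hη ξ hξ => ?_⟩
  have hZc := continuous_amplitude (lam := lam) hUc
  have hZE : ∀ u ≤ x₀ + R, amplitude lam U u ≤ E := fun u hu =>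
    (amplitude_le_exp hU u).trans (Real.exp_le_exp.2 (mul_le_mul_of_nonneg_left hu hlam.le))
  have hpot : potential (tilt J lam) (amplitude lam U) x₀ ≤ D :=
    H.isWeight.potential_le hZc fun u hu => hZE u hu.2
  have hflux : flux (tilt J lam) (amplitude lam U) x₀ ≤ E * ∫ y, tilt J lam y * |y| :=
    H.isWeight.flux_le hZc hU.amplitude_nonneg fun u hu => hZE u hu.2
  have hrate : 2 * (lam / 4) * ξ = lam / 2 * ξ := by ring
  rw [← hrate]
  refine abs_deriv_sub_le (r := remainder lam γ g U) (by positivity) (by positivity)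
    (H.isWeight.hasDerivAt_potential hZc) (H.isWeight.continuous_flux hZc)
    (fun x hx => H.hasDerivAt_flux hUc (hode x hx)) (H.potential_nonneg hU hUc)
    (fun x hx => H.abs_remainder_le_mul_potential hC hU hUc hg (by positivity) (hη x hx.1))
    (fun x _ => ?_) (add_le_add hflux (by gcongr)) (by positivity) hpot hξ.1 hξ.2
  rw [mul_div_cancel₀ lam four_ne_zero]
  exact H.abs_remainder_le_mul_sq hC.le hU hUc hg x

lemma exists_abs_flux_le (H : IsDoubleRoot J lam c γ R) (hC : 0 < C) (hU : IsProfile U)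
    (hUc : Continuous U) (hU0 : Tendsto U atTop (nhds 0))
    (hg : ∀ w ∈ Icc (0 : ℝ) 1, |g w - γ * w| ≤ C * w ^ 2)
    (hode : ∀ x, HasDerivAt U ((U x - kernelAvg J U x - g (U x)) / c) x) {C₁ : ℝ}
    (hup : ∀ᶠ ξ in atTop,
      flux (tilt J lam) (amplitude lam U) ξ ≤ C₁ * Real.exp (-(lam / 2 * ξ))) :
    ∃ C₂ ≥ 0, ∃ a, ∀ ξ ≥ a,
      |flux (tilt J lam) (amplitude lam U) ξ| ≤ C₂ * Real.exp (-(lam / 2 * ξ)) := by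
  have hZc := continuous_amplitude (lam := lam) hUc
  obtain ⟨η, hη, hest⟩ := H.exists_abs_flux_sub_le hC
  obtain ⟨a, ha⟩ := eventually_atTop.1 (hup.and (hU0.eventually (gt_mem_nhds hη)))
  obtain ⟨C', hC', hest⟩ := hest a
  refine ⟨max C₁ C', hC'.trans (le_max_right _ _), a, fun ξ hξ => abs_le.2 ⟨?_, ?_⟩⟩
  · have hvar : ∀ m ≥ ξ, flux (tilt J lam) (amplitude lam U) m ≤
        flux (tilt J lam) (amplitude lam U) ξ + C' * Real.exp (-(lam / 2 * ξ)) := fun m hm => by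
      have h := hest g U m hU hUc hg (fun x _ => hode x) (fun x hx => (ha x hx).2.le) ξ ⟨hξ, hm⟩
      linarith [(abs_le.1 h).2]
    have hnonneg := nonneg_of_forall_deriv_le (H.isWeight.hasDerivAt_potential hZc)
      (H.potential_nonneg hU hUc) ((eventually_ge_atTop ξ).mono hvar)
    have := mul_le_mul_of_nonneg_right (le_max_right C₁ C') (Real.exp_pos (-(lam / 2 * ξ))).le
    linarith
  · exact (ha ξ hξ).1.trans (by gcongr; exact le_max_left _ _)

lemma exists_tendsto_amplitude (H : IsDoubleRoot J lam c γ R) (hC : 0 < C) (hU : IsProfile U)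
    (hUc : Continuous U) (hUpos : ∀ x, 0 < U x) (hU0 : Tendsto U atTop (nhds 0))
    (hg : ∀ w ∈ Icc (0 : ℝ) 1, |g w - γ * w| ≤ C * w ^ 2)
    (hode : ∀ x, HasDerivAt U ((U x - kernelAvg J U x - g (U x)) / c) x) {C₁ : ℝ}
    (hup : ∀ᶠ ξ in atTop,
      flux (tilt J lam) (amplitude lam U) ξ ≤ C₁ * Real.exp (-(lam / 2 * ξ))) :
    ∃ B > 0, Tendsto (amplitude lam U) atTop (nhds B) := by
  have hκ := H.harnackConst_pos
  have hlam := H.root_pos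
  have hZc := continuous_amplitude (lam := lam) hUc
  have hrem := H.abs_remainder_le_mul_sq hC.le hU hUc hg
  obtain ⟨C₂, hC₂, a, hflux⟩ := H.exists_abs_flux_le hC hU hUc hU0 hg hode hup
  obtain ⟨L, hL, hpot⟩ := exists_pos_tendsto_of_abs_deriv_le_exp (a := a) hlam (half_pos hlam)
    (div_nonneg hC.le (sq_nonneg (harnackConst J lam R))) hC₂
    (H.isWeight.hasDerivAt_potential hZc) (fun x => H.hasDerivAt_flux hUc (hode x))
    (fun x => (mul_pos hκ (mul_pos (Real.exp_pos _) (hUpos x))).trans_le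
      (H.harnackConst_mul_amplitude_le hU hUc x)) (fun x _ => hrem x) hflux
  have hrem0 : Tendsto (remainder lam γ g U) atTop (nhds 0) := by
    refine squeeze_zero_norm hrem ?_
    simpa using ((hpot.pow 2).const_mul (C / harnackConst J lam R ^ 2)).mul
      (tendsto_exp_neg_mul_atTop hlam 1)
  have hle : IsBoundedUnder (· ≤ ·) atTop (amplitude lam U) :=
    (hpot.div_const (harnackConst J lam R)).isBoundedUnder_le.mono_le
      (.of_forall fun x => (le_div_iff₀' hκ).2 (H.harnackConst_mul_amplitude_le hU hUc x))
  exact ⟨_, div_pos hL H.isWeight.integral_mul_sq_pos,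
    H.isWeight.tendsto_of_tendsto_potential hZc H.speed_pos hrem0
      (.of_forall fun x => H.hasDerivAt_amplitude (hode x)) hle
      (isBoundedUnder_of ⟨0, hU.amplitude_nonneg⟩) hpot⟩

end IsDoubleRoot

section FasterSpeed

lemma eq_zero_of_tendsto_of_tendsto_deriv {F f : ℝ → ℝ} {B d : ℝ}
    (hF : ∀ x, HasDerivAt F (f x) x) (hlim : Tendsto F atTop (nhds B))
    (hlim' : Tendsto f atTop (nhds d)) : d = 0 := by
  have hslope : ∀ x, ∃ ξ ∈ Ioo x (x + 1), f ξ = F (x + 1) - F x := fun x => by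
    simpa using exists_hasDerivAt_eq_slope F f (lt_add_one x)
      (fun y _ => (hF y).continuousAt.continuousWithinAt) fun y _ => hF y
  choose ξ hξ hfξ using hslope
  have hξtop : Tendsto ξ atTop atTop := tendsto_atTop_mono (fun x => (hξ x).1.le) tendsto_id
  have hdiff : Tendsto (fun x => F (x + 1) - F x) atTop (nhds (B - B)) :=
    (hlim.comp (tendsto_atTop_add_const_right _ 1 tendsto_id)).sub hlim
  rw [sub_self] at hdiff
  exact tendsto_nhds_unique (hlim'.comp hξtop) (hdiff.congr fun x => (hfξ x).symm)

lemma tendsto_remainder {g U : ℝ → ℝ} {lam γ B C : ℝ} (hU : IsProfile U)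
    (hg : ∀ w ∈ Icc (0 : ℝ) 1, |g w - γ * w| ≤ C * w ^ 2) (hU0 : Tendsto U atTop (nhds 0))
    (hlim : Tendsto (amplitude lam U) atTop (nhds B)) :
    Tendsto (remainder lam γ g U) atTop (nhds 0) :=
  squeeze_zero_norm (abs_remainder_le hU hg) (by simpa using (hU0.const_mul C).mul hlim)

lemma IsDoubleRoot.not_tendsto_amplitude_of_lt {J g U : ℝ → ℝ} {lam c s γ R B C : ℝ}
    (H : IsDoubleRoot J lam c γ R) (hcs : c < s) (hB : B ≠ 0) (hU : IsProfile U)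
    (hUc : Continuous U) (hU0 : Tendsto U atTop (nhds 0))
    (hg : ∀ w ∈ Icc (0 : ℝ) 1, |g w - γ * w| ≤ C * w ^ 2)
    (hode : ∀ x, HasDerivAt U ((U x - kernelAvg J U x - g (U x)) / s) x) :
    ¬Tendsto (amplitude lam U) atTop (nhds B) := by
  intro hlim
  have hs : s ≠ 0 := (H.speed_pos.trans hcs).ne'
  have hderiv := eq_zero_of_tendsto_of_tendsto_deriv
    (fun x => _root_.hasDerivAt_amplitude (lam := lam) (γ := γ) hs (hode x)) hlim
    ((((hlim.const_mul (s * lam + 1 - γ)).sub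
      (H.isWeight.tendsto_kernelAvg (continuous_amplitude hUc) hlim)).sub
      (tendsto_remainder hU hg hU0 hlim)).div_const s)
  rw [H.integral, div_eq_zero_iff, or_iff_left hs] at hderiv
  have hprod : (s - c) * lam * B = 0 := by linarith
  exact mul_ne_zero (mul_ne_zero (sub_pos.2 hcs).ne' H.root_pos.ne') hB hprod

end FasterSpeed

section FluxLimit

variable {ρ : ℝ → ℝ} {R : ℝ} {Z b : ℝ → ℝ}

lemma abs_primitive_le (hb : Continuous b) (hZb : ∀ t, |Z t| ≤ b t) (x : ℝ) :
    |primitive Z x| ≤ |primitive b x| := by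
  rw [← Real.norm_eq_abs (primitive Z x)]
  exact intervalIntegral.norm_integral_le_abs_of_norm_le (.of_forall hZb)
    (hb.intervalIntegrable 0 x)

lemma tendsto_primitive {Zs : ℕ → ℝ → ℝ} (hZs : ∀ n, Continuous (Zs n)) (hb : Continuous b)
    (hZb : ∀ n t, |Zs n t| ≤ b t) (hlim : ∀ t, Tendsto (fun n => Zs n t) atTop (nhds (Z t)))
    (x : ℝ) : Tendsto (fun n => primitive (Zs n) x) atTop (nhds (primitive Z x)) :=
  intervalIntegral.tendsto_integral_filter_of_dominated_convergence b
    (.of_forall fun n => (hZs n).aestronglyMeasurable)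
    (.of_forall fun n => .of_forall fun t _ => hZb n t) (hb.intervalIntegrable _ _)
    (.of_forall fun t _ => hlim t)

lemma IsWeight.tendsto_flux (hρ : IsWeight ρ R) {Zs : ℕ → ℝ → ℝ} (hZs : ∀ n, Continuous (Zs n))
    (hb : Continuous b) (hZb : ∀ n t, |Zs n t| ≤ b t)
    (hlim : ∀ t, Tendsto (fun n => Zs n t) atTop (nhds (Z t))) (x : ℝ) :
    Tendsto (fun n => flux ρ (Zs n) x) atTop (nhds (flux ρ Z x)) := by
  have hbp := continuous_primitive hb
  have hprim := tendsto_primitive hZs hb hZb hlim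
  refine tendsto_integral_of_dominated_convergence
    (fun y => ρ y * (|primitive b (x - y)| + |primitive b x| + |y| * b x)) (fun n => ?_)
    (hρ.integrable_mul (by fun_prop)) (fun n => .of_forall fun y => ?_)
    (.of_forall fun y => (((hprim _).sub (hprim x)).add ((hlim x).const_mul y)).const_mul (ρ y))
  · have hp := continuous_primitive (hZs n)
    exact (hρ.continuous.mul (by fun_prop)).aestronglyMeasurable
  · rw [norm_mul, Real.norm_of_nonneg (hρ.nonneg y)]
    refine mul_le_mul_of_nonneg_left ?_ (hρ.nonneg y)
    calc ‖primitive (Zs n) (x - y) - primitive (Zs n) x + y * Zs n x‖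
        ≤ |primitive (Zs n) (x - y)| + |primitive (Zs n) x| + |y| * |Zs n x| := by
          rw [← abs_mul]
          exact (abs_add_le _ _).trans (add_le_add_left (abs_sub _ _) _)
      _ ≤ |primitive b (x - y)| + |primitive b x| + |y| * b x :=
          add_le_add (add_le_add (abs_primitive_le hb (hZb n) _) (abs_primitive_le hb (hZb n) _))
            (mul_le_mul_of_nonneg_left (hZb n x) (abs_nonneg y))

end FluxLimit

/-! ### The linear speed -/

section LinearSpeed

variable {J : ℝ → ℝ}

lemma IsKernel.exists_isWeight (hJ : IsKernel J) : ∃ R, IsWeight J R := by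
  obtain ⟨r, hr⟩ := hJ.2.2.2.1.isCompact.isBounded.subset_closedBall 0
  refine ⟨max r 0 + 1, hJ.1, hJ.2.1, by positivity, fun y hy => image_eq_zero_of_notMem_tsupport
    fun hmem => ?_, hJ.exists_pos⟩
  have hyr : |y| ≤ r := mem_closedBall_zero_iff.1 (hr hmem)
  linarith [le_max_left r 0]

lemma IsKernel.integral_mul_self (hJ : IsKernel J) : ∫ y, J y * y = 0 := by
  have h := integral_neg_eq_self (fun y => J y * y) volume
  simp only [hJ.2.2.1, mul_neg, integral_neg] at h
  linarith

lemma IsKernel.one_le_integral_tilt (hJ : IsKernel J) (l : ℝ) : 1 ≤ ∫ y, tilt J l y := by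
  obtain ⟨R, hw⟩ := hJ.exists_isWeight
  calc (1 : ℝ) = ∫ y, J y * (l * y + 1) := by
        have hint : Integrable fun y => J y * y := hw.integrable_mul continuous_id
        simp only [mul_add, mul_left_comm _ l, mul_one]
        rw [integral_add (hint.const_mul l) hJ.isDensity.integrable, integral_const_mul,
          hJ.integral_mul_self, hJ.2.2.2.2, mul_zero, zero_add]
    _ ≤ ∫ y, tilt J l y := hw.integral_mul_mono (by fun_prop) (by fun_prop)
        fun y _ => Real.add_one_le_exp (l * y)

lemma IsKernel.c0star_mul_le (hJ : IsKernel J) {γ l : ℝ} (hγ : 0 ≤ γ) (hl : 0 < l) :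
    c0star J γ * l ≤ (∫ y, tilt J l y) + γ - 1 := by
  rw [← le_div_iff₀ hl]
  refine csInf_le ⟨0, ?_⟩ ⟨l, hl, rfl⟩
  rintro _ ⟨l', hl', rfl⟩
  exact div_nonneg (by linarith [show 1 ≤ ∫ x, J x * Real.exp (l' * x) from
    hJ.one_le_integral_tilt l']) (le_of_lt hl')

lemma IsWeight.hasDerivAt_integral_tilt {R : ℝ} (hw : IsWeight J R) (l : ℝ) :
    HasDerivAt (fun l => ∫ y, tilt J l y) (∫ y, tilt J l y * y) l := by
  simp only [tilt, mul_assoc]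
  refine hw.hasDerivAt_integral (G := fun l y => Real.exp (l * y))
    (G' := fun l y => Real.exp (l * y) * y) (fun l y => ?_) (fun l => by fun_prop) (by fun_prop) l
  simpa using ((hasDerivAt_id l).mul_const y).exp

lemma IsWeight.isWeight_tilt {R : ℝ} (hw : IsWeight J R) (l : ℝ) : IsWeight (tilt J l) R where
  continuous := by
    have := hw.continuous
    unfold tilt
    fun_prop
  nonneg y := mul_nonneg (hw.nonneg y) (Real.exp_pos _).le
  radius_pos := hw.radius_pos
  eq_zero y hy := by rw [tilt, hw.eq_zero y hy, zero_mul]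
  exists_pos := hw.exists_pos.imp fun y hy => ⟨hy.1, mul_pos hy.2 (Real.exp_pos _)⟩

/-- The characteristic function `l ↦ ∫ J(y) exp(l y) dy + γ - 1 - c₀* l` is nonnegative by the
definition of `c₀*`, so that its zeros are double. -/
lemma IsKernel.exists_isDoubleRoot (hJ : IsKernel J) {γ lam : ℝ} (hγ : 0 < γ) (hlam : 0 < lam)
    (hroot : (∫ y, tilt J lam y) - 1 + γ = c0star J γ * lam) :
    ∃ R, IsDoubleRoot J lam (c0star J γ) γ R := by
  obtain ⟨R, hw⟩ := hJ.exists_isWeight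
  have hmin : IsLocalMin (fun l => (∫ y, tilt J l y) - c0star J γ * l) lam := by
    filter_upwards [lt_mem_nhds hlam] with l hl
    linarith [hJ.c0star_mul_le hγ.le hl]
  have hderiv := hmin.hasDerivAt_eq_zero ((hw.hasDerivAt_integral_tilt lam).sub
    ((hasDerivAt_id lam).const_mul (c0star J γ)))
  exact ⟨R, hw.isWeight_tilt lam, hlam,
    pos_of_mul_pos_left (by linarith [hJ.one_le_integral_tilt lam]) hlam.le, by linarith,
    by linarith⟩

end LinearSpeed

/-! ### Smooth monostable nonlinearities -/

/-- A monostable nonlinearity of class `C²` on `[0, 1]` with linear growth rate `γ` at `0`. -/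
structure IsSmoothMonostable (g : ℝ → ℝ) (γ : ℝ) : Prop where
  contDiffOn : ContDiffOn ℝ 2 g (Icc 0 1)
  zero : g 0 = 0
  one : g 1 = 0
  derivWithin_zero : derivWithin g (Icc 0 1) 0 = γ
  derivWithin_one : derivWithin g (Icc 0 1) 1 < 0
  pos : ∀ w ∈ Ioo (0 : ℝ) 1, 0 < g w

namespace IsSmoothMonostable

variable {g g' : ℝ → ℝ} {γ M : ℝ}

lemma hasDerivWithinAt (hg : IsSmoothMonostable g γ) {w : ℝ} (hw : w ∈ Icc (0 : ℝ) 1) :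
    HasDerivWithinAt g (derivWithin g (Icc 0 1) w) (Icc 0 1) w :=
  (hg.contDiffOn.differentiableOn two_ne_zero w hw).hasDerivWithinAt

lemma contDiffOn_derivWithin (hg : IsSmoothMonostable g γ) :
    ContDiffOn ℝ 1 (derivWithin g (Icc 0 1)) (Icc 0 1) :=
  hg.contDiffOn.derivWithin (uniqueDiffOn_Icc zero_lt_one) (by norm_num)

lemma isMonostable (hg : IsSmoothMonostable g γ)
    (hM : ∀ w ∈ Icc (0 : ℝ) 1, |derivWithin g (Icc 0 1) w| ≤ M) : IsMonostable g (M + 2) where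
  one_lt := by linarith [(abs_nonneg _).trans (hM 0 (left_mem_Icc.2 zero_le_one))]
  zero := hg.zero
  one := hg.one
  pos := hg.pos
  continuousOn := hg.contDiffOn.continuousOn
  monotoneOn := by
    have hd : ∀ w ∈ Icc (0 : ℝ) 1, HasDerivWithinAt (fun w => (M + 2 - 1) * w + g w)
        ((M + 2 - 1) * 1 + derivWithin g (Icc 0 1) w) (Icc 0 1) w := fun w hw =>
      ((hasDerivWithinAt_id w _).const_mul _).add (hg.hasDerivWithinAt hw)
    refine monotoneOn_of_hasDerivWithinAt_nonneg (convex_Icc 0 1)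
      (fun w hw => (hd w hw).continuousWithinAt)
      (fun w hw => (hd w (interior_subset hw)).mono interior_subset) fun w hw => ?_
    linarith [(abs_le.1 (hM w (interior_subset hw))).1]

lemma exists_isStableAtOne (hg : IsSmoothMonostable g γ) : ∃ η β, IsStableAtOne g η β := by
  set d := derivWithin g (Icc 0 1) 1
  have hd : d < 0 := hg.derivWithin_one
  have hnear : ∀ᶠ w in nhdsWithin 1 (Icc 0 1), derivWithin g (Icc 0 1) w < d / 2 :=
    (hg.contDiffOn_derivWithin.continuousOn 1 (right_mem_Icc.2 zero_le_one)).eventually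
      (gt_mem_nhds (by linarith))
  obtain ⟨ε, hε, hball⟩ := Metric.mem_nhdsWithin_iff.1 hnear
  have hsub : Icc (1 - min (ε / 2) 1) 1 ⊆ Icc 0 1 :=
    Icc_subset_Icc_left (sub_nonneg.2 (min_le_right _ _))
  refine ⟨min (ε / 2) 1, -(d / 2), by positivity, by linarith, fun x y hy hyx hx => ?_⟩
  have hderiv : ∀ w ∈ Icc (1 - min (ε / 2) 1) 1, HasDerivWithinAt (fun w => d / 2 * w - g w)
      (d / 2 * 1 - derivWithin g (Icc 0 1) w) (Icc (1 - min (ε / 2) 1) 1) w := fun w hw =>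
    ((hasDerivWithinAt_id w _).const_mul _).sub ((hg.hasDerivWithinAt (hsub hw)).mono hsub)
  have hmono := monotoneOn_of_hasDerivWithinAt_nonneg (convex_Icc _ _)
    (fun w hw => (hderiv w hw).continuousWithinAt)
    (fun w hw => (hderiv w (interior_subset hw)).mono interior_subset) fun w hw => ?_
  · have := hmono ⟨hy, hyx.trans hx⟩ ⟨hy.trans hyx, hx⟩ hyx
    simp only at this
    linarith
  · have hw := interior_subset hw
    have hdist : dist w 1 < ε := by
      rw [Real.dist_eq, abs_lt]
      constructor <;> linarith [hw.1, hw.2, min_le_left (ε / 2) 1]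
    have hlt : derivWithin g (Icc 0 1) w < d / 2 := hball ⟨hdist, hsub hw⟩
    linarith

lemma exists_abs_sub_le (hg : IsSmoothMonostable g γ) : ∃ C > 0, ∀ u v, 0 ≤ u → u ≤ v → v ≤ 1 →
    |(g v - γ * v) - (g u - γ * u)| ≤ C * v * (v - u) := by
  obtain ⟨C, hC⟩ := hg.contDiffOn_derivWithin.exists_lipschitzOnWith one_ne_zero (convex_Icc 0 1)
    isCompact_Icc
  refine ⟨C + 1, by positivity, fun u v hu huv hv => ?_⟩
  have hsub : Icc u v ⊆ Icc 0 1 := Icc_subset_Icc hu hv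
  have hmean := (convex_Icc u v).norm_image_sub_le_of_norm_hasDerivWithin_le (C := C * v)
    (f := fun w => g w - γ * w) (f' := fun w => derivWithin g (Icc 0 1) w - γ * 1)
    (fun w hw => ((hg.hasDerivWithinAt (hsub hw)).mono hsub).sub
      ((hasDerivWithinAt_id w _).const_mul γ)) (fun w hw => ?_)
    (left_mem_Icc.2 huv) (right_mem_Icc.2 huv)
  · rw [Real.norm_eq_abs, Real.norm_eq_abs, abs_of_nonneg (sub_nonneg.2 huv)] at hmean
    refine hmean.trans ?_
    gcongr
    exacts [hu.trans huv, le_add_of_nonneg_right zero_le_one]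
  · have hlip := hC.norm_sub_le (hsub hw) (left_mem_Icc.2 zero_le_one)
    rw [hg.derivWithin_zero, sub_zero, Real.norm_of_nonneg (hu.trans hw.1)] at hlip
    rw [mul_one]
    exact hlip.trans (mul_le_mul_of_nonneg_left hw.2 C.2)

lemma exists_abs_sub_le_sq (hg : IsSmoothMonostable g γ) :
    ∃ C > 0, ∀ w ∈ Icc (0 : ℝ) 1, |g w - γ * w| ≤ C * w ^ 2 := by
  obtain ⟨C, hC, h⟩ := hg.exists_abs_sub_le
  refine ⟨C, hC, fun w hw => ?_⟩
  simpa [hg.zero, sq, mul_assoc] using h 0 w le_rfl hw.1 hw.2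

lemma exists_mul_sq_le_sub (hg : IsSmoothMonostable g γ) (hg' : IsSmoothMonostable g' γ)
    (h : iteratedDerivWithin 2 g (Icc 0 1) 0 < iteratedDerivWithin 2 g' (Icc 0 1) 0) :
    ∃ k > 0, ∀ᶠ w in nhdsWithin 0 (Icc 0 1), k * w ^ 2 ≤ g' w - g w := by
  have hmem : (0 : ℝ) ∈ Icc (0 : ℝ) 1 := left_mem_Icc.2 zero_le_one
  set δ := iteratedDerivWithin 2 g' (Icc 0 1) 0 - iteratedDerivWithin 2 g (Icc 0 1) 0
  have hδ : 0 < δ := sub_pos.2 h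
  have htaylor := (taylor_isLittleO (convex_Icc 0 1) hmem hg'.contDiffOn).sub
    (taylor_isLittleO (convex_Icc 0 1) hmem hg.contDiffOn)
  refine ⟨δ / 4, div_pos hδ four_pos, (htaylor.def (div_pos hδ four_pos)).mono fun w hw => ?_⟩
  have hexp : g' w - taylorWithinEval g' 2 (Icc 0 1) 0 w
      - (g w - taylorWithinEval g 2 (Icc 0 1) 0 w) = g' w - g w - δ / 2 * w ^ 2 := by
    simp only [taylorWithinEval_succ, taylor_within_zero_eval, hg.zero, hg'.zero,
      zero_add, iteratedDerivWithin_one, hg.derivWithin_zero, hg'.derivWithin_zero, δ]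
    norm_num
    ring
  rw [hexp, sub_zero, Real.norm_of_nonneg (sq_nonneg w)] at hw
  linarith [(abs_le.1 hw).1]

end IsSmoothMonostable

/-! ### Two waves of the same speed -/

section TwoFronts

variable {J g g' U V : ℝ → ℝ} {K c lam γ R C k B : ℝ}

lemma growthOp_lt_growthOp (hJ : IsDensity J) (hg : IsMonostable g K)
    (hlt : ∀ w ∈ Ioo (0 : ℝ) 1, g w < g' w) (hU : IsProfile U) (hV : IsProfile V) (h : U ≤ V)
    {x : ℝ} (hx : V x ∈ Ioo (0 : ℝ) 1) : growthOp J g K U x < growthOp J g' K V x :=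
  calc growthOp J g K U x ≤ growthOp J g K V x := growthOp_mono hJ hg (fun _ _ => le_rfl) hU hV h x
    _ < growthOp J g' K V x := by
      have := hlt _ hx
      exact div_lt_div_of_pos_right (by linarith) hg.pos_const

lemma waveMap_lt_waveMap (hJ : IsDensity J) (hg : IsMonostable g K) (hg' : IsMonostable g' K)
    (hc : 0 < c) (hle : ∀ w ∈ Icc (0 : ℝ) 1, g w ≤ g' w) {χ χ' : ℝ → ℝ} (hχ : IsProfile χ)
    (hχ' : IsProfile χ') (hχχ' : χ ≤ χ') (hU : IsProfile U) (hV : IsProfile V) (h : U ≤ V)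
    {x a b : ℝ} (hxa : x ≤ a) (hab : a < b)
    (hlt : ∀ y ∈ Ioo a b, χ y * growthOp J g K U y < χ' y * growthOp J g' K V y) :
    waveMap J g K c χ U x < waveMap J g' K c χ' V x :=
  resolvent_lt_resolvent (hg.div_pos hc) (isProfile_mul_growthOp hJ hg hχ hU)
    (isProfile_mul_growthOp hJ hg' hχ' hV)
    (fun y _ => mul_growthOp_mono hJ hg hle hχ' hχχ' hU hV h y) hxa hab hlt

lemma IsMonostable.le_of_lt (hg : IsMonostable g K) (hg' : IsMonostable g' K)
    (hlt : ∀ w ∈ Ioo (0 : ℝ) 1, g w < g' w) : ∀ w ∈ Icc (0 : ℝ) 1, g w ≤ g' w := by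
  rintro w ⟨hw0, hw1⟩
  rcases hw0.eq_or_lt with rfl | hw0
  · rw [hg.zero, hg'.zero]
  rcases hw1.eq_or_lt with rfl | hw1
  · rw [hg.one, hg'.one]
  exact (hlt w ⟨hw0, hw1⟩).le

lemma IsNLFront.translate (hV : IsNLFront J g c V) (s : ℝ) :
    IsNLFront J g c fun x => V (x + s) := by
  refine ⟨hV.1.comp (contDiff_id.add contDiff_const), fun ξ => ?_,
    hV.tendsto_atBot.comp (tendsto_atBot_add_const_right _ s tendsto_id),
    hV.tendsto_atTop.comp (tendsto_atTop_add_const_right _ s tendsto_id), fun ξ => ?_⟩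
  · rw [deriv_comp_add_const, ← kernelAvg_eq_integral, kernelAvg_translate, kernelAvg_eq_integral]
    exact hV.2.1 (ξ + s)
  · rw [deriv_comp_add_const]
    exact hV.2.2.2.2 (ξ + s)

lemma IsNLFront.mem_Ioo (hV : IsNLFront J g c V) (x : ℝ) : V x ∈ Ioo (0 : ℝ) 1 :=
  ⟨hV.pos x, hV.lt_one x⟩

lemma IsNLFront.lt_of_le (hJ : IsDensity J) (hg : IsMonostable g K) (hg' : IsMonostable g' K)
    (hc : 0 < c) (hlt : ∀ w ∈ Ioo (0 : ℝ) 1, g w < g' w) (hU : IsNLFront J g c U)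
    (hV : IsNLFront J g' c V) (h : U ≤ V) (x : ℝ) : U x < V x := by
  rw [← hU.waveMap_eq hJ hg hc, ← hV.waveMap_eq hJ hg' hc]
  refine waveMap_lt_waveMap hJ hg hg' hc (hg.le_of_lt hg' hlt) .one .one le_rfl hU.isProfile
    hV.isProfile h le_rfl (lt_add_one x) fun y _ => ?_
  simpa only [Pi.one_apply, one_mul] using
    growthOp_lt_growthOp hJ hg hlt hU.isProfile hV.isProfile h (hV.mem_Ioo y)

/-- The quadratic gap `k U²` between the nonlinearities dominates the error `C V (V - U)`, because
`V - U = o(U)`. -/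
lemma eventually_remainder_lt_remainder (hk : 0 < k)
    (hC : ∀ u v, 0 ≤ u → u ≤ v → v ≤ 1 → |(g' v - γ * v) - (g' u - γ * u)| ≤ C * v * (v - u))
    (hsq : ∀ᶠ w in nhdsWithin 0 (Icc 0 1), k * w ^ 2 ≤ g' w - g w) (hU : IsProfile U)
    (hV : IsProfile V) (hU0 : Tendsto U atTop (nhds 0)) (h : U ≤ V) (hB : 0 < B)
    (hUB : Tendsto (amplitude lam U) atTop (nhds B))
    (hVB : Tendsto (amplitude lam V) atTop (nhds B)) :
    ∀ᶠ x in atTop, remainder lam γ g U x < remainder lam γ g' V x := by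
  have hlim := ((hUB.pow 2).const_mul k).sub ((hVB.const_mul C).mul (hVB.sub hUB))
  rw [sub_self, mul_zero, sub_zero] at hlim
  have hU0' : Tendsto U atTop (nhdsWithin 0 (Icc 0 1)) :=
    tendsto_nhdsWithin_of_tendsto_nhds_of_eventually_within _ hU0 (.of_forall hU.mem_Icc)
  filter_upwards [hlim.eventually_const_lt (by positivity), hU0'.eventually hsq] with x hpos hgap
  have hexp := Real.exp_pos (lam * x)
  have hfactor : k * amplitude lam U x ^ 2
      - C * amplitude lam V x * (amplitude lam V x - amplitude lam U x)
      = Real.exp (lam * x) ^ 2 * (k * U x ^ 2 - C * V x * (V x - U x)) := by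
    simp only [amplitude]
    ring
  have hmain := pos_of_mul_pos_right (hfactor ▸ hpos) (sq_nonneg _)
  have herr := (abs_le.1 (hC (U x) (V x) (hU.nonneg x) (h x) (hV.le_one x))).1
  exact mul_lt_mul_of_pos_left (by linarith) hexp

lemma IsWeight.kernelAvg_sub {ρ u v : ℝ → ℝ} (hρ : IsWeight ρ R) (hu : Continuous u)
    (hv : Continuous v) (x : ℝ) :
    kernelAvg ρ (u - v) x = kernelAvg ρ u x - kernelAvg ρ v x := by
  simp only [kernelAvg, Pi.sub_apply, mul_sub]
  exact integral_sub (hρ.integrable_mul (by fun_prop)) (hρ.integrable_mul (by fun_prop))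

lemma IsNLFront.not_tendsto_amplitude_of_le (H : IsDoubleRoot J lam c γ R) (hk : 0 < k)
    (hC : ∀ u v, 0 ≤ u → u ≤ v → v ≤ 1 → |(g' v - γ * v) - (g' u - γ * u)| ≤ C * v * (v - u))
    (hsq : ∀ᶠ w in nhdsWithin 0 (Icc 0 1), k * w ^ 2 ≤ g' w - g w) (hU : IsNLFront J g c U)
    (hV : IsNLFront J g' c V) (h : U ≤ V) (hB : 0 < B)
    (hUB : Tendsto (amplitude lam U) atTop (nhds B)) :
    ¬Tendsto (amplitude lam V) atTop (nhds B) := by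
  intro hVB
  have hUc := continuous_amplitude (lam := lam) hU.1.continuous
  have hVc := continuous_amplitude (lam := lam) hV.1.continuous
  refine H.isWeight.not_tendsto_zero (hVc.sub hUc) H.speed_pos.ne' H.integral_mul
    (r := fun x => remainder lam γ g' V x - remainder lam γ g U x)
    (fun x => sub_nonneg.2 (mul_le_mul_of_nonneg_left (h x) (Real.exp_pos _).le))
    (.of_forall fun x => ?_) ?_ (sub_self B ▸ hVB.sub hUB)
  · refine ((H.hasDerivAt_amplitude (hV.hasDerivAt H.speed_pos.ne' x)).sub
      (H.hasDerivAt_amplitude (hU.hasDerivAt H.speed_pos.ne' x))).congr_deriv ?_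
    rw [H.isWeight.kernelAvg_sub hVc hUc, Pi.sub_apply]
    ring
  · simpa only [sub_pos] using eventually_remainder_lt_remainder hk hC hsq hU.isProfile
      hV.isProfile hU.tendsto_atTop h hB hUB hVB

/-- Slide `V` towards `U`: the translates stay apart until the amplitudes at `+∞` coincide, where
`IsNLFront.not_tendsto_amplitude_of_le` gives a contradiction. -/
lemma IsNLFront.not_tendsto_amplitude_of_lt {η β B' : ℝ} (hJ : IsDensity J)
    (hg : IsMonostable g K) (hg' : IsMonostable g' K) (hst : IsStableAtOne g η β)
    (H : IsDoubleRoot J lam c γ R) (hk : 0 < k)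
    (hC : ∀ u v, 0 ≤ u → u ≤ v → v ≤ 1 → |(g' v - γ * v) - (g' u - γ * u)| ≤ C * v * (v - u))
    (hsq : ∀ᶠ w in nhdsWithin 0 (Icc 0 1), k * w ^ 2 ≤ g' w - g w)
    (hlt : ∀ w ∈ Ioo (0 : ℝ) 1, g w < g' w) (hU : IsNLFront J g c U) (hV : IsNLFront J g' c V)
    (hB : 0 < B) (hB' : 0 < B') (hUB : Tendsto (amplitude lam U) atTop (nhds B)) :
    ¬Tendsto (amplitude lam V) atTop (nhds B') := by
  intro hVB
  have hc := H.speed_pos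
  have hVs := tendsto_amplitude_translate hVB
  have htail : ∀ s, B < Real.exp (-(lam * s)) * B' → ∃ s' > s, ∀ᶠ x in atTop, U x ≤ V (x + s') := by
    intro s hs
    have hcont : Continuous fun s => Real.exp (-(lam * s)) * B' := by fun_prop
    obtain ⟨s', hlt', hs'⟩ := ((frequently_gt_nhds s).and_eventually
      (hcont.continuousAt.eventually_const_lt hs)).exists
    exact ⟨s', hlt', eventually_le_of_amplitude_lt hUB (hVs s') hs'⟩
  have hsup : waveMap J g K c 1 V ≤ V := (waveMap_mono hJ hg hg' hc (hg.le_of_lt hg' hlt) .one .one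
    le_rfl hV.isProfile hV.isProfile le_rfl).trans (hV.waveMap_eq hJ hg' hc).le
  have hs₁ : B < Real.exp (-(lam * (-(B / B') / lam))) * B' := by
    rw [mul_div_cancel₀ _ H.root_pos.ne', neg_neg, ← div_lt_iff₀ hB']
    linarith [Real.add_one_le_exp (B / B')]
  obtain ⟨s₀, -, hs₀⟩ := htail _ hs₁
  refine not_forall_lt_translate hJ hg hc hst hU.isProfile hV.isProfile hU.1.continuous
    hV.1.continuous (hU.waveMap_eq hJ hg hc).ge hsup hV.tendsto_atBot hV.tendsto_atTop
    (hU.mem_Ioo 0) hs₀ (fun s hs => htail s (lt_of_le_of_ne ?_ ?_))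
    fun s hs => hU.lt_of_le hJ hg hg' hc hlt (hV.translate s) hs
  · exact le_of_tendsto_of_tendsto' hUB (hVs s)
      fun x => mul_le_mul_of_nonneg_left (hs x) (Real.exp_pos _).le
  · rintro heq
    exact hU.not_tendsto_amplitude_of_le H hk hC hsq (hV.translate s) hs hB hUB (heq ▸ hVs s)

end TwoFronts

section CutoffWaves

variable {J g U : ℝ → ℝ} {K c m : ℝ}

namespace IsCutoffWave

lemma eq_zero (hU : IsCutoffWave J g K c m U) {x : ℝ} (hx : m ≤ x) : U x = 0 := by
  rw [← hU.waveMap_eq, waveMap, resolvent_eq_setIntegral]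
  refine setIntegral_eq_zero_of_forall_eq_zero fun y hy => ?_
  rw [step_of_lt (hx.trans_lt hy), zero_mul, mul_zero]

lemma continuous (hJ : IsDensity J) (hg : IsMonostable g K) (hc : 0 < c)
    (hU : IsCutoffWave J g K c m U) : Continuous U :=
  hU.waveMap_eq ▸ continuous_waveMap hJ hg hc (isProfile_step_one m) hU.isProfile

lemma translate (hU : IsCutoffWave J g K c m U) (s : ℝ) :
    IsCutoffWave J g K c (m - s) fun x => U (x + s) where
  isProfile := hU.isProfile.translate s
  waveMap_eq := by
    ext x
    rw [← step_add, waveMap_translate, hU.waveMap_eq]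
  tendsto_atBot := hU.tendsto_atBot.comp (tendsto_atBot_add_const_right _ s tendsto_id)

lemma exists_eq_half (hJ : IsDensity J) (hg : IsMonostable g K) (hc : 0 < c)
    (hU : IsCutoffWave J g K c m U) : ∃ x, U x = 1 / 2 := by
  obtain ⟨a, ha⟩ := (hU.tendsto_atBot.eventually_const_lt one_half_lt_one).exists
  exact mem_range_of_exists_le_of_exists_ge (hU.continuous hJ hg hc)
    ⟨m, (hU.eq_zero le_rfl).trans_le one_half_pos.le⟩ ⟨a, ha.le⟩

lemma hasDerivAt (hJ : IsDensity J) (hg : IsMonostable g K) (hc : 0 < c)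
    (hU : IsCutoffWave J g K c m U) {x : ℝ} (hx : x < m) :
    HasDerivAt U ((U x - kernelAvg J U x - g (U x)) / c) x := by
  rw [← sub_growthOp_div hg.pos_const.ne']
  exact hasDerivAt_of_waveMap_eq hJ hg hc (isProfile_step_one m) hU.isProfile hU.waveMap_eq
    ((gt_mem_nhds hx).mono fun y hy => step_of_le (le_of_lt hy))

lemma le_waveMap_one (hJ : IsDensity J) (hg : IsMonostable g K) (hc : 0 < c)
    (hU : IsCutoffWave J g K c m U) : U ≤ waveMap J g K c 1 U :=
  hU.waveMap_eq.ge.trans <| waveMap_mono hJ hg hg hc (fun _ _ => le_rfl) (isProfile_step_one m)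
    .one (isProfile_step_one m).le_one hU.isProfile hU.isProfile le_rfl

lemma lt_of_le {V : ℝ → ℝ} (hJ : IsDensity J) (hg : IsMonostable g K) (hc : 0 < c)
    (hU : IsCutoffWave J g K c m U) (hV : IsNLFront J g c V) (h : U ≤ V) (x : ℝ) : U x < V x := by
  rw [← hU.waveMap_eq, ← hV.waveMap_eq hJ hg hc]
  refine waveMap_lt_waveMap hJ hg hg hc (fun _ _ => le_rfl) (isProfile_step_one m) .one
    (isProfile_step_one m).le_one hU.isProfile hV.isProfile h (le_max_left x m)
    (lt_add_one _) fun y hy => ?_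
  rw [step_of_lt ((le_max_right x m).trans_lt hy.1), zero_mul, Pi.one_apply, one_mul]
  have := (hJ.isProfile_kernelAvg hV.isProfile).nonneg y
  have := mul_pos (sub_pos.2 hg.one_lt) (hV.pos y)
  exact div_pos (by linarith [hg.pos _ (hV.mem_Ioo y)]) hg.pos_const

lemma not_isNLFront {V : ℝ → ℝ} {η β : ℝ} (hJ : IsDensity J) (hg : IsMonostable g K) (hc : 0 < c)
    (hst : IsStableAtOne g η β) (hU : IsCutoffWave J g K c m U) : ¬IsNLFront J g c V := by
  intro hV
  obtain ⟨a, ha⟩ := hU.exists_eq_half hJ hg hc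
  have hUa := hU.translate a
  have htail : ∀ s, ∀ᶠ x in atTop, U (x + a) ≤ V (x + s) := fun s => by
    filter_upwards [eventually_ge_atTop (m - a)] with x hx
    exact (hUa.eq_zero hx).trans_le (hV.pos _).le
  refine not_forall_lt_translate hJ hg hc hst hUa.isProfile hV.isProfile
    (hUa.continuous hJ hg hc) hV.1.continuous (hUa.le_waveMap_one hJ hg hc)
    (hV.waveMap_eq hJ hg hc).le hV.tendsto_atBot hV.tendsto_atTop (by norm_num [ha]) (htail 0)
    (fun s _ => ⟨s + 1, lt_add_one s, htail _⟩)
    fun s hs => hUa.lt_of_le hJ hg hc (hV.translate s) hs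

end IsCutoffWave

lemma exists_isCutoffWave_eq_half (hJ : IsKernel J) (hg : IsMonostable g K) (hc : 0 < c)
    (hno : ¬∃ W, IsNLFront J g c W) : ∃ m U, IsCutoffWave J g K c m U ∧ U 0 = 1 / 2 := by
  obtain ⟨m, U, hU⟩ := exists_isCutoffWave hJ hg hc hno
  obtain ⟨a, ha⟩ := hU.exists_eq_half hJ.isDensity hg hc
  exact ⟨m - a, _, hU.translate a, by rwa [zero_add]⟩

end CutoffWaves

section Threshold

variable {J g : ℝ → ℝ} {K c lam γ R C : ℝ} {G U : ℕ → ℝ → ℝ} {m ε : ℕ → ℝ}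

lemma IsCutoffWave.abs_sub_waveMap_le {g' V : ℝ → ℝ} {a δ : ℝ} (hJ : IsDensity J)
    (hg : IsMonostable g K) (hg' : IsMonostable g' K) (hc : 0 < c)
    (hδ : ∀ w ∈ Icc (0 : ℝ) 1, |g' w - g w| ≤ δ) (hV : IsCutoffWave J g' K c a V) (x : ℝ) :
    |V x - waveMap J g K c (step 1 a) V x| ≤ δ := by
  simpa only [hV.waveMap_eq] using
    abs_waveMap_sub_le hJ hg' hg hc (isProfile_step_one a) hV.isProfile hδ x

lemma exists_front_of_tendsto_cutoff (hJ : IsKernel J) (hg : IsMonostable g K) (hc : 0 < c)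
    (hG : ∀ k, IsMonostable (G k) K) (hε : Tendsto ε atTop (nhds 0))
    (hGg : ∀ k, ∀ w ∈ Icc (0 : ℝ) 1, |G k w - g w| ≤ ε k)
    (hU : ∀ k, IsCutoffWave J (G k) K c (m k) (U k)) (hhalf : ∀ k, U k 0 = 1 / 2)
    (hm : Tendsto m atTop atTop) :
    ∃ φ : ℕ → ℕ, StrictMono φ ∧ ∃ W, IsNLFront J g c W ∧
      ∀ x, Tendsto (fun n => U (φ n) x) atTop (nhds (W x)) := by
  obtain ⟨φ, hφ, W, hW, hfix, hlim⟩ := exists_subseq_tendsto_fixedPoint (χ := 1) hJ.isDensity hg hc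
    (fun k => isProfile_step_one (m k))
    (fun y => tendsto_const_nhds.congr' <| (hm.eventually_ge_atTop y).mono
      fun k hk => (step_of_le hk).symm)
    (fun k => (hU k).isProfile) hε
    (fun k => (hU k).abs_sub_waveMap_le hJ.isDensity hg (hG k) hc (hGg k))
  have hW0 : W 0 = 1 / 2 :=
    tendsto_nhds_unique (hlim 0) (by simp only [hhalf, tendsto_const_nhds_iff])
  exact ⟨φ, hφ, W, isNLFront_of_waveMap_eq hJ hg hc hW hfix (x₀ := 0) (by norm_num [hW0]), hlim⟩

/-- If the cut-offs had a bounded subsequence, the waves would converge to a cut-off wave of the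
limiting nonlinearity, which cannot coexist with a front. -/
lemma tendsto_cutoff_atTop {V : ℝ → ℝ} {η β : ℝ} (hJ : IsDensity J) (hg : IsMonostable g K)
    (hc : 0 < c) (hst : IsStableAtOne g η β) (hG : ∀ k, IsMonostable (G k) K)
    (hε : Tendsto ε atTop (nhds 0)) (hGg : ∀ k, ∀ w ∈ Icc (0 : ℝ) 1, |G k w - g w| ≤ ε k)
    (hU : ∀ k, IsCutoffWave J (G k) K c (m k) (U k)) (hhalf : ∀ k, U k 0 = 1 / 2)
    (hV : IsNLFront J g c V) : Tendsto m atTop atTop := by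
  rw [tendsto_atTop]
  by_contra! hbdd
  obtain ⟨b, hb⟩ := hbdd
  obtain ⟨ψ, hψ, hψb⟩ := extraction_of_frequently_atTop hb
  have hS : ∀ k, IsCutoffWave J (G (ψ k)) K c 0 fun x => U (ψ k) (x + m (ψ k)) := fun k => by
    simpa only [sub_self] using (hU (ψ k)).translate (m (ψ k))
  obtain ⟨φ, -, W, hW, hfix, hlim⟩ := exists_subseq_tendsto_fixedPoint hJ hg hc
    (fun _ => isProfile_step_one 0) (fun _ => tendsto_const_nhds) (fun k => (hS k).isProfile)
    (hε.comp hψ.tendsto_atTop)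
    (fun k => (hS k).abs_sub_waveMap_le hJ hg (hG (ψ k)) hc (hGg (ψ k)))
  have hWb : 1 / 2 ≤ W (-b) := ge_of_tendsto' (hlim (-b)) fun n => by
    rw [← hhalf (ψ (φ n))]
    exact (hU _).isProfile.antitone (by linarith [hψb (φ n)])
  have hbot := tendsto_atBot_one_of_supersolution hJ hg hc (isProfile_step_one 0)
    (tendsto_step_atBot 1 0) hW hfix.le (one_half_pos.trans_le hWb)
  exact IsCutoffWave.not_isNLFront hJ hg hc hst ⟨hW, hfix, hbot⟩ hV

lemma IsCutoffWave.flux_nonpos {V : ℝ → ℝ} {a : ℝ} (hJ : IsDensity J) (hg : IsMonostable g K)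
    (H : IsDoubleRoot J lam c γ R) (hV : IsCutoffWave J g K c a V) :
    flux (tilt J lam) (amplitude lam V) a ≤ 0 := by
  rw [← zero_mul (∫ y, tilt J lam y * |y|)]
  refine H.isWeight.flux_le (continuous_amplitude (hV.continuous hJ hg H.speed_pos))
    hV.isProfile.amplitude_nonneg fun u hu => ?_
  rw [amplitude, hV.eq_zero hu.1, mul_zero]

/-- The flux of a cut-off wave is nonpositive at the cut-off, and almost conserved before it. -/
lemma exists_eventually_flux_le {W : ℝ → ℝ} (hJ : IsDensity J) (H : IsDoubleRoot J lam c γ R)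
    (hC : 0 < C) (hG : ∀ k, IsMonostable (G k) K)
    (hGC : ∀ k, ∀ w ∈ Icc (0 : ℝ) 1, |G k w - γ * w| ≤ C * w ^ 2)
    (hU : ∀ k, IsCutoffWave J (G k) K c (m k) (U k)) (hm : Tendsto m atTop atTop)
    (hW0 : Tendsto W atTop (nhds 0)) (hlim : ∀ x, Tendsto (fun k => U k x) atTop (nhds (W x))) :
    ∃ C₁, ∀ᶠ ξ in atTop,
      flux (tilt J lam) (amplitude lam W) ξ ≤ C₁ * Real.exp (-(lam / 2 * ξ)) := by
  obtain ⟨η, hη, hest⟩ := H.exists_abs_flux_sub_le hC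
  obtain ⟨x₀, hx₀⟩ := (hW0.eventually_lt_const hη).exists
  obtain ⟨C₁, -, hC₁⟩ := hest x₀
  refine ⟨C₁, (eventually_ge_atTop x₀).mono fun ξ hξ => ?_⟩
  have hUc := fun k => (hU k).continuous hJ (hG k) H.speed_pos
  have hflux := H.isWeight.tendsto_flux (Z := amplitude lam W)
    (fun k => continuous_amplitude (lam := lam) (hUc k))
    (b := fun t => Real.exp (lam * t)) (by fun_prop)
    (fun k t => by
      rw [abs_of_nonneg ((hU k).isProfile.amplitude_nonneg t)]
      exact amplitude_le_exp (hU k).isProfile t)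
    (fun t => (hlim t).const_mul _) ξ
  refine le_of_tendsto hflux ?_
  filter_upwards [(hlim x₀).eventually_lt_const hx₀, hm.eventually_ge_atTop ξ] with k hk hmk
  have hdiff := hC₁ (G k) (U k) (m k) (hU k).isProfile (hUc k) (hGC k)
    (fun x hx => (hU k).hasDerivAt hJ (hG k) H.speed_pos hx.2)
    (fun x hx => ((hU k).isProfile.antitone hx).trans hk.le) ξ ⟨hξ, hmk⟩
  linarith [neg_le_of_abs_le hdiff, (hU k).flux_nonpos hJ (hG k) H]

lemma exists_front_tendsto_amplitude {V : ℝ → ℝ} {η β : ℝ} (hJ : IsKernel J)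
    (hg : IsMonostable g K) (H : IsDoubleRoot J lam c γ R) (hst : IsStableAtOne g η β) (hC : 0 < C)
    (hgC : ∀ w ∈ Icc (0 : ℝ) 1, |g w - γ * w| ≤ C * w ^ 2) (hG : ∀ k, IsMonostable (G k) K)
    (hGC : ∀ k, ∀ w ∈ Icc (0 : ℝ) 1, |G k w - γ * w| ≤ C * w ^ 2)
    (hε : Tendsto ε atTop (nhds 0)) (hGg : ∀ k, ∀ w ∈ Icc (0 : ℝ) 1, |G k w - g w| ≤ ε k)
    (hno : ∀ k, ¬∃ W, IsNLFront J (G k) c W) (hV : IsNLFront J g c V) :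
    ∃ W, IsNLFront J g c W ∧ ∃ B > 0, Tendsto (amplitude lam W) atTop (nhds B) := by
  have hc := H.speed_pos
  choose m U hU hhalf using fun k => exists_isCutoffWave_eq_half hJ (hG k) hc (hno k)
  have hm := tendsto_cutoff_atTop hJ.isDensity hg hc hst hG hε hGg hU hhalf hV
  obtain ⟨φ, hφ, W, hW, hlim⟩ := exists_front_of_tendsto_cutoff hJ hg hc hG hε hGg hU hhalf hm
  obtain ⟨C₁, hflux⟩ := exists_eventually_flux_le hJ.isDensity H hC (fun k => hG (φ k))
    (fun k => hGC (φ k)) (fun k => hU (φ k)) (hm.comp hφ.tendsto_atTop) hW.tendsto_atTop hlim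
  exact ⟨W, hW, H.exists_tendsto_amplitude hC hW.isProfile hW.1.continuous hW.pos hW.tendsto_atTop
    hgC (hW.hasDerivAt hc.ne') hflux⟩

end Threshold

/-! ### Speed selection in a monotone family of nonlinearities -/

lemma IsNLFront.exists_front_of_le {J g g' V : ℝ → ℝ} {K c : ℝ} (hJ : IsKernel J)
    (hg : IsMonostable g K) (hg' : IsMonostable g' K) (hc : 0 < c)
    (hle : ∀ w ∈ Icc (0 : ℝ) 1, g w ≤ g' w) (hV : IsNLFront J g' c V) :
    ∃ W, IsNLFront J g c W :=
  exists_front_of_supersolution hJ hg hc hV.isProfile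
    ((waveMap_mono hJ.isDensity hg hg' hc hle .one .one le_rfl hV.isProfile hV.isProfile
      le_rfl).trans_eq (hV.waveMap_eq hJ.isDensity hg' hc))
    hV.tendsto_atTop (hV.pos 0)

lemma exists_front_of_tendsto {J g : ℝ → ℝ} {G : ℕ → ℝ → ℝ} {ε : ℕ → ℝ} {K c : ℝ}
    (hJ : IsKernel J) (hg : IsMonostable g K) (hc : 0 < c) (hG : ∀ k, IsMonostable (G k) K)
    (hε : Tendsto ε atTop (nhds 0)) (hGg : ∀ k, ∀ w ∈ Icc (0 : ℝ) 1, |G k w - g w| ≤ ε k)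
    (hex : ∀ k, ∃ W, IsNLFront J (G k) c W) : ∃ W, IsNLFront J g c W := by
  choose W hW using hex
  refine exists_front_of_approx hJ hg hc (fun k => (hW k).isProfile)
    (fun k => (hW k).tendsto_atBot) (fun k => (hW k).tendsto_atTop) hε fun k x => ?_
  simpa only [(hW k).waveMap_eq hJ.isDensity (hG k) hc] using
    abs_waveMap_sub_le hJ.isDensity (hG k) hg hc .one (hW k).isProfile (hGg k) x

/-- `s` is the minimal speed for `g`: fronts exist exactly for the speeds `c ≥ s`. -/
def IsMinimalSpeed (J g : ℝ → ℝ) (s : ℝ) : Prop :=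
  ∀ c, (∃ W, IsNLFront J g c W) ↔ s ≤ c

/-- A family `f(·; q)`, `q ≥ 0`, of smooth monostable nonlinearities with a common linearization
`γ` at `0`, which is Lipschitz in `q` together with its first derivative, and increases with `q`,
the second derivative at `0` strictly so. The encoding is `f w q` for `f(w; q)`. -/
structure IsMonostableFamily (f : ℝ → ℝ → ℝ) (γ : ℝ) : Prop where
  isSmoothMonostable : ∀ q, 0 ≤ q → IsSmoothMonostable (f · q) γ
  lipschitz : ∃ L, ∀ n : ℕ, n ≤ 1 → ∀ w ∈ Icc (0 : ℝ) 1, ∀ q q' : ℝ, 0 ≤ q → 0 ≤ q' →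
    |iteratedDerivWithin n (f · q) (Icc 0 1) w - iteratedDerivWithin n (f · q') (Icc 0 1) w| ≤
      L * |q - q'|
  lt : ∀ q q' : ℝ, 0 ≤ q → q < q' → ∀ w ∈ Ioo (0 : ℝ) 1, f w q < f w q'
  iteratedDerivWithin_two_lt : ∀ q q' : ℝ, 0 ≤ q → q < q' →
    iteratedDerivWithin 2 (f · q) (Icc 0 1) 0 < iteratedDerivWithin 2 (f · q') (Icc 0 1) 0

namespace IsMonostableFamily

variable {J W : ℝ → ℝ} {f : ℝ → ℝ → ℝ} {cNL : ℝ → ℝ} {γ c q q' lam R B : ℝ}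

lemma le (hf : IsMonostableFamily f γ) (hq : 0 ≤ q) (hqq' : q ≤ q') :
    ∀ w ∈ Icc (0 : ℝ) 1, f w q ≤ f w q' := fun w hw => by
  have h := hf.isSmoothMonostable q hq
  have h' := hf.isSmoothMonostable q' (hq.trans hqq')
  obtain rfl | hlt := hqq'.eq_or_lt
  · rfl
  obtain rfl | hw0 := hw.1.eq_or_lt
  · exact (h.zero.trans h'.zero.symm).le
  obtain rfl | hw1 := hw.2.eq_or_lt
  · exact (h.one.trans h'.one.symm).le
  exact (hf.lt q q' hq hlt w ⟨hw0, hw1⟩).le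

lemma exists_abs_sub_le (hf : IsMonostableFamily f γ) :
    ∃ L, ∀ q q' : ℝ, 0 ≤ q → 0 ≤ q' → ∀ w ∈ Icc (0 : ℝ) 1, |f w q - f w q'| ≤ L * |q - q'| := by
  obtain ⟨L, hL⟩ := hf.lipschitz
  exact ⟨L, fun q q' hq hq' w hw => by
    simpa only [iteratedDerivWithin_zero] using hL 0 zero_le_one w hw q q' hq hq'⟩

lemma exists_isMonostable (hf : IsMonostableFamily f γ) (Q : ℝ) :
    ∃ K, ∀ q ∈ Icc 0 Q, IsMonostable (f · q) K := by
  obtain ⟨M, hM⟩ := isCompact_Icc.exists_bound_of_continuousOn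
    (hf.isSmoothMonostable 0 le_rfl).contDiffOn_derivWithin.continuousOn
  obtain ⟨L, hL⟩ := hf.lipschitz
  refine ⟨M + |L| * Q + 2, fun q hq =>
    (hf.isSmoothMonostable q hq.1).isMonostable fun w hw => ?_⟩
  have hdiff := hL 1 le_rfl w hw q 0 hq.1 le_rfl
  rw [iteratedDerivWithin_one, iteratedDerivWithin_one, sub_zero, abs_of_nonneg hq.1] at hdiff
  have hLQ : L * q ≤ |L| * Q := by gcongr; exacts [hq.1, le_abs_self L, hq.2]
  have hderiv0 := hM w hw
  rw [Real.norm_eq_abs] at hderiv0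
  linarith [abs_add_le (derivWithin (f · 0) (Icc 0 1) w)
    (derivWithin (f · q) (Icc 0 1) w - derivWithin (f · 0) (Icc 0 1) w),
    congrArg abs (add_sub_cancel (derivWithin (f · 0) (Icc 0 1) w)
      (derivWithin (f · q) (Icc 0 1) w))]

/-- Monotonicity in the parameter reduces the quadratic bound to the two end points. -/
lemma exists_abs_sub_le_sq (hf : IsMonostableFamily f γ) (hq : 0 ≤ q) (hqq' : q ≤ q') :
    ∃ C > 0, ∀ p ∈ Icc q q', ∀ w ∈ Icc (0 : ℝ) 1, |f w p - γ * w| ≤ C * w ^ 2 := by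
  obtain ⟨C, hC, h⟩ := (hf.isSmoothMonostable q hq).exists_abs_sub_le_sq
  obtain ⟨C', hC', h'⟩ := (hf.isSmoothMonostable q' (hq.trans hqq')).exists_abs_sub_le_sq
  refine ⟨C + C', add_pos hC hC', fun p hp w hw => abs_le.2 ?_⟩
  have hlow := (abs_le.1 (h w hw)).1
  have hupp := (abs_le.1 (h' w hw)).2
  have hsq : 0 ≤ C * w ^ 2 ∧ 0 ≤ C' * w ^ 2 := by constructor <;> positivity
  constructor <;> linarith [hf.le hq hp.1 w hw, hf.le (hq.trans hp.1) hp.2 w hw]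

lemma exists_front_of_le (hJ : IsKernel J) (hf : IsMonostableFamily f γ) (hc : 0 < c)
    (hq : 0 ≤ q) (hqq' : q ≤ q') (hW : IsNLFront J (f · q') c W) :
    ∃ V, IsNLFront J (f · q) c V := by
  obtain ⟨K, hK⟩ := hf.exists_isMonostable q'
  exact hW.exists_front_of_le hJ (hK q ⟨hq, hqq'⟩) (hK q' ⟨hq.trans hqq', le_rfl⟩) hc
    (hf.le hq hqq')

lemma isClosed_setOf_exists_front (hJ : IsKernel J) (hf : IsMonostableFamily f γ) (hc : 0 < c) :
    IsClosed {q | 0 ≤ q ∧ ∃ W, IsNLFront J (f · q) c W} := by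
  refine IsSeqClosed.isClosed fun u q hu hlim => ?_
  have hq : 0 ≤ q := ge_of_tendsto' hlim fun k => (hu k).1
  obtain ⟨Q, hQ⟩ := hlim.bddAbove_range
  obtain ⟨K, hK⟩ := hf.exists_isMonostable (max q Q)
  obtain ⟨L, hL⟩ := hf.exists_abs_sub_le
  have hε : Tendsto (fun k => L * |u k - q|) atTop (nhds 0) := by
    simpa using ((hlim.sub_const q).abs).const_mul L
  exact ⟨hq, exists_front_of_tendsto hJ (hK q ⟨hq, le_max_left _ _⟩) hc
    (fun k => hK (u k) ⟨(hu k).1, (hQ (mem_range_self k)).trans (le_max_right _ _)⟩) hε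
    (fun k => hL (u k) q (hu k).1 hq) fun k => (hu k).2⟩

lemma exists_forall_speed_le_iff (hJ : IsKernel J) (hf : IsMonostableFamily f γ) (hc : 0 < c)
    (hmin : ∀ q, 0 ≤ q → IsMinimalSpeed J (f · q) (cNL q)) {q₁ q₂ : ℝ} (hq₁ : 0 ≤ q₁)
    (hc₁ : cNL q₁ ≤ c) (hq₂ : 0 ≤ q₂) (hc₂ : c < cNL q₂) :
    ∃ qs, ∀ q, 0 ≤ q → (cNL q ≤ c ↔ q ≤ qs) := by
  set S := {q | 0 ≤ q ∧ ∃ W, IsNLFront J (f · q) c W}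
  have hbdd : BddAbove S := ⟨q₂, fun q hq => le_of_not_ge fun hlt => by
    obtain ⟨W, hW⟩ := hq.2
    exact hc₂.not_ge ((hmin q₂ hq₂ c).1 (hf.exists_front_of_le hJ hc hq₂ hlt hW))⟩
  obtain ⟨-, W, hW⟩ := (hf.isClosed_setOf_exists_front hJ hc).csSup_mem
    ⟨q₁, hq₁, (hmin q₁ hq₁ c).2 hc₁⟩ hbdd
  exact ⟨sSup S, fun q hq => ⟨fun h => le_csSup hbdd ⟨hq, (hmin q hq c).2 h⟩,
    fun h => (hmin q hq c).1 (hf.exists_front_of_le hJ hc hq h hW)⟩⟩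

lemma exists_front_tendsto_amplitude (hJ : IsKernel J) (hf : IsMonostableFamily f γ)
    (H : IsDoubleRoot J lam c γ R) (hq : 0 ≤ q) (hW : IsNLFront J (f · q) c W)
    (hno : ∀ p > q, ¬∃ V, IsNLFront J (f · p) c V) :
    ∃ V, IsNLFront J (f · q) c V ∧ ∃ B > 0, Tendsto (amplitude lam V) atTop (nhds B) := by
  set p : ℕ → ℝ := fun k => q + 1 / ((k : ℝ) + 1)
  have hqp : ∀ k, q < p k := fun k => lt_add_of_pos_right q Nat.one_div_pos_of_nat
  have hp : ∀ k, p k ∈ Icc q (q + 1) := fun k =>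
    ⟨(hqp k).le, add_le_add_right (Nat.one_div_le_one_div (Nat.zero_le k) |>.trans (by simp)) q⟩
  obtain ⟨K, hK⟩ := hf.exists_isMonostable (q + 1)
  obtain ⟨η, β, hst⟩ := (hf.isSmoothMonostable q hq).exists_isStableAtOne
  obtain ⟨C, hC, hsq⟩ := hf.exists_abs_sub_le_sq hq (le_add_of_nonneg_right zero_le_one)
  obtain ⟨L, hL⟩ := hf.exists_abs_sub_le
  have hε : Tendsto (fun k => L * |p k - q|) atTop (nhds 0) := by
    simpa [p] using (tendsto_one_div_add_atTop_nhds_zero_nat (𝕜 := ℝ)).abs.const_mul L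
  have hq1 : q ∈ Icc q (q + 1) := left_mem_Icc.2 (le_add_of_nonneg_right zero_le_one)
  exact _root_.exists_front_tendsto_amplitude hJ (hK q ⟨hq, hq1.2⟩) H hst hC (hsq q hq1)
    (fun k => hK (p k) ⟨hq.trans (hp k).1, (hp k).2⟩) (fun k => hsq (p k) (hp k)) hε
    (fun k => hL (p k) q (hq.trans (hp k).1) hq) (fun k => hno (p k) (hqp k)) hW

lemma not_tendsto_amplitude_of_lt (hJ : IsKernel J) (hf : IsMonostableFamily f γ)
    (H : IsDoubleRoot J lam c γ R) (hq : 0 ≤ q) (hqq' : q < q') (hW : IsNLFront J (f · q) c W)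
    {V : ℝ → ℝ} (hV : IsNLFront J (f · q') c V) {B' : ℝ} (hB : 0 < B) (hB' : 0 < B')
    (hVB : Tendsto (amplitude lam V) atTop (nhds B')) :
    ¬Tendsto (amplitude lam W) atTop (nhds B) := fun hWB => by
  have hs := hf.isSmoothMonostable q hq
  have hs' := hf.isSmoothMonostable q' (hq.trans hqq'.le)
  obtain ⟨K, hK⟩ := hf.exists_isMonostable q'
  obtain ⟨η, β, hst⟩ := hs.exists_isStableAtOne
  obtain ⟨C, -, hC⟩ := hs'.exists_abs_sub_le
  obtain ⟨k, hk, hsq⟩ :=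
    hs.exists_mul_sq_le_sub hs' (hf.iteratedDerivWithin_two_lt q q' hq hqq')
  exact hW.not_tendsto_amplitude_of_lt hJ.isDensity (hK q ⟨hq, hqq'.le⟩)
    (hK q' ⟨hq.trans hqq'.le, le_rfl⟩) hst H hk hC hsq (hf.lt q q' hq hqq') hV hB hB' hWB hVB

lemma not_tendsto_amplitude_of_speed_lt (hf : IsMonostableFamily f γ)
    (H : IsDoubleRoot J lam c γ R) (hq : 0 ≤ q) {s : ℝ} (hcs : c < s)
    (hW : IsNLFront J (f · q) s W) (hB : B ≠ 0) :
    ¬Tendsto (amplitude lam W) atTop (nhds B) := by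
  obtain ⟨C, -, hC⟩ := (hf.isSmoothMonostable q hq).exists_abs_sub_le_sq
  exact H.not_tendsto_amplitude_of_lt hcs hB hW.isProfile hW.1.continuous hW.tendsto_atTop hC
    (hW.hasDerivAt (H.speed_pos.trans hcs).ne')

end IsMonostableFamily

theorem threshold_nonlocal_equation_general {J : ℝ → ℝ} (hJ : IsKernel J) {f : ℝ → ℝ → ℝ} {γ₀ : ℝ}
    (hγ₀ : 0 < γ₀) (hf : IsMonostableFamily f γ₀) {cNL : ℝ → ℝ}
    (hmin : ∀ q, 0 ≤ q → IsMinimalSpeed J (f · q) (cNL q))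
    (hlin : ∀ q, 0 ≤ q → c0star J γ₀ ≤ cNL q)
    (huniq : ∀ q, 0 ≤ q → ∀ W₁ W₂ : ℝ → ℝ, IsNLFront J (f · q) (cNL q) W₁ →
      IsNLFront J (f · q) (cNL q) W₂ → ∃ τ, ∀ ξ, W₂ ξ = W₁ (ξ + τ))
    {lam₀ : ℝ} (hlam₀ : 0 < lam₀)
    (hroot : (∫ x, J x * Real.exp (lam₀ * x)) - 1 + γ₀ = c0star J γ₀ * lam₀)
    {q₁ q₂ : ℝ} (hq₁ : 0 ≤ q₁) (hc₁ : cNL q₁ = c0star J γ₀)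
    (hq₂ : 0 ≤ q₂) (hc₂ : c0star J γ₀ < cNL q₂) :
    ∃ qstar : ℝ, q₁ ≤ qstar ∧ qstar < q₂ ∧
      (∀ q, 0 ≤ q → q ≤ qstar → cNL q = c0star J γ₀) ∧
      (∀ q, qstar < q → c0star J γ₀ < cNL q) ∧
      (∀ q, 0 ≤ q → ∀ W : ℝ → ℝ, IsNLFront J (f · q) (cNL q) W →
        ((∃ B > (0 : ℝ),
            (fun ξ => W ξ - B * Real.exp (-(lam₀ * ξ))) =o[atTop]
              fun ξ => Real.exp (-(lam₀ * ξ))) ↔ q = qstar)) := by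
  obtain ⟨R, H⟩ := hJ.exists_isDoubleRoot hγ₀ hlam₀ hroot
  obtain ⟨qs, hqs⟩ :=
    hf.exists_forall_speed_le_iff hJ H.speed_pos hmin hq₁ hc₁.le hq₂ hc₂
  have hq₁s : q₁ ≤ qs := (hqs q₁ hq₁).1 hc₁.le
  have hqs0 : 0 ≤ qs := hq₁.trans hq₁s
  have heq : ∀ q, 0 ≤ q → q ≤ qs → cNL q = c0star J γ₀ := fun q hq h =>
    ((hqs q hq).2 h).antisymm (hlin q hq)
  have hgt : ∀ q, qs < q → c0star J γ₀ < cNL q := fun q h =>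
    lt_of_not_ge <| mt (hqs q (hqs0.trans h.le)).1 h.not_ge
  obtain ⟨V, hV⟩ := (hmin qs hqs0 _).2 (heq qs hqs0 le_rfl).le
  obtain ⟨W₀, hW₀, B₀, hB₀, hlim⟩ := hf.exists_front_tendsto_amplitude hJ H hqs0 hV
    fun p hp hex => (hgt p hp).not_ge ((hmin p (hqs0.trans (le_of_lt hp)) _).1 hex)
  refine ⟨qs, hq₁s, lt_of_not_ge <| mt (hqs q₂ hq₂).2 hc₂.not_ge, heq, hgt,
    fun q hq W hW => ?_⟩
  simp only [isLittleO_exp_iff_tendsto_amplitude]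
  obtain h | rfl | h := lt_trichotomy q qs
  · rw [heq q hq h.le] at hW
    exact iff_of_false (fun ⟨B, hB, hWB⟩ =>
      hf.not_tendsto_amplitude_of_lt hJ H hq h hW hW₀ hB hB₀ hlim hWB) h.ne
  · rw [← heq q hq le_rfl] at hW₀
    obtain ⟨τ, hτ⟩ := huniq q hq W₀ W hW₀ hW
    obtain rfl : W = fun ξ => W₀ (ξ + τ) := funext hτ
    exact iff_of_true ⟨_, by positivity, tendsto_amplitude_translate hlim τ⟩ rfl
  · exact iff_of_false (fun ⟨B, hB, hWB⟩ =>
      hf.not_tendsto_amplitude_of_speed_lt H hq (hgt q h) hW hB.ne' hWB) h.ne'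

/-- Theorem: under (A1)-(A3) and (A6)-(A7) there is a threshold `q* ∈ [q₁, q₂)` for linear
vs. nonlinear speed selection of the nonlocal equation, and the minimal front decays like
`B e^{-λ₀ξ}` (with `B > 0`) iff `q = q*`. -/
theorem threshold_nonlocal_equation
    (J : ℝ → ℝ) (hJ : IsKernel J)
    (f : ℝ → ℝ → ℝ) (γ₀ : ℝ) (hγ₀ : 0 < γ₀)
    (cNL : ℝ → ℝ) (q₁ q₂ : ℝ)
    -- (A1) monostable condition, with ∂_w f(0;q) = γ₀ for all q
    (hA1 : ∀ q, 0 ≤ q →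
      ContDiffOn ℝ 2 (fun w => f w q) (Icc 0 1) ∧
      f 0 q = 0 ∧ f 1 q = 0 ∧
      derivWithin (fun w => f w q) (Icc 0 1) 0 = γ₀ ∧
      derivWithin (fun w => f w q) (Icc 0 1) 1 < 0 ∧
      (∀ w ∈ Ioo (0:ℝ) 1, 0 < f w q))
    -- (A2) Lipschitz continuity in the parameter, for f, f', f''
    (hA2 : ∃ L₀ > (0:ℝ), ∀ n : ℕ, n ≤ 2 → ∀ w ∈ Icc (0:ℝ) 1, ∀ qa qb : ℝ, 0 ≤ qa → 0 ≤ qb →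
      |iteratedDerivWithin n (fun w => f w qa) (Icc 0 1) w -
        iteratedDerivWithin n (fun w => f w qb) (Icc 0 1) w| ≤ L₀ * |qa - qb|)
    -- (A3) monotonicity condition
    (hA3 : ∀ q qh : ℝ, 0 ≤ q → q < qh →
      (∀ w ∈ Ioo (0:ℝ) 1, f w q < f w qh) ∧
      iteratedDerivWithin 2 (fun w => f w q) (Icc 0 1) 0 <
        iteratedDerivWithin 2 (fun w => f w qh) (Icc 0 1) 0)
    -- minimal-speed characterization: fronts exist exactly for speeds c ≥ c_NL*(q) ≥ c₀*
    (hmin : ∀ q, 0 ≤ q → c0star J γ₀ ≤ cNL q ∧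
      ∀ c, (∃ W : ℝ → ℝ, IsNLFront J (fun w => f w q) c W) ↔ cNL q ≤ c)
    -- the minimal front is unique up to translation
    (huniq : ∀ q, 0 ≤ q → ∀ W₁ W₂ : ℝ → ℝ, IsNLFront J (fun w => f w q) (cNL q) W₁ →
      IsNLFront J (fun w => f w q) (cNL q) W₂ → ∃ τ, ∀ ξ, W₂ ξ = W₁ (ξ + τ))
    -- λ₀ is the unique positive number with ∫ J e^{λ₀ x} dx - 1 + γ₀ = c₀* λ₀
    (lam₀ : ℝ) (hlam₀ : 0 < lam₀)
    (hroot : (∫ x, J x * Real.exp (lam₀ * x)) - 1 + γ₀ = c0star J γ₀ * lam₀)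
    (huniqroot : ∀ l, 0 < l →
      (∫ x, J x * Real.exp (l * x)) - 1 + γ₀ = c0star J γ₀ * l → l = lam₀)
    -- (A6) KPP condition at q₁, hence linear selection there
    (hq₁ : 0 < q₁) (hA6 : ∀ w ∈ Icc (0:ℝ) 1, f w q₁ ≤ γ₀ * w)
    (hc₁ : cNL q₁ = c0star J γ₀)
    -- (A7) nonlinear selection at some q₂ > q₁
    (hq₂ : q₁ < q₂) (hc₂ : c0star J γ₀ < cNL q₂) :
    ∃ qstar : ℝ, q₁ ≤ qstar ∧ qstar < q₂ ∧
      (∀ q, 0 ≤ q → q ≤ qstar → cNL q = c0star J γ₀) ∧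
      (∀ q, qstar < q → c0star J γ₀ < cNL q) ∧
      (∀ q, 0 ≤ q → ∀ W : ℝ → ℝ, IsNLFront J (fun w => f w q) (cNL q) W →
        ((∃ B > (0:ℝ),
            (fun ξ => W ξ - B * Real.exp (-(lam₀ * ξ))) =o[atTop]
              fun ξ => Real.exp (-(lam₀ * ξ))) ↔ q = qstar)) := by
  have hf : IsMonostableFamily f γ₀ :=
    { isSmoothMonostable := fun q hq =>
        let ⟨hC2, h0, h1, h0', h1', hpos⟩ := hA1 q hq
        ⟨hC2, h0, h1, h0', h1', hpos⟩
      lipschitz := hA2.imp fun _ hL n hn => hL.2 n (hn.trans one_le_two)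
      lt := fun q q' hq h => (hA3 q q' hq h).1
      iteratedDerivWithin_two_lt := fun q q' hq h => (hA3 q q' hq h).2 }
  exact threshold_nonlocal_equation_general hJ hγ₀ hf (fun q hq => (hmin q hq).2)
    (fun q hq => (hmin q hq).1) huniq hlam₀ hroot hq₁.le hc₁ (hq₁.trans hq₂).le hc₂
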